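/- Suppose there exist (σ*,ω*) and (σ_*,ω_*) in ℝ×S¹ with |∂_σF₁(σ*,ω*)| > |∂_σF₂(σ*,ω*)| and |∂_σF₁(σ_*,ω_*)| < |∂_σF₂(σ_*,ω_*)|. Then there exists ε₀ > 0 such that for every ε ∈ (0,ε₀) and every global C^∞ solution u of the Cauchy problem, the limits lim_{t→+∞}‖u₁(t)‖_E and lim_{t→+∞}‖u₂(t)‖_E exist and are both strictly positive. -/

import Mathlib

/-!
Put `u = ε v`; then `v = (v₁, v₂)` solves `□v₁ = -λ (∂ₜv₂)² ∂ₜv₁`, `□v₂ = -λ (∂ₜv₁)² ∂ₜv₂` with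
`λ = ε²` and fixed data (`IsSolution.half`). The energy of each component decreases in time, since
the nonlinearity is dissipative, so its limit exists; what has to be excluded is that it vanishes
(`Half.limit`).

In polar coordinates `r = t + σ` the functions `φ_j = √r v_j` satisfy, with `Y = ∂ₜ - 2∂_σ` (the
incoming derivative `∂ₜ - ∂ᵣ`),
`∂ₜ Y φ₁ = -(λ / r) (Pφ₂)² Pφ₁ + r⁻² (∂_θ² φ₁ + φ₁ / 4)`, `P = ∂ₜ - ∂_σ`,
and the same with indices exchanged. On a strip `a ≤ σ ≤ R` containing the outer part of the
support, weighted energies for this system, including three angular derivatives, close for small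
`λ` with constants independent of the solution (`Strip.SB`): `Yφ_j` stays bounded, `∂ₜφ_j = O(1/t)`
and, since `P = (∂ₜ + Y) / 2`, `∂ₜ Y φ_j = -(λ / (8 r)) (Yφ_k)² Yφ_j + O(t^{-3/2})`. The cubic terms are
the same for `(Yφ₁)²` and `(Yφ₂)²`, so `∂ₜ((Yφ₁)² - (Yφ₂)²) = O(t^{-3/2})`: this difference is
almost conserved after a late time. The energies on bounded time intervals needed to start the strip
estimates come from commuting with translations and rotations (`crude`, `exists_strip`).

It remains to find the sign of the difference at a late time `T`. For small `λ` the profile at time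
`T` is close to that of the free wave, which is `-2 ∂_σ F_j`. To see this without a representation
formula, `∂ₜ - ∂_ω` of the solution is integrated over the line `x · ω = t + σ`; this integral is
conserved for free waves (`Half.line_le`), while for large `t` it is an integral of `Yφ_j` over a
parabola in the coordinates `(σ, θ)`, concentrating at `θ = arg ω` (`profile_line`). A second
integration over parabolas turns the inverse-square-root kernel in `R₂` into a polar integral and
identifies `∫_σ^R Yφ_j` with `2 F_j(σ)` (`profile_F0`), and a difference quotient gives the pointwise
statement (`profile_dF0`). Where `|∂_σ F₁| > |∂_σ F₂|`, therefore, `(Yφ₁)²` is bounded below on a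
neighbourhood for all late times, hence so is `(Pφ₁)²`, and this bounds the energy of `u₁` below
(`half_energy`). The other point gives `u₂` by symmetry.
-/

open Real MeasureTheory Filter Topology

noncomputable section

/-- Partial derivative in `t`. -/
def pt (u : ℝ → ℝ → ℝ → ℝ) : ℝ → ℝ → ℝ → ℝ :=
  fun t x1 x2 => deriv (fun s => u s x1 x2) t

/-- Partial derivative in `x₁`. -/
def p1 (u : ℝ → ℝ → ℝ → ℝ) : ℝ → ℝ → ℝ → ℝ :=
  fun t x1 x2 => deriv (fun y => u t y x2) x1

/-- Partial derivative in `x₂`. -/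
def p2 (u : ℝ → ℝ → ℝ → ℝ) : ℝ → ℝ → ℝ → ℝ :=
  fun t x1 x2 => deriv (fun y => u t x1 y) x2

/-- The d'Alembertian `□ = ∂ₜ² − ∂₁² − ∂₂²`. -/
def dAlembert (u : ℝ → ℝ → ℝ → ℝ) : ℝ → ℝ → ℝ → ℝ :=
  fun t x1 x2 => pt (pt u) t x1 x2 - p1 (p1 u) t x1 x2 - p2 (p2 u) t x1 x2

/-- `u : ℝ×ℝ² → ℝ` (curried) is C^∞. -/
def Smooth3 (u : ℝ → ℝ → ℝ → ℝ) : Prop :=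
  ContDiff ℝ (⊤ : ℕ∞) (fun p : ℝ × ℝ × ℝ => u p.1 p.2.1 p.2.2)

/-- Compactly supported C^∞ function on ℝ². -/
def SmoothCompact2 (f : ℝ → ℝ → ℝ) : Prop :=
  ContDiff ℝ (⊤ : ℕ∞) (fun p : ℝ × ℝ => f p.1 p.2) ∧
    HasCompactSupport (fun p : ℝ × ℝ => f p.1 p.2)

/-- Global C^∞ solution of the Cauchy problem
`□u₁ = −(∂ₜu₂)²∂ₜu₁`, `□u₂ = −(∂ₜu₁)²∂ₜu₂` with data `(εf_j, εg_j)`. -/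
structure IsSolution (ε : ℝ) (f1 f2 g1 g2 : ℝ → ℝ → ℝ)
    (u1 u2 : ℝ → ℝ → ℝ → ℝ) : Prop where
  smooth1 : Smooth3 u1
  smooth2 : Smooth3 u2
  pde1 : ∀ t x1 x2 : ℝ, 0 < t →
    dAlembert u1 t x1 x2 = -(pt u2 t x1 x2) ^ 2 * pt u1 t x1 x2
  pde2 : ∀ t x1 x2 : ℝ, 0 < t →
    dAlembert u2 t x1 x2 = -(pt u1 t x1 x2) ^ 2 * pt u2 t x1 x2
  init1 : ∀ x1 x2 : ℝ, u1 0 x1 x2 = ε * f1 x1 x2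
  init2 : ∀ x1 x2 : ℝ, u2 0 x1 x2 = ε * f2 x1 x2
  initd1 : ∀ x1 x2 : ℝ, pt u1 0 x1 x2 = ε * g1 x1 x2
  initd2 : ∀ x1 x2 : ℝ, pt u2 0 x1 x2 = ε * g2 x1 x2

/-- `‖u(t)‖_E²  = ½∫ ((∂ₜu)² + (∂₁u)² + (∂₂u)²) dx`. -/
def energySq (u : ℝ → ℝ → ℝ → ℝ) (t : ℝ) : ℝ :=
  (1 / 2) * ∫ x : ℝ × ℝ,
    ((pt u t x.1 x.2) ^ 2 + (p1 u t x.1 x.2) ^ 2 + (p2 u t x.1 x.2) ^ 2)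

/-- The energy norm `‖u(t)‖_E`. -/
def energyNorm (u : ℝ → ℝ → ℝ → ℝ) (t : ℝ) : ℝ :=
  Real.sqrt (energySq u t)

/-- `|x|` in coordinates. -/
def radius (x1 x2 : ℝ) : ℝ := Real.sqrt (x1 ^ 2 + x2 ^ 2)

/-- The Japanese bracket `⟨z⟩ = (1+z²)^{1/2}`. -/
def jb (z : ℝ) : ℝ := Real.sqrt (1 + z ^ 2)

/-- `U(t,x) = D(|x|^{1/2}u(t,x))` where `D = ½(∂_r − ∂ₜ)`. -/
def Uop (u : ℝ → ℝ → ℝ → ℝ) : ℝ → ℝ → ℝ → ℝ :=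
  fun t x1 x2 =>
    (1 / 2) * ((x1 / radius x1 x2) *
        p1 (fun s y1 y2 => radius y1 y2 ^ ((1 : ℝ) / 2) * u s y1 y2) t x1 x2
      + (x2 / radius x1 x2) *
        p2 (fun s y1 y2 => radius y1 y2 ^ ((1 : ℝ) / 2) * u s y1 y2) t x1 x2
      - pt (fun s y1 y2 => radius y1 y2 ^ ((1 : ℝ) / 2) * u s y1 y2) t x1 x2)

/-- `V(t;σ,ω) = U(t,(t+σ)ω)`. -/
def Vop (u : ℝ → ℝ → ℝ → ℝ) (t σ ω1 ω2 : ℝ) : ℝ :=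
  Uop u t ((t + σ) * ω1) ((t + σ) * ω2)

/-- The rotation vector field `Ω = x₁∂₂ − x₂∂₁`. -/
def rot (u : ℝ → ℝ → ℝ → ℝ) : ℝ → ℝ → ℝ → ℝ :=
  fun t x1 x2 => x1 * p2 u t x1 x2 - x2 * p1 u t x1 x2

/-- `H` for component `a` (the other component being `b`):
`H_a = ½(|x|^{1/2}(∂ₜu_b)²(∂ₜu_a) + t⁻¹U_b²U_a) − (8|x|^{3/2})⁻¹(4Ω²+1)u_a`. -/
def Hfun (ua ub : ℝ → ℝ → ℝ → ℝ) (t x1 x2 : ℝ) : ℝ :=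
  (1 / 2) * (radius x1 x2 ^ ((1 : ℝ) / 2) * (pt ub t x1 x2) ^ 2 * pt ua t x1 x2
      + (1 / t) * (Uop ub t x1 x2) ^ 2 * Uop ua t x1 x2)
    - (1 / (8 * radius x1 x2 ^ ((3 : ℝ) / 2))) *
        (4 * rot (rot ua) t x1 x2 + ua t x1 x2)

/-- `K_a(t;σ,ω) = H_a(t,(t+σ)ω)`. -/
def Kfun (ua ub : ℝ → ℝ → ℝ → ℝ) (t σ ω1 ω2 : ℝ) : ℝ :=
  Hfun ua ub t ((t + σ) * ω1) ((t + σ) * ω2)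

/-- `ρ = V₁K₁ − V₂K₂`. -/
def rhoFun (u1 u2 : ℝ → ℝ → ℝ → ℝ) (t σ ω1 ω2 : ℝ) : ℝ :=
  Vop u1 t σ ω1 ω2 * Kfun u1 u2 t σ ω1 ω2 -
    Vop u2 t σ ω1 ω2 * Kfun u2 u1 t σ ω1 ω2

/-- The Radon transform: line integral of `φ` over `{y : y·ω = s}`. -/
def Rline (φ : ℝ → ℝ → ℝ) (s ω1 ω2 : ℝ) : ℝ :=
  ∫ τ : ℝ, φ (s * ω1 - τ * ω2) (s * ω2 + τ * ω1)

/-- `R₂[φ](σ,ω) = (2√2π)⁻¹ ∫_σ^∞ R[φ](s,ω)(s−σ)^{−1/2} ds`. -/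
def R2 (φ : ℝ → ℝ → ℝ) (σ ω1 ω2 : ℝ) : ℝ :=
  (1 / (2 * Real.sqrt 2 * Real.pi)) *
    ∫ s in Set.Ioi σ, Rline φ s ω1 ω2 / Real.sqrt (s - σ)

/-- The Friedlander radiation field `F₀[φ,ψ] = −∂_σR₂[φ] + R₂[ψ]`. -/
def F0 (φ ψ : ℝ → ℝ → ℝ) (σ ω1 ω2 : ℝ) : ℝ :=
  -deriv (fun σ' => R2 φ σ' ω1 ω2) σ + R2 ψ σ ω1 ω2

/-- `∂_σF₀[φ,ψ]`. -/
def dF0 (φ ψ : ℝ → ℝ → ℝ) (σ ω1 ω2 : ℝ) : ℝ :=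
  deriv (fun σ' => F0 φ ψ σ' ω1 ω2) σ

/-- The vector fields `Γ = (S, L₁, L₂, Ω, ∂ₜ, ∂₁, ∂₂)`. -/
def Gam (i : Fin 7) (u : ℝ → ℝ → ℝ → ℝ) : ℝ → ℝ → ℝ → ℝ :=
  match i with
  | 0 => fun t x1 x2 => t * pt u t x1 x2 + x1 * p1 u t x1 x2 + x2 * p2 u t x1 x2
  | 1 => fun t x1 x2 => t * p1 u t x1 x2 + x1 * pt u t x1 x2
  | 2 => fun t x1 x2 => t * p2 u t x1 x2 + x2 * pt u t x1 x2
  | 3 => rot u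
  | 4 => pt u
  | 5 => p1 u
  | 6 => p2 u

/-- `Γ^α = Γ₀^{α₀}⋯Γ₆^{α₆}`. -/
def GamMulti (α : Fin 7 → ℕ) (u : ℝ → ℝ → ℝ → ℝ) : ℝ → ℝ → ℝ → ℝ :=
  (Gam 0)^[α 0] ((Gam 1)^[α 1] ((Gam 2)^[α 2] ((Gam 3)^[α 3]
    ((Gam 4)^[α 4] ((Gam 5)^[α 5] ((Gam 6)^[α 6] u))))))

/-- Pointwise norm `|φ(t,x)|_s = Σ_{|α|≤s}|Γ^αφ(t,x)|`, for a (finite) family of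
components, `|Γ^αφ|` being the Euclidean norm of the vector of components. -/
def ptwiseNorm (s : ℕ) (us : List (ℝ → ℝ → ℝ → ℝ)) (t x1 x2 : ℝ) : ℝ :=
  ∑ α : Fin 7 → Fin (s + 1),
    if (∑ i, (α i : ℕ)) ≤ s then
      Real.sqrt ((us.map fun u => (GamMulti (fun i => (α i : ℕ)) u t x1 x2) ^ 2).sum)
    else 0

/-- `‖φ(t)‖_s = Σ_{|α|≤s}‖Γ^αφ(t,·)‖_{L²(ℝ²)}`. -/
def sobNorm (s : ℕ) (us : List (ℝ → ℝ → ℝ → ℝ)) (t : ℝ) : ℝ :=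
  ∑ α : Fin 7 → Fin (s + 1),
    if (∑ i, (α i : ℕ)) ≤ s then
      Real.sqrt (∫ x : ℝ × ℝ,
        (us.map fun u => (GamMulti (fun i => (α i : ℕ)) u t x.1 x.2) ^ 2).sum)
    else 0

/-- The components of `∂u = (∂ₜu₁,∂₁u₁,∂₂u₁,∂ₜu₂,∂₁u₂,∂₂u₂)`. -/
def dList (u1 u2 : ℝ → ℝ → ℝ → ℝ) : List (ℝ → ℝ → ℝ → ℝ) :=
  [pt u1, p1 u1, p2 u1, pt u2, p1 u2, p2 u2]

/-- Smooth solution of the free wave equation with data `(φ0,φ1)`. -/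
def IsFreeSolution (φ0 φ1 : ℝ → ℝ → ℝ) (φ : ℝ → ℝ → ℝ → ℝ) : Prop :=
  Smooth3 φ ∧ (∀ t x1 x2 : ℝ, 0 < t → dAlembert φ t x1 x2 = 0) ∧
    (∀ x1 x2 : ℝ, φ 0 x1 x2 = φ0 x1 x2) ∧
    (∀ x1 x2 : ℝ, pt φ 0 x1 x2 = φ1 x1 x2)

/-- Mixed space-time partial `∂^α = ∂ₜ^{α₀}∂₁^{α₁}∂₂^{α₂}`. -/
def dmix (α : Fin 3 → ℕ) (u : ℝ → ℝ → ℝ → ℝ) : ℝ → ℝ → ℝ → ℝ :=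
  pt^[α 0] (p1^[α 1] (p2^[α 2] u))

/-! ### Smooth functions of three variables as an algebra with derivations -/

/-- The algebra of `C^∞` functions on `ℝ × ℝ × ℝ`. -/
def SmoothAlg : Subalgebra ℝ (ℝ × ℝ × ℝ → ℝ) where
  carrier := {f | ContDiff ℝ (⊤ : ℕ∞) f}
  mul_mem' := fun {f g} hf hg => by
    have hf' : ContDiff ℝ (⊤ : ℕ∞) f := hf
    have hg' : ContDiff ℝ (⊤ : ℕ∞) g := hg
    exact (hf'.mul hg' : ContDiff ℝ (⊤ : ℕ∞) fun x => f x * g x)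
  add_mem' := fun {f g} hf hg => by
    have hf' : ContDiff ℝ (⊤ : ℕ∞) f := hf
    have hg' : ContDiff ℝ (⊤ : ℕ∞) g := hg
    exact (hf'.add hg' : ContDiff ℝ (⊤ : ℕ∞) fun x => f x + g x)
  algebraMap_mem' := fun c => (contDiff_const : ContDiff ℝ (⊤ : ℕ∞) fun _ : ℝ × ℝ × ℝ => c)

/-- Evaluation of a smooth function at `(t, x, y)`. -/
def ev (f : SmoothAlg) (t x y : ℝ) : ℝ := f.1 (t, x, y)

lemma smooth_contDiff (f : SmoothAlg) : ContDiff ℝ (⊤ : ℕ∞) f.1 := f.2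

lemma ev_ext {f g : SmoothAlg} (h : ∀ t x y, ev f t x y = ev g t x y) : f = g :=
  Subtype.ext (funext fun p => h p.1 p.2.1 p.2.2)

@[simp] lemma ev_add (f g : SmoothAlg) (t x y : ℝ) :
    ev (f + g) t x y = ev f t x y + ev g t x y := rfl
@[simp] lemma ev_sub (f g : SmoothAlg) (t x y : ℝ) :
    ev (f - g) t x y = ev f t x y - ev g t x y := rfl
@[simp] lemma ev_mul (f g : SmoothAlg) (t x y : ℝ) :
    ev (f * g) t x y = ev f t x y * ev g t x y := rfl
@[simp] lemma ev_neg (f : SmoothAlg) (t x y : ℝ) : ev (-f) t x y = -ev f t x y := rfl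
@[simp] lemma ev_smul (c : ℝ) (f : SmoothAlg) (t x y : ℝ) :
    ev (c • f) t x y = c * ev f t x y := rfl
@[simp] lemma ev_pow (f : SmoothAlg) (n : ℕ) (t x y : ℝ) :
    ev (f ^ n) t x y = ev f t x y ^ n := rfl
@[simp] lemma ev_zero (t x y : ℝ) : ev 0 t x y = 0 := rfl
@[simp] lemma ev_one (t x y : ℝ) : ev 1 t x y = 1 := rfl
@[simp] lemma ev_algebraMap (c t x y : ℝ) : ev (algebraMap ℝ SmoothAlg c) t x y = c := rfl
@[simp] lemma ev_ofNat (n : ℕ) [n.AtLeastTwo] (t x y : ℝ) :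
    ev (ofNat(n) : SmoothAlg) t x y = ofNat(n) := rfl
@[simp] lemma ev_natCast (n : ℕ) (t x y : ℝ) : ev (n : SmoothAlg) t x y = n := rfl

lemma ev_continuous (f : SmoothAlg) :
    Continuous fun p : ℝ × ℝ × ℝ => ev f p.1 p.2.1 p.2.2 := (smooth_contDiff f).continuous

@[fun_prop] lemma ev_continuous_comp {X : Type*} [TopologicalSpace X] (f : SmoothAlg)
    {a b c : X → ℝ} (ha : Continuous a) (hb : Continuous b) (hc : Continuous c) :
    Continuous fun x => ev f (a x) (b x) (c x) :=
  (ev_continuous f).comp (ha.prodMk (hb.prodMk hc))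

lemma contDiff_fderiv_dir (f : SmoothAlg) (e : ℝ × ℝ × ℝ) :
    ContDiff ℝ (⊤ : ℕ∞) fun x => fderiv ℝ f.1 x e :=
  ((smooth_contDiff f).fderiv_right (m := (⊤ : ℕ∞)) (by simp)).clm_apply contDiff_const

lemma smooth_differentiable (f : SmoothAlg) : Differentiable ℝ f.1 :=
  (smooth_contDiff f).differentiable (by simp)

/-- The directional derivative as a derivation of the algebra of smooth functions. -/
def Der (e : ℝ × ℝ × ℝ) : Derivation ℝ SmoothAlg SmoothAlg where
  toFun f := ⟨fun x => fderiv ℝ f.1 x e, contDiff_fderiv_dir f e⟩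
  map_add' f g := by
    ext x
    have := fderiv_add (smooth_differentiable f x) (smooth_differentiable g x)
    show fderiv ℝ (f.1 + g.1) x e = fderiv ℝ f.1 x e + fderiv ℝ g.1 x e
    rw [this]; rfl
  map_smul' c f := by
    ext x
    have := fderiv_const_smul (smooth_differentiable f x) c
    show fderiv ℝ (c • f.1) x e = c • fderiv ℝ f.1 x e
    rw [this]; rfl
  map_one_eq_zero' := by
    ext x
    show fderiv ℝ (fun _ => (1 : ℝ)) x e = 0
    simp
  leibniz' f g := by
    ext x
    have := fderiv_mul (smooth_differentiable f x) (smooth_differentiable g x)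
    show fderiv ℝ (f.1 * g.1) x e = f.1 x * fderiv ℝ g.1 x e + g.1 x * fderiv ℝ f.1 x e
    rw [this]; rfl

lemma Der_comm (e e' : ℝ × ℝ × ℝ) (f : SmoothAlg) : Der e (Der e' f) = Der e' (Der e f) := by
  ext x
  have hd : DifferentiableAt ℝ (fderiv ℝ f.1) x :=
    (((smooth_contDiff f).fderiv_right (m := (⊤ : ℕ∞)) (by simp)).differentiable (by simp)) x
  have h : ∀ a b : ℝ × ℝ × ℝ, (Der a (Der b f)).1 x = fderiv ℝ (fderiv ℝ f.1) x a b := by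
    intro a b
    show fderiv ℝ (fun x => fderiv ℝ f.1 x b) x a = _
    rw [fderiv_clm_apply hd (differentiableAt_const b)]
    simp
  rw [h, h]
  exact ((smooth_contDiff f).contDiffAt.isSymmSndFDerivAt
    (by simpa using (WithTop.coe_le_coe.2 le_top : ((2 : ℕ∞) : WithTop ℕ∞) ≤ ((⊤ : ℕ∞) : WithTop ℕ∞)))) e e'

/-- The three coordinate derivations. -/
abbrev d0 : Derivation ℝ SmoothAlg SmoothAlg := Der (1, 0, 0)
/-- See `d0`. -/
abbrev d1 : Derivation ℝ SmoothAlg SmoothAlg := Der (0, 1, 0)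
/-- See `d0`. -/
abbrev d2 : Derivation ℝ SmoothAlg SmoothAlg := Der (0, 0, 1)

/-- Chain rule along a curve. -/
lemma ev_hasDerivAt_curve (f : SmoothAlg) {a b c : ℝ → ℝ} {a' b' c' s : ℝ}
    (ha : HasDerivAt a a' s) (hb : HasDerivAt b b' s) (hc : HasDerivAt c c' s) :
    HasDerivAt (fun s => ev f (a s) (b s) (c s))
      (a' * ev (d0 f) (a s) (b s) (c s) + b' * ev (d1 f) (a s) (b s) (c s)
        + c' * ev (d2 f) (a s) (b s) (c s)) s := by
  have h := (smooth_differentiable f (a s, b s, c s)).hasFDerivAt.comp_hasDerivAt s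
    (ha.prodMk (hb.prodMk hc))
  refine h.congr_deriv ?_
  have : ((a', b', c') : ℝ × ℝ × ℝ) = a' • (1, 0, 0) + b' • (0, 1, 0) + c' • (0, 0, 1) := by
    simp
  rw [this, map_add, map_add, map_smul, map_smul, map_smul]
  rfl

lemma ev_hasDerivAt_0 (f : SmoothAlg) (t x y : ℝ) :
    HasDerivAt (fun s => ev f s x y) (ev (d0 f) t x y) t := by
  simpa using ev_hasDerivAt_curve f (hasDerivAt_id t) (hasDerivAt_const t x) (hasDerivAt_const t y)

lemma ev_hasDerivAt_1 (f : SmoothAlg) (t x y : ℝ) :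
    HasDerivAt (fun s => ev f t s y) (ev (d1 f) t x y) x := by
  simpa using ev_hasDerivAt_curve f (hasDerivAt_const x t) (hasDerivAt_id x) (hasDerivAt_const x y)

lemma ev_hasDerivAt_2 (f : SmoothAlg) (t x y : ℝ) :
    HasDerivAt (fun s => ev f t x s) (ev (d2 f) t x y) y := by
  simpa using ev_hasDerivAt_curve f (hasDerivAt_const y t) (hasDerivAt_const y x) (hasDerivAt_id y)

/-- Smooth functions agreeing on an open set have the same derivatives there. -/
lemma Der_eq_of_eqOn {U : Set (ℝ × ℝ × ℝ)} (hU : IsOpen U) {f g : SmoothAlg}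
    (h : ∀ p ∈ U, f.1 p = g.1 p) (e : ℝ × ℝ × ℝ) : ∀ p ∈ U, (Der e f).1 p = (Der e g).1 p := by
  intro p hp
  have : f.1 =ᶠ[𝓝 p] g.1 := by
    filter_upwards [hU.mem_nhds hp] with q hq using h q hq
  show fderiv ℝ f.1 p e = fderiv ℝ g.1 p e
  rw [this.fderiv_eq]

/-- Coordinate functions. -/
def cT : SmoothAlg := ⟨fun p => p.1, (contDiff_fst : ContDiff ℝ (⊤ : ℕ∞) _)⟩
/-- See `cT`. -/
def cX : SmoothAlg := ⟨fun p => p.2.1, (contDiff_fst.comp contDiff_snd : ContDiff ℝ (⊤ : ℕ∞) _)⟩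
/-- See `cT`. -/
def cY : SmoothAlg := ⟨fun p => p.2.2, (contDiff_snd.comp contDiff_snd : ContDiff ℝ (⊤ : ℕ∞) _)⟩

@[simp] lemma ev_cT (t x y : ℝ) : ev cT t x y = t := rfl
@[simp] lemma ev_cX (t x y : ℝ) : ev cX t x y = x := rfl
@[simp] lemma ev_cY (t x y : ℝ) : ev cY t x y = y := rfl

lemma ev_d0_eq {f : SmoothAlg} {t x y a : ℝ} (h : HasDerivAt (fun s => ev f s x y) a t) :
    ev (d0 f) t x y = a := (ev_hasDerivAt_0 f t x y).unique h
lemma ev_d1_eq {f : SmoothAlg} {t x y a : ℝ} (h : HasDerivAt (fun s => ev f t s y) a x) :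
    ev (d1 f) t x y = a := (ev_hasDerivAt_1 f t x y).unique h
lemma ev_d2_eq {f : SmoothAlg} {t x y a : ℝ} (h : HasDerivAt (fun s => ev f t x s) a y) :
    ev (d2 f) t x y = a := (ev_hasDerivAt_2 f t x y).unique h

@[simp] lemma d0_cT : d0 cT = 1 := ev_ext fun t _ _ => ev_d0_eq (hasDerivAt_id t)
@[simp] lemma d1_cT : d1 cT = 0 := ev_ext fun t x _ => ev_d1_eq (hasDerivAt_const x t)
@[simp] lemma d2_cT : d2 cT = 0 := ev_ext fun t _ y => ev_d2_eq (hasDerivAt_const y t)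
@[simp] lemma d0_cX : d0 cX = 0 := ev_ext fun t x _ => ev_d0_eq (hasDerivAt_const t x)
@[simp] lemma d1_cX : d1 cX = 1 := ev_ext fun _ x _ => ev_d1_eq (hasDerivAt_id x)
@[simp] lemma d2_cX : d2 cX = 0 := ev_ext fun _ x y => ev_d2_eq (hasDerivAt_const y x)
@[simp] lemma d0_cY : d0 cY = 0 := ev_ext fun t _ y => ev_d0_eq (hasDerivAt_const t y)
@[simp] lemma d1_cY : d1 cY = 0 := ev_ext fun _ x y => ev_d1_eq (hasDerivAt_const x y)
@[simp] lemma d2_cY : d2 cY = 1 := ev_ext fun _ _ y => ev_d2_eq (hasDerivAt_id y)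

/-- Equality for positive times extends to time zero by continuity. -/
lemma ev_eq_of_pos {f g : SmoothAlg} {x y : ℝ}
    (h : ∀ t, 0 < t → ev f t x y = ev g t x y) : ∀ t, 0 ≤ t → ev f t x y = ev g t x y := by
  intro t ht
  rcases ht.lt_or_eq with ht | rfl
  · exact h t ht
  · have h1 : Tendsto (fun s => ev f s x y) (𝓝[>] 0) (𝓝 (ev f 0 x y)) :=
      (Continuous.tendsto (by fun_prop) 0).mono_left nhdsWithin_le_nhds
    have h2 : Tendsto (fun s => ev g s x y) (𝓝[>] 0) (𝓝 (ev g 0 x y)) :=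
      (Continuous.tendsto (by fun_prop) 0).mono_left nhdsWithin_le_nhds
    refine tendsto_nhds_unique h1 (h2.congr' ?_)
    filter_upwards [self_mem_nhdsWithin] with s hs using (h s hs).symm

/-! ### Integrals over slices and boxes -/

/-- Differentiation under an interval integral, all data being continuous. -/
lemma hasDerivAt_intervalIntegral {F F' : ℝ → ℝ → ℝ} (c d t : ℝ) (hF : ∀ s, Continuous (F s))
    (hF' : Continuous fun p : ℝ × ℝ => F' p.1 p.2)
    (h : ∀ s y, HasDerivAt (fun s => F s y) (F' s y) s) :
    HasDerivAt (fun s => ∫ y in c..d, F s y) (∫ y in c..d, F' t y) t := by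
  obtain ⟨M, hM⟩ := ((isCompact_Icc (a := t - 1) (b := t + 1)).prod
    (isCompact_uIcc (a := c) (b := d))).exists_bound_of_continuousOn hF'.continuousOn
  refine (intervalIntegral.hasDerivAt_integral_of_dominated_loc_of_deriv_le
    (F := F) (F' := F') (bound := fun _ => M) (s := Set.Icc (t - 1) (t + 1))
    (Icc_mem_nhds (by linarith) (by linarith)) ?_ ?_ ?_ ?_ ?_ ?_).2
  · exact Eventually.of_forall fun s => (hF s).aestronglyMeasurable
  · exact (hF t).intervalIntegrable _ _
  · exact (hF'.comp (Continuous.prodMk_right t)).aestronglyMeasurable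
  · exact Eventually.of_forall fun y hy s hs => hM (s, y) ⟨hs, Set.uIoc_subset_uIcc hy⟩
  · exact intervalIntegrable_const
  · exact Eventually.of_forall fun y _ s _ => h s y

/-- Integral over the last variable. -/
def SI (c d : ℝ) (f : SmoothAlg) (t x : ℝ) : ℝ := ∫ y in c..d, ev f t x y

/-- Integral over the box `[a, b] × [c, d]` at a fixed value of the first variable. -/
def BI (a b c d : ℝ) (f : SmoothAlg) (t : ℝ) : ℝ := ∫ x in a..b, SI c d f t x

lemma SI_continuous (c d : ℝ) (f : SmoothAlg) : Continuous fun p : ℝ × ℝ => SI c d f p.1 p.2 := by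
  unfold SI
  exact intervalIntegral.continuous_parametric_intervalIntegral_of_continuous'
    (f := fun (p : ℝ × ℝ) y => ev f p.1 p.2 y)
    (by unfold Function.uncurry; fun_prop) c d

@[fun_prop] lemma SI_continuous_comp {X : Type*} [TopologicalSpace X] (c d : ℝ) (f : SmoothAlg)
    {a b : X → ℝ} (ha : Continuous a) (hb : Continuous b) :
    Continuous fun x => SI c d f (a x) (b x) :=
  (SI_continuous c d f).comp (ha.prodMk hb)

lemma BI_continuous (a b c d : ℝ) (f : SmoothAlg) : Continuous (BI a b c d f) := by
  exact intervalIntegral.continuous_parametric_intervalIntegral_of_continuous'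
    (f := fun t x => SI c d f t x)
    (by unfold Function.uncurry; fun_prop) a b

lemma SI_hasDerivAt_0 (c d : ℝ) (f : SmoothAlg) (t x : ℝ) :
    HasDerivAt (fun s => SI c d f s x) (SI c d (d0 f) t x) t :=
  hasDerivAt_intervalIntegral (F := fun s y => ev f s x y) (F' := fun s y => ev (d0 f) s x y)
    c d t (fun s => by fun_prop) (by fun_prop) (fun s y => ev_hasDerivAt_0 f s x y)

lemma SI_hasDerivAt_1 (c d : ℝ) (f : SmoothAlg) (t x : ℝ) :
    HasDerivAt (fun s => SI c d f t s) (SI c d (d1 f) t x) x :=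
  hasDerivAt_intervalIntegral (F := fun s y => ev f t s y) (F' := fun s y => ev (d1 f) t s y)
    c d x (fun s => by fun_prop) (by fun_prop) (fun s y => ev_hasDerivAt_1 f t s y)

lemma BI_hasDerivAt (a b c d : ℝ) (f : SmoothAlg) (t : ℝ) :
    HasDerivAt (BI a b c d f) (BI a b c d (d0 f) t) t :=
  hasDerivAt_intervalIntegral (F := SI c d f) (F' := SI c d (d0 f))
    a b t (fun s => by fun_prop) (by fun_prop) (fun s x => SI_hasDerivAt_0 c d f s x)

lemma SI_add (c d : ℝ) (f g : SmoothAlg) (t x : ℝ) :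
    SI c d (f + g) t x = SI c d f t x + SI c d g t x := by
  unfold SI
  simp only [ev_add]
  exact intervalIntegral.integral_add (Continuous.intervalIntegrable (by fun_prop) _ _)
    (Continuous.intervalIntegrable (by fun_prop) _ _)

lemma SI_smul (c d : ℝ) (r : ℝ) (f : SmoothAlg) (t x : ℝ) :
    SI c d (r • f) t x = r * SI c d f t x := by
  unfold SI
  simp only [ev_smul]
  exact intervalIntegral.integral_const_mul _ _

@[simp] lemma BI_add (a b c d : ℝ) (f g : SmoothAlg) (t : ℝ) :
    BI a b c d (f + g) t = BI a b c d f t + BI a b c d g t := by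
  unfold BI
  simp only [SI_add]
  exact intervalIntegral.integral_add (Continuous.intervalIntegrable (by fun_prop) _ _)
    (Continuous.intervalIntegrable (by fun_prop) _ _)

@[simp] lemma BI_smul (a b c d : ℝ) (r : ℝ) (f : SmoothAlg) (t : ℝ) :
    BI a b c d (r • f) t = r * BI a b c d f t := by
  unfold BI
  simp only [SI_smul]
  exact intervalIntegral.integral_const_mul _ _

@[simp] lemma BI_neg (a b c d : ℝ) (f : SmoothAlg) (t : ℝ) :
    BI a b c d (-f) t = -BI a b c d f t := by
  have := BI_smul a b c d (-1) f t
  simpa using this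

@[simp] lemma BI_sub (a b c d : ℝ) (f g : SmoothAlg) (t : ℝ) :
    BI a b c d (f - g) t = BI a b c d f t - BI a b c d g t := by
  rw [sub_eq_add_neg, BI_add, BI_neg, sub_eq_add_neg]

@[simp] lemma BI_zero (a b c d t : ℝ) : BI a b c d 0 t = 0 := by
  simp [BI, SI]

lemma SI_mono {c d : ℝ} (hcd : c ≤ d) {f g : SmoothAlg} {t x : ℝ}
    (h : ∀ y, c ≤ y → y ≤ d → ev f t x y ≤ ev g t x y) : SI c d f t x ≤ SI c d g t x :=
  intervalIntegral.integral_mono_on hcd (Continuous.intervalIntegrable (by fun_prop) _ _)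
    (Continuous.intervalIntegrable (by fun_prop) _ _) fun y hy => h y hy.1 hy.2

lemma BI_mono {a b c d : ℝ} (hab : a ≤ b) (hcd : c ≤ d) {f g : SmoothAlg} {t : ℝ}
    (h : ∀ x y, a ≤ x → x ≤ b → c ≤ y → y ≤ d → ev f t x y ≤ ev g t x y) :
    BI a b c d f t ≤ BI a b c d g t :=
  intervalIntegral.integral_mono_on hab (Continuous.intervalIntegrable (by fun_prop) _ _)
    (Continuous.intervalIntegrable (by fun_prop) _ _)
    fun x hx => SI_mono hcd fun y hy hy' => h x y hx.1 hx.2 hy hy'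

lemma BI_congr {a b c d : ℝ} (hab : a ≤ b) (hcd : c ≤ d) {f g : SmoothAlg} {t : ℝ}
    (h : ∀ x y, a ≤ x → x ≤ b → c ≤ y → y ≤ d → ev f t x y = ev g t x y) :
    BI a b c d f t = BI a b c d g t :=
  le_antisymm (BI_mono hab hcd fun x y h1 h2 h3 h4 => (h x y h1 h2 h3 h4).le)
    (BI_mono hab hcd fun x y h1 h2 h3 h4 => (h x y h1 h2 h3 h4).ge)

lemma BI_nonneg {a b c d : ℝ} (hab : a ≤ b) (hcd : c ≤ d) {f : SmoothAlg} {t : ℝ}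
    (h : ∀ x y, a ≤ x → x ≤ b → c ≤ y → y ≤ d → 0 ≤ ev f t x y) : 0 ≤ BI a b c d f t := by
  have := BI_mono hab hcd (f := 0) (g := f) (t := t) (by simpa using h)
  simpa using this

lemma SI_nonneg {c d : ℝ} (hcd : c ≤ d) {f : SmoothAlg} {t x : ℝ}
    (h : ∀ y, c ≤ y → y ≤ d → 0 ≤ ev f t x y) : 0 ≤ SI c d f t x :=
  intervalIntegral.integral_nonneg hcd fun y hy => h y hy.1 hy.2

lemma BI_d1 (a b c d : ℝ) (f : SmoothAlg) (t : ℝ) :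
    BI a b c d (d1 f) t = SI c d f t b - SI c d f t a :=
  intervalIntegral.integral_eq_sub_of_hasDerivAt (fun x _ => SI_hasDerivAt_1 c d f t x)
    (Continuous.intervalIntegrable (by fun_prop) _ _)

lemma SI_d2 (c d : ℝ) (f : SmoothAlg) (t x : ℝ) :
    SI c d (d2 f) t x = ev f t x d - ev f t x c :=
  intervalIntegral.integral_eq_sub_of_hasDerivAt (fun y _ => ev_hasDerivAt_2 f t x y)
    (Continuous.intervalIntegrable (by fun_prop) _ _)

lemma BI_d2_eq_zero (a b c d : ℝ) (f : SmoothAlg) (t : ℝ)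
    (h : ∀ x, ev f t x d = ev f t x c) : BI a b c d (d2 f) t = 0 := by
  simp [BI, SI_d2, h]

lemma SI_eq_zero {c d : ℝ} {f : SmoothAlg} {t x : ℝ} (hcd : c ≤ d)
    (h : ∀ y, c ≤ y → y ≤ d → ev f t x y = 0) : SI c d f t x = 0 := by
  unfold SI
  rw [intervalIntegral.integral_congr (g := fun _ => 0)]
  · simp
  · intro y hy
    rw [Set.uIcc_of_le hcd] at hy
    exact h y hy.1 hy.2

lemma BI_d1_eq_zero {a b c d : ℝ} (hcd : c ≤ d) (f : SmoothAlg) (t : ℝ)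
    (ha : ∀ y, ev f t a y = 0) (hb : ∀ y, ev f t b y = 0) : BI a b c d (d1 f) t = 0 := by
  rw [BI_d1, SI_eq_zero hcd fun y _ _ => hb y, SI_eq_zero hcd fun y _ _ => ha y, sub_zero]

/-- A nonnegative continuous integrand that is positive at an interior point has positive
integral. -/
lemma pos_integral_of_pos {a b : ℝ} {h : ℝ → ℝ} (hc : Continuous h)
    (hn : ∀ x, a ≤ x → x ≤ b → 0 ≤ h x) {x0 : ℝ} (h1 : a < x0) (h2 : x0 < b) (hp : 0 < h x0) :
    0 < ∫ x in a..b, h x :=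
  intervalIntegral.integral_pos (lt_trans h1 h2) hc.continuousOn
    (fun x hx => hn x hx.1.le hx.2) ⟨x0, ⟨h1.le, h2.le⟩, hp⟩

lemma BI_pos {a b c d : ℝ} {f : SmoothAlg} {t x0 y0 : ℝ}
    (h : ∀ x y, a ≤ x → x ≤ b → c ≤ y → y ≤ d → 0 ≤ ev f t x y)
    (hx1 : a < x0) (hx2 : x0 < b) (hy1 : c < y0) (hy2 : y0 < d) (hp : 0 < ev f t x0 y0) :
    0 < BI a b c d f t := by
  refine pos_integral_of_pos (by fun_prop) (fun x h1 h2 => ?_) hx1 hx2 ?_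
  · exact SI_nonneg (hy1.trans hy2).le fun y h3 h4 => h x y h1 h2 h3 h4
  · exact pos_integral_of_pos (by fun_prop)
      (fun y h3 h4 => h x0 y hx1.le hx2.le h3 h4) hy1 hy2 hp

/-- One-dimensional Sobolev inequality for functions vanishing at the left end point. -/
lemma sq_le_integral_deriv_sq {a b : ℝ} (hab : a < b) {g g' : ℝ → ℝ}
    (hg : ∀ x, HasDerivAt g (g' x) x) (hc : Continuous g') (h0 : g a = 0) {x : ℝ}
    (h1 : a ≤ x) (h2 : x ≤ b) : g x ^ 2 ≤ (b - a) * ∫ y in a..b, g' y ^ 2 := by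
  have e1 : ∫ y in a..x, g' y = g x := by
    rw [intervalIntegral.integral_eq_sub_of_hasDerivAt (fun y _ => hg y)
      (hc.intervalIntegrable _ _), h0, sub_zero]
  have hL : 0 < b - a := by linarith
  -- integrate `2 c g' ≤ c² + g'²` with the constant `c = g(x) / (b - a)`
  set k := g x / (b - a) with hk
  have e2 : ∫ y in a..x, 2 * k * g' y ≤ ∫ y in a..x, (k ^ 2 + g' y ^ 2) := by
    refine intervalIntegral.integral_mono_on h1 (Continuous.intervalIntegrable (by fun_prop) _ _)
      (Continuous.intervalIntegrable (by fun_prop) _ _) fun y _ => ?_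
    nlinarith [sq_nonneg (k - g' y)]
  rw [intervalIntegral.integral_const_mul, e1, intervalIntegral.integral_add
    (Continuous.intervalIntegrable (by fun_prop) _ _)
    (Continuous.intervalIntegrable (by fun_prop) _ _), intervalIntegral.integral_const] at e2
  have e3 : ∫ y in a..x, g' y ^ 2 ≤ ∫ y in a..b, g' y ^ 2 := by
    refine intervalIntegral.integral_mono_interval le_rfl h1 h2
      (Eventually.of_forall fun y => by positivity)
      (Continuous.intervalIntegrable (by fun_prop) _ _)
  have e4 : (x - a) • k ^ 2 ≤ (b - a) * k ^ 2 := by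
    rw [smul_eq_mul]; gcongr
  have e5 : g x = k * (b - a) := by rw [hk]; field_simp
  rw [e5] at e2 ⊢
  have e6 : k ^ 2 * (b - a) ≤ ∫ y in a..b, g' y ^ 2 := by nlinarith
  calc (k * (b - a)) ^ 2 = (b - a) * (k ^ 2 * (b - a)) := by ring
    _ ≤ _ := by gcongr

/-- Sobolev inequality in a box for functions vanishing on the left and bottom sides. -/
lemma sq_le_BI {a b c d : ℝ} (hab : a < b) (hcd : c < d) (f : SmoothAlg) (t : ℝ)
    (ha : ∀ y, ev f t a y = 0) (hc : ∀ x, ev (d1 f) t x c = 0) {x y : ℝ}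
    (h1 : a ≤ x) (h2 : x ≤ b) (h3 : c ≤ y) (h4 : y ≤ d) :
    ev f t x y ^ 2 ≤ (b - a) * (d - c) * BI a b c d ((d2 (d1 f)) ^ 2) t := by
  have e1 := sq_le_integral_deriv_sq hab (fun s => ev_hasDerivAt_1 f t s y) (by fun_prop)
    (ha y) h1 h2
  have e2 : ∫ s in a..b, ev (d1 f) t s y ^ 2 ≤
      ∫ s in a..b, (d - c) * SI c d ((d2 (d1 f)) ^ 2) t s := by
    refine intervalIntegral.integral_mono_on hab.le (Continuous.intervalIntegrable (by fun_prop) _ _)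
      (Continuous.intervalIntegrable (by fun_prop) _ _) fun s _ => ?_
    exact sq_le_integral_deriv_sq hcd (fun r => ev_hasDerivAt_2 (d1 f) t s r) (by fun_prop)
      (hc s) h3 h4
  rw [intervalIntegral.integral_const_mul] at e2
  have hL : 0 < b - a := by linarith
  calc _ ≤ _ := e1
    _ ≤ (b - a) * ((d - c) * BI a b c d ((d2 (d1 f)) ^ 2) t) := by
      gcongr; exact e2
    _ = _ := by ring

/-! ### The rescaled system and finite speed of propagation -/

/-- Composition of a smooth function of one real variable with an element of `SmoothAlg`. -/
def comp1 (h : ℝ → ℝ) (hh : ContDiff ℝ (⊤ : ℕ∞) h) (f : SmoothAlg) : SmoothAlg :=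
  ⟨fun p => h (f.1 p), (hh.comp (smooth_contDiff f) : ContDiff ℝ (⊤ : ℕ∞) _)⟩

@[simp] lemma ev_comp1 (h : ℝ → ℝ) (hh : ContDiff ℝ (⊤ : ℕ∞) h) (f : SmoothAlg) (t x y : ℝ) :
    ev (comp1 h hh f) t x y = h (ev f t x y) := rfl

lemma ev_d0_comp1 (h : ℝ → ℝ) (hh : ContDiff ℝ (⊤ : ℕ∞) h) (f : SmoothAlg) (t x y : ℝ) :
    ev (d0 (comp1 h hh f)) t x y = deriv h (ev f t x y) * ev (d0 f) t x y :=
  ev_d0_eq (((hh.differentiable (by simp)) _).hasDerivAt.comp t (ev_hasDerivAt_0 f t x y))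
lemma ev_d1_comp1 (h : ℝ → ℝ) (hh : ContDiff ℝ (⊤ : ℕ∞) h) (f : SmoothAlg) (t x y : ℝ) :
    ev (d1 (comp1 h hh f)) t x y = deriv h (ev f t x y) * ev (d1 f) t x y :=
  ev_d1_eq (((hh.differentiable (by simp)) _).hasDerivAt.comp x (ev_hasDerivAt_1 f t x y))
lemma ev_d2_comp1 (h : ℝ → ℝ) (hh : ContDiff ℝ (⊤ : ℕ∞) h) (f : SmoothAlg) (t x y : ℝ) :
    ev (d2 (comp1 h hh f)) t x y = deriv h (ev f t x y) * ev (d2 f) t x y :=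
  ev_d2_eq (((hh.differentiable (by simp)) _).hasDerivAt.comp y (ev_hasDerivAt_2 f t x y))

/-- The d'Alembertian on `SmoothAlg`. -/
def bx (f : SmoothAlg) : SmoothAlg := d0 (d0 f) - d1 (d1 f) - d2 (d2 f)

/-- Twice the energy density. -/
def en (f : SmoothAlg) : SmoothAlg := d0 f ^ 2 + d1 f ^ 2 + d2 f ^ 2

/-- The differentiated energy density, with an arbitrary weight. -/
lemma d0_weight_en (W f : SmoothAlg) : d0 (W * en f) =
    (d0 W * en f - 2 * d0 f * (d1 W * d1 f + d2 W * d2 f)) + 2 * (W * d0 f * bx f)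
      + d1 (2 * (W * d0 f * d1 f)) + d2 (2 * (W * d0 f * d2 f)) := by
  have h1 := Der_comm (1, 0, 0) (0, 1, 0) f
  have h2 := Der_comm (1, 0, 0) (0, 0, 1) f
  simp only [en, bx, Derivation.leibniz, Derivation.leibniz_pow, map_add, smul_eq_mul,
    Derivation.map_natCast, nsmul_eq_mul, h1, h2, ← Nat.cast_ofNat (R := SmoothAlg)]
  push_cast
  ring

lemma d0_en (f : SmoothAlg) : d0 (en f) =
    2 * (d0 f * bx f) + d1 (2 * (d0 f * d1 f)) + d2 (2 * (d0 f * d2 f)) := by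
  simpa using d0_weight_en 1 f

/-- `v` solves `□v = -λ (∂ₜw)² ∂ₜv` for `t ≥ 0`, with the Cauchy data of `z` at `t = 0`. -/
structure Half (lam : ℝ) (z v w : SmoothAlg) : Prop where
  pde : ∀ t x y, 0 ≤ t → ev (bx v) t x y = -lam * ev (d0 w) t x y ^ 2 * ev (d0 v) t x y
  init : ∀ x y, ev v 0 x y = ev z 0 x y
  initd : ∀ x y, ev (d0 v) 0 x y = ev (d0 z) 0 x y

/-- `f` vanishes outside the cone `|(x, y)| ≤ R₀ + t` at nonnegative times. -/
def ConeSupp (R0 : ℝ) (f : SmoothAlg) : Prop :=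
  ∀ t x y, 0 ≤ t → (R0 + t) ^ 2 < x ^ 2 + y ^ 2 → ev f t x y = 0

lemma ConeSupp.der {R0 : ℝ} {f : SmoothAlg} (h : ConeSupp R0 f) (e : ℝ × ℝ × ℝ) :
    ConeSupp R0 (Der e f) := by
  have hpos : ∀ t x y, 0 < t → (R0 + t) ^ 2 < x ^ 2 + y ^ 2 → ev (Der e f) t x y = 0 := by
    intro t x y ht hxy
    have hU : IsOpen {p : ℝ × ℝ × ℝ | 0 < p.1 ∧ (R0 + p.1) ^ 2 < p.2.1 ^ 2 + p.2.2 ^ 2} :=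
      by
      refine IsOpen.inter (isOpen_lt continuous_const continuous_fst) ?_
      exact isOpen_lt (f := fun p : ℝ × ℝ × ℝ => (R0 + p.1) ^ 2) (by fun_prop) (by fun_prop)
    have := Der_eq_of_eqOn hU (f := f) (g := 0)
      (fun p hp => h p.1 p.2.1 p.2.2 hp.1.le hp.2) e (t, x, y) ⟨ht, hxy⟩
    rw [map_zero] at this
    exact this
  intro t x y ht hxy
  rcases ht.lt_or_eq with ht | rfl
  · exact hpos t x y ht hxy
  · have h1 : Tendsto (fun s => ev (Der e f) s x y) (𝓝[>] 0) (𝓝 (ev (Der e f) 0 x y)) :=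
      (Continuous.tendsto (by fun_prop) 0).mono_left nhdsWithin_le_nhds
    refine tendsto_nhds_unique h1 (tendsto_const_nhds.congr' ?_)
    have h2 : ∀ᶠ s in 𝓝[>] (0 : ℝ), (R0 + s) ^ 2 < x ^ 2 + y ^ 2 :=
      nhdsWithin_le_nhds ((isOpen_lt (f := fun s : ℝ => (R0 + s) ^ 2) (by fun_prop)
        continuous_const).mem_nhds hxy)
    filter_upwards [self_mem_nhdsWithin, h2] with s hs hs2 using (hpos s x y hs hs2).symm

/-- Functions with the same time-zero slice have the same tangential derivatives there. -/
lemma slice_d1 {f g : SmoothAlg} (h : ∀ x y, ev f 0 x y = ev g 0 x y) (x y : ℝ) :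
    ev (d1 f) 0 x y = ev (d1 g) 0 x y := by
  refine ev_d1_eq ?_
  simp only [h]
  exact ev_hasDerivAt_1 g 0 x y

lemma slice_d2 {f g : SmoothAlg} (h : ∀ x y, ev f 0 x y = ev g 0 x y) (x y : ℝ) :
    ev (d2 f) 0 x y = ev (d2 g) 0 x y := by
  refine ev_d2_eq ?_
  simp only [h]
  exact ev_hasDerivAt_2 g 0 x y

lemma triangle_aux {R0 t0 x y x0 y0 : ℝ} (hR : 0 ≤ R0) (ht : 0 ≤ t0)
    (h1 : (R0 + t0) ^ 2 < x0 ^ 2 + y0 ^ 2) (h2 : (x - x0) ^ 2 + (y - y0) ^ 2 ≤ t0 ^ 2) :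
    R0 ^ 2 < x ^ 2 + y ^ 2 := by
  by_contra! hc
  have h3 : (x * (x0 - x) + y * (y0 - y)) ^ 2 ≤ (R0 * t0) ^ 2 := by
    calc (x * (x0 - x) + y * (y0 - y)) ^ 2
        ≤ (x ^ 2 + y ^ 2) * ((x - x0) ^ 2 + (y - y0) ^ 2) := by
          nlinarith [sq_nonneg (x * (y0 - y) - y * (x0 - x))]
      _ ≤ R0 ^ 2 * t0 ^ 2 := by gcongr
      _ = _ := by ring
  have h4 := abs_le_of_sq_le_sq h3 (by positivity)
  nlinarith [(abs_le.1 h4).2]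

lemma deriv_expNegInvGlue_nonneg (s : ℝ) : 0 ≤ deriv expNegInvGlue s :=
  expNegInvGlue.monotone.deriv_nonneg

lemma deriv_expNegInvGlue_of_nonpos {s : ℝ} (hs : s ≤ 0) : deriv expNegInvGlue s = 0 := by
  refine IsLocalMin.deriv_eq_zero (Eventually.of_forall fun r => ?_)
  rw [expNegInvGlue.zero_of_nonpos hs]
  exact expNegInvGlue.nonneg r

/-- The quadratic form left over when the cone weight is differentiated is nonnegative inside the
backward cone, by Cauchy-Schwarz. -/
lemma cone_form_nonneg {s X Y p q r : ℝ} (hs : 0 < s) (h : X ^ 2 + Y ^ 2 ≤ s ^ 2) :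
    0 ≤ s * (p ^ 2 + q ^ 2 + r ^ 2) - 2 * p * (X * q + Y * r) := by
  have h1 : (X * q + Y * r) ^ 2 ≤ s ^ 2 * (q ^ 2 + r ^ 2) := by
    calc (X * q + Y * r) ^ 2 ≤ (X ^ 2 + Y ^ 2) * (q ^ 2 + r ^ 2) := by
          nlinarith [sq_nonneg (X * r - Y * q)]
      _ ≤ _ := by gcongr
  have h2 : 0 ≤ s * (s * (p ^ 2 + q ^ 2 + r ^ 2) - 2 * p * (X * q + Y * r)) := by
    nlinarith [sq_nonneg (s * p - (X * q + Y * r))]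
  exact nonneg_of_mul_nonneg_right h2 hs

/-- Finite speed of propagation: the energy in backward cones, measured with a smooth weight
supported in the cone, does not increase because the nonlinearity is dissipative. -/
theorem Half.coneSupp {lam R0 : ℝ} {z v w : SmoothAlg} (hlam : 0 ≤ lam) (hR : 0 ≤ R0)
    (hz : ∀ t x y, R0 ^ 2 < x ^ 2 + y ^ 2 → ev z t x y = 0) (hv : Half lam z v w) :
    ConeSupp R0 v := by
  intro t0 x0 y0 ht0 hxy
  -- the Cauchy data vanish in the base of the cone
  have hzd : ∀ (e : ℝ × ℝ × ℝ) t x y, R0 ^ 2 < x ^ 2 + y ^ 2 → ev (Der e z) t x y = 0 := by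
    intro e t x y h
    have hU : IsOpen {p : ℝ × ℝ × ℝ | R0 ^ 2 < p.2.1 ^ 2 + p.2.2 ^ 2} :=
      isOpen_lt (by fun_prop) (by fun_prop)
    have := Der_eq_of_eqOn hU (f := z) (g := 0) (fun p hp => hz p.1 p.2.1 p.2.2 hp) e (t, x, y) h
    rw [map_zero] at this
    exact this
  set Z : SmoothAlg := (algebraMap ℝ SmoothAlg t0 - cT) ^ 2 - ((cX - algebraMap ℝ SmoothAlg x0) ^ 2
    + (cY - algebraMap ℝ SmoothAlg y0) ^ 2) with hZ
  set W := comp1 expNegInvGlue expNegInvGlue.contDiff Z with hW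
  have eZ : ∀ t x y, ev Z t x y = (t0 - t) ^ 2 - ((x - x0) ^ 2 + (y - y0) ^ 2) := by
    intro t x y; simp [hZ]
  have eZ0 : ∀ t x y, ev (d0 Z) t x y = -2 * (t0 - t) := by
    intro t x y; simp [hZ, Derivation.leibniz_pow]; ring
  have eZ1 : ∀ t x y, ev (d1 Z) t x y = -2 * (x - x0) := by
    intro t x y; simp [hZ, Derivation.leibniz_pow]
  have eZ2 : ∀ t x y, ev (d2 Z) t x y = -2 * (y - y0) := by
    intro t x y; simp [hZ, Derivation.leibniz_pow]
  set B := BI (x0 - (t0 + 1)) (x0 + (t0 + 1)) (y0 - (t0 + 1)) (y0 + (t0 + 1)) with hB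
  have hWnn : ∀ t x y, 0 ≤ ev W t x y := fun t x y => expNegInvGlue.nonneg _
  have henn : ∀ t x y, 0 ≤ ev (en v) t x y := fun t x y => by simp [en]; positivity
  have hWz : ∀ t x y, 0 ≤ t → t ≤ t0 → (t0 + 1) ^ 2 ≤ (x - x0) ^ 2 + (y - y0) ^ 2 →
      ev W t x y = 0 := by
    intro t x y h1 h2 h3
    rw [hW, ev_comp1, eZ]
    exact expNegInvGlue.zero_of_nonpos (by nlinarith)
  have hder : ∀ t, 0 ≤ t → t ≤ t0 → B (d0 (W * en v)) t ≤ 0 := by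
    intro t ht htt
    have hbd1 : B (d1 (2 * (W * d0 v * d1 v))) t = 0 := by
      refine BI_d1_eq_zero (by linarith) _ _ (fun y => ?_) (fun y => ?_)
      · simp [hWz t (x0 - (t0 + 1)) y ht htt (by nlinarith [sq_nonneg (y - y0)])]
      · simp [hWz t (x0 + (t0 + 1)) y ht htt (by nlinarith [sq_nonneg (y - y0)])]
    have hbd2 : B (d2 (2 * (W * d0 v * d2 v))) t = 0 := by
      refine BI_d2_eq_zero _ _ _ _ _ _ (fun x => ?_)
      simp [hWz t x (y0 - (t0 + 1)) ht htt (by nlinarith [sq_nonneg (x - x0)]),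
        hWz t x (y0 + (t0 + 1)) ht htt (by nlinarith [sq_nonneg (x - x0)])]
    rw [d0_weight_en, hB, BI_add, BI_add, ← hB, hbd1, hbd2, add_zero, add_zero]
    have := BI_mono (a := x0 - (t0 + 1)) (b := x0 + (t0 + 1)) (c := y0 - (t0 + 1))
      (d := y0 + (t0 + 1)) (by linarith) (by linarith) (t := t)
      (f := (d0 W * en v - 2 * d0 v * (d1 W * d1 v + d2 W * d2 v)) + 2 * (W * d0 v * bx v))
      (g := 0) ?_
    · rwa [BI_zero] at this
    · intro x y _ _ _ _
      simp only [ev_add, ev_sub, ev_mul, hW, ev_d0_comp1, ev_d1_comp1, ev_d2_comp1, eZ0, eZ1, eZ2,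
        hv.pde t x y ht, ev_ofNat, ev_zero, ev_comp1, en, ev_pow]
      set h' := deriv expNegInvGlue (ev Z t x y) with hh'
      have hn1 : 0 ≤ h' := deriv_expNegInvGlue_nonneg _
      have hn2 : 0 ≤ expNegInvGlue (ev Z t x y) := expNegInvGlue.nonneg _
      generalize ev (d0 v) t x y = p
      generalize ev (d1 v) t x y = q
      generalize ev (d2 v) t x y = r
      generalize ev (d0 w) t x y = m
      have k1 : 0 ≤ h' * ((t0 - t) * (p ^ 2 + q ^ 2 + r ^ 2)
          - 2 * p * ((x - x0) * q + (y - y0) * r)) := by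
        rcases le_or_gt (ev Z t x y) 0 with hc | hc
        · rw [hh', deriv_expNegInvGlue_of_nonpos hc]; simp
        · rw [eZ] at hc
          refine mul_nonneg hn1 (cone_form_nonneg ?_ (by linarith))
          refine lt_of_le_of_ne (by linarith) fun h0 => ?_
          rw [← h0] at hc
          nlinarith [sq_nonneg (x - x0), sq_nonneg (y - y0)]
      have k2 : 0 ≤ expNegInvGlue (ev Z t x y) * (lam * (m * p) ^ 2) := by positivity
      nlinarith
  have hanti : AntitoneOn (B (W * en v)) (Set.Icc 0 t0) := by
    refine antitoneOn_of_deriv_nonpos (convex_Icc 0 t0) (BI_continuous _ _ _ _ _).continuousOn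
      (fun t _ => (BI_hasDerivAt _ _ _ _ _ t).differentiableAt.differentiableWithinAt)
      fun t ht => ?_
    rw [interior_Icc] at ht
    rw [(BI_hasDerivAt _ _ _ _ _ t).deriv]
    exact hder t ht.1.le ht.2.le
  have h0 : B (W * en v) 0 = 0 := by
    rw [hB, BI_congr (g := 0) (by linarith) (by linarith), BI_zero]
    intro x y _ _ _ _
    rcases le_or_gt (ev Z 0 x y) 0 with hc | hc
    · simp [hW, expNegInvGlue.zero_of_nonpos hc]
    · rw [eZ] at hc
      have := triangle_aux hR ht0 hxy (x := x) (y := y) (by nlinarith)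
      simp [en, hv.initd, slice_d1 hv.init, slice_d2 hv.init, hzd _ 0 x y this]
  have hen : ∀ t, 0 ≤ t → t < t0 → ev (d0 v) t x0 y0 = 0 := by
    intro t ht htt
    by_contra hne
    have h1 : B (W * en v) t ≤ 0 := by
      rw [← h0]; exact hanti ⟨le_rfl, ht0⟩ ⟨ht, htt.le⟩ ht
    refine absurd h1 (not_le.2 (BI_pos (x0 := x0) (y0 := y0) ?_ (by linarith) (by linarith)
      (by linarith) (by linarith) ?_))
    · intro x y _ _ _ _; exact mul_nonneg (hWnn t x y) (henn t x y)
    · rw [ev_mul]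
      refine mul_pos (expNegInvGlue.pos_of_pos ?_) ?_
      · change 0 < ev Z t x0 y0
        rw [eZ]; simp; nlinarith
      · simp only [en, ev_add, ev_pow]; positivity
  have := constant_of_has_deriv_right_zero (f := fun t => ev v t x0 y0) (a := 0) (b := t0)
    (Continuous.continuousOn (by fun_prop))
    (fun t ht => by
      have := ev_hasDerivAt_0 v t x0 y0
      rw [hen t ht.1 ht.2] at this
      exact this.hasDerivWithinAt) t0 ⟨ht0, le_rfl⟩
  rw [this, hv.init, hz]
  nlinarith

/-! ### Commuted energies -/

/-- The rotation field `x ∂_y - y ∂_x`. -/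
def Om : Derivation ℝ SmoothAlg SmoothAlg := cX • d2 - cY • d1

lemma Om_apply (f : SmoothAlg) : Om f = cX * d2 f - cY * d1 f := rfl

lemma d0_Om (f : SmoothAlg) : d0 (Om f) = Om (d0 f) := by
  simp only [Om_apply, map_sub, Derivation.leibniz, d0_cX, d0_cY, smul_eq_mul,
    Der_comm (1, 0, 0) (0, 1, 0) f, Der_comm (1, 0, 0) (0, 0, 1) f]
  ring

lemma bx_Om (f : SmoothAlg) : bx (Om f) = Om (bx f) := by
  have h0 : d0 (d0 (Om f)) = Om (d0 (d0 f)) := by rw [d0_Om, d0_Om]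
  rw [bx, h0, bx]
  simp only [Om_apply, map_sub, map_add, Derivation.leibniz, d1_cX, d1_cY, d2_cX, d2_cY,
    smul_eq_mul, Der_comm (0, 0, 1) (0, 1, 0), map_zero,
    Derivation.map_one_eq_zero]
  ring

lemma bx_d1 (f : SmoothAlg) : bx (d1 f) = d1 (bx f) := by
  simp only [bx, map_sub, Der_comm (0, 1, 0)]

lemma bx_d2 (f : SmoothAlg) : bx (d2 f) = d2 (bx f) := by
  simp only [bx, map_sub, Der_comm (0, 0, 1)]

/-- `lad Q k f` is the sum of `Q (Γ^I f)` over the words `Γ^I` of length at most `k` in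
`Γ ∈ {∂₁, ∂₂, Ω}` (with multiplicity). -/
def lad (Q : SmoothAlg → SmoothAlg) : ℕ → SmoothAlg → SmoothAlg
  | 0, f => Q f
  | k + 1, f => lad Q k f + lad Q k (d1 f) + lad Q k (d2 f) + lad Q k (Om f)

lemma lad_nonneg {Q : SmoothAlg → SmoothAlg} (hQ : ∀ f t x y, 0 ≤ ev (Q f) t x y) (k : ℕ) :
    ∀ (f : SmoothAlg) (t x y : ℝ), 0 ≤ ev (lad Q k f) t x y := by
  induction k with
  | zero => exact hQ
  | succ k ih =>
    intro f t x y
    simp only [lad, ev_add]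
    have := ih f t x y; have := ih (d1 f) t x y; have := ih (d2 f) t x y
    have := ih (Om f) t x y
    linarith

lemma sq_nn (f : SmoothAlg) (t x y : ℝ) : 0 ≤ ev (f ^ 2) t x y := by simp; positivity
lemma en_nn (f : SmoothAlg) (t x y : ℝ) : 0 ≤ ev (en f) t x y := by simp [en]; positivity

/-- Squares of all `Γ`-derivatives of order at most `k`. -/
abbrev Jf : ℕ → SmoothAlg → SmoothAlg := lad (fun f => f ^ 2)
/-- Energy densities of all `Γ`-derivatives of order at most `k`. -/
abbrev ef : ℕ → SmoothAlg → SmoothAlg := lad en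

lemma lad_mono_add {Q : SmoothAlg → SmoothAlg} (hQ : ∀ f t x y, 0 ≤ ev (Q f) t x y) (k : ℕ)
    (f : SmoothAlg) (t x y : ℝ) : ev (lad Q k f) t x y ≤ ev (lad Q (k + 1) f) t x y := by
  simp only [lad, ev_add]
  have := lad_nonneg hQ k (d1 f) t x y; have := lad_nonneg hQ k (d2 f) t x y
  have := lad_nonneg hQ k (Om f) t x y
  linarith

lemma lad_mono {Q : SmoothAlg → SmoothAlg} (hQ : ∀ f t x y, 0 ≤ ev (Q f) t x y) {j k : ℕ}
    (h : j ≤ k) (f : SmoothAlg) (t x y : ℝ) : ev (lad Q j f) t x y ≤ ev (lad Q k f) t x y := by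
  induction h with
  | refl => exact le_rfl
  | step _ ih => exact ih.trans (lad_mono_add hQ _ f t x y)

lemma Jf_d0_le (k : ℕ) : ∀ (f : SmoothAlg) (t x y : ℝ),
    ev (Jf k (d0 f)) t x y ≤ ev (ef k f) t x y := by
  induction k with
  | zero => intro f t x y; simp [lad, en]; nlinarith [sq_nonneg (ev (d1 f) t x y),
      sq_nonneg (ev (d2 f) t x y)]
  | succ k ih =>
    intro f t x y
    simp only [lad, ev_add, ← Der_comm (1, 0, 0), ← d0_Om]
    have := ih f t x y; have := ih (d1 f) t x y; have := ih (d2 f) t x y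
    have := ih (Om f) t x y
    linarith

/-- Leibniz rule for sums of squares of derivatives. -/
lemma Jf_mul_le (k : ℕ) : ∀ (f g : SmoothAlg) (t x y : ℝ), ev (Jf k (f * g)) t x y ≤
    5 ^ k * ∑ i ∈ Finset.range (k + 1), ev (Jf i f) t x y * ev (Jf (k - i) g) t x y := by
  induction k with
  | zero => intro f g t x y; simp [lad, mul_pow]
  | succ k ih =>
    intro f g t x y
    have hadd : ∀ (k : ℕ) (f g : SmoothAlg), ev (Jf k (f + g)) t x y ≤
        2 * ev (Jf k f) t x y + 2 * ev (Jf k g) t x y := by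
      intro k
      induction k with
      | zero => intro f g; simp [lad]; nlinarith [sq_nonneg (ev f t x y - ev g t x y)]
      | succ k ih =>
        intro f g
        simp only [lad, ev_add, map_add]
        have := ih f g; have := ih (d1 f) (d1 g); have := ih (d2 f) (d2 g)
        have := ih (Om f) (Om g)
        linarith
    have hG : ∀ G : Derivation ℝ SmoothAlg SmoothAlg, ev (Jf k (G (f * g))) t x y ≤
        2 * (5 ^ k * ∑ i ∈ Finset.range (k + 1), ev (Jf i f) t x y * ev (Jf (k - i) (G g)) t x y)
        + 2 * (5 ^ k * ∑ i ∈ Finset.range (k + 1),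
          ev (Jf i (G f)) t x y * ev (Jf (k - i) g) t x y) := by
      intro G
      rw [Derivation.leibniz, smul_eq_mul, smul_eq_mul, mul_comm g]
      have h1 := ih f (G g) t x y
      have h2 := ih (G f) g t x y
      have := hadd k (f * G g) (G f * g)
      linarith
    have e0 := ih f g t x y
    have e1 := hG d1; have e2 := hG d2; have e3 := hG Om
    set a : ℕ → ℝ := fun i => ev (Jf i f) t x y with ha
    set b : ℕ → ℝ := fun i => ev (Jf i g) t x y with hb
    have han : ∀ i, 0 ≤ a i := fun i => lad_nonneg sq_nn i f t x y
    have hbn : ∀ i, 0 ≤ b i := fun i => lad_nonneg sq_nn i g t x y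
    have s1 : ∑ i ∈ Finset.range (k + 1), a i * b (k - i)
        + ∑ i ∈ Finset.range (k + 1), a i * ev (Jf (k - i) (d1 g)) t x y
        + ∑ i ∈ Finset.range (k + 1), a i * ev (Jf (k - i) (d2 g)) t x y
        + ∑ i ∈ Finset.range (k + 1), a i * ev (Jf (k - i) (Om g)) t x y
        = ∑ i ∈ Finset.range (k + 1), a i * b (k + 1 - i) := by
      rw [← Finset.sum_add_distrib, ← Finset.sum_add_distrib, ← Finset.sum_add_distrib]
      refine Finset.sum_congr rfl fun i hi => ?_
      have : k + 1 - i = (k - i) + 1 := by have := Finset.mem_range.1 hi; omega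
      simp only [hb, this, lad, ev_add]; ring
    have s2 : ∑ i ∈ Finset.range (k + 1), a i * b (k - i)
        + ∑ i ∈ Finset.range (k + 1), ev (Jf i (d1 f)) t x y * b (k - i)
        + ∑ i ∈ Finset.range (k + 1), ev (Jf i (d2 f)) t x y * b (k - i)
        + ∑ i ∈ Finset.range (k + 1), ev (Jf i (Om f)) t x y * b (k - i)
        = ∑ i ∈ Finset.range (k + 1), a (i + 1) * b (k + 1 - (i + 1)) := by
      rw [← Finset.sum_add_distrib, ← Finset.sum_add_distrib, ← Finset.sum_add_distrib]
      refine Finset.sum_congr rfl fun i hi => ?_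
      have : k + 1 - (i + 1) = k - i := by omega
      simp only [ha, this, lad, ev_add]; ring
    have s3 : ∑ i ∈ Finset.range (k + 1), a i * b (k + 1 - i) ≤
        ∑ i ∈ Finset.range (k + 1 + 1), a i * b (k + 1 - i) := by
      rw [Finset.sum_range_succ _ (k + 1)]
      have := mul_nonneg (han (k + 1)) (hbn (k + 1 - (k + 1)))
      linarith
    have s4 : ∑ i ∈ Finset.range (k + 1), a (i + 1) * b (k + 1 - (i + 1)) ≤
        ∑ i ∈ Finset.range (k + 1 + 1), a i * b (k + 1 - i) := by
      rw [Finset.sum_range_succ' _ (k + 1)]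
      have := mul_nonneg (han 0) (hbn (k + 1 - 0))
      linarith
    have s0 : 0 ≤ ∑ i ∈ Finset.range (k + 1), a i * b (k - i) :=
      Finset.sum_nonneg fun i _ => mul_nonneg (han i) (hbn _)
    simp only [lad, ev_add] at e0 e1 e2 e3 ⊢
    set S := ∑ i ∈ Finset.range (k + 1 + 1), a i * b (k + 1 - i)
    have hS : 0 ≤ S := Finset.sum_nonneg fun i _ => mul_nonneg (han i) (hbn _)
    have h5 : (0 : ℝ) < 5 ^ k := by positivity
    rw [pow_succ]
    have key : ∀ A0 A1 A2 A3 B1 B2 B3 : ℝ, 0 ≤ A0 → 0 ≤ S → A0 + A1 + A2 + A3 ≤ S →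
        A0 + B1 + B2 + B3 ≤ S → A0 + (2 * A1 + 2 * B1) + (2 * A2 + 2 * B2)
          + (2 * A3 + 2 * B3) ≤ 5 * S := by
      intros; linarith
    have := mul_le_mul_of_nonneg_left (key _ _ _ _ _ _ _ s0 hS (s1.le.trans s3) (s2.le.trans s4)) h5.le
    nlinarith [this, e0, e1, e2, e3]

/-- Cubic product estimate: two of the three factors carry at most two derivatives. -/
lemma Jf_cubic_le {q p : SmoothAlg} {t x y M X : ℝ} (hM : 0 ≤ M) (hX : 0 ≤ X)
    (hq2 : ev (Jf 2 q) t x y ≤ M) (hp2 : ev (Jf 2 p) t x y ≤ M)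
    (hq5 : ev (Jf 5 q) t x y ≤ X) (hp5 : ev (Jf 5 p) t x y ≤ X) :
    ev (Jf 5 (q * (q * p))) t x y ≤ (5 ^ 5 * 6) ^ 2 * (M ^ 2 * X) := by
  have nq := fun i => lad_nonneg sq_nn i q t x y
  have np := fun i => lad_nonneg sq_nn i p t x y
  have q2 : ∀ i ≤ 2, ev (Jf i q) t x y ≤ M := fun i h => (lad_mono sq_nn h q t x y).trans hq2
  have p2 : ∀ i ≤ 2, ev (Jf i p) t x y ≤ M := fun i h => (lad_mono sq_nn h p t x y).trans hp2
  have q5 : ∀ i ≤ 5, ev (Jf i q) t x y ≤ X := fun i h => (lad_mono sq_nn h q t x y).trans hq5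
  have p5 : ∀ i ≤ 5, ev (Jf i p) t x y ≤ X := fun i h => (lad_mono sq_nn h p t x y).trans hp5
  have triple : ∀ i j l : ℕ, i + j + l = 5 →
      ev (Jf i q) t x y * (ev (Jf j q) t x y * ev (Jf l p) t x y) ≤ M ^ 2 * X := by
    intro i j l h
    have hi := nq i; have hj := nq j; have hl := np l
    by_cases h1 : i ≤ 2
    · by_cases h2 : j ≤ 2
      · calc _ ≤ M * (M * X) := by
              gcongr
              · exact q2 i h1
              · exact q2 j h2
              · exact p5 l (by omega)
          _ = _ := by ring
      · calc _ ≤ M * (X * M) := by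
              gcongr
              · exact q2 i h1
              · exact q5 j (by omega)
              · exact p2 l (by omega)
          _ = _ := by ring
    · calc _ ≤ X * (M * M) := by
              gcongr
              · exact q5 i (by omega)
              · exact q2 j (by omega)
              · exact p2 l (by omega)
          _ = _ := by ring
  have hMX : 0 ≤ M ^ 2 * X := by positivity
  have h1 : ∀ i ∈ Finset.range 6, ev (Jf i q) t x y * ev (Jf (5 - i) (q * p)) t x y ≤
      5 ^ 5 * 6 * (M ^ 2 * X) := by
    intro i hi
    have hi := Finset.mem_range.1 hi
    have h2 := Jf_mul_le (5 - i) q p t x y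
    calc _ ≤ ev (Jf i q) t x y * (5 ^ (5 - i) * ∑ j ∈ Finset.range (5 - i + 1),
            ev (Jf j q) t x y * ev (Jf (5 - i - j) p) t x y) :=
          mul_le_mul_of_nonneg_left h2 (nq i)
      _ = 5 ^ (5 - i) * ∑ j ∈ Finset.range (5 - i + 1),
            ev (Jf i q) t x y * (ev (Jf j q) t x y * ev (Jf (5 - i - j) p) t x y) := by
          rw [mul_left_comm, Finset.mul_sum]
      _ ≤ 5 ^ (5 - i) * ∑ j ∈ Finset.range (5 - i + 1), M ^ 2 * X := by
          refine mul_le_mul_of_nonneg_left (Finset.sum_le_sum fun j hj => ?_) (by positivity)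
          have := Finset.mem_range.1 hj
          exact triple i j (5 - i - j) (by omega)
      _ = 5 ^ (5 - i) * ((5 - i + 1 : ℕ) * (M ^ 2 * X)) := by
          rw [Finset.sum_const, Finset.card_range, nsmul_eq_mul]
      _ ≤ 5 ^ 5 * ((6 : ℕ) * (M ^ 2 * X)) := by
          exact mul_le_mul (pow_le_pow_right₀ (by norm_num) (by omega))
            (mul_le_mul_of_nonneg_right (by exact_mod_cast (by omega : 5 - i + 1 ≤ 6)) hMX)
            (by positivity) (by positivity)
      _ = _ := by push_cast; ring
  calc _ ≤ _ := Jf_mul_le 5 q (q * p) t x y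
    _ ≤ 5 ^ 5 * ∑ i ∈ Finset.range 6, 5 ^ 5 * 6 * (M ^ 2 * X) := by
        exact mul_le_mul_of_nonneg_left (Finset.sum_le_sum fun i hi => h1 i hi) (by positivity)
    _ = _ := by rw [Finset.sum_const, Finset.card_range, nsmul_eq_mul]; push_cast; ring

lemma ConeSupp.add {R0 : ℝ} {f g : SmoothAlg} (hf : ConeSupp R0 f) (hg : ConeSupp R0 g) :
    ConeSupp R0 (f + g) := fun t x y h1 h2 => by simp [hf t x y h1 h2, hg t x y h1 h2]
lemma ConeSupp.mul_left {R0 : ℝ} {f : SmoothAlg} (hf : ConeSupp R0 f) (g : SmoothAlg) :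
    ConeSupp R0 (g * f) := fun t x y h1 h2 => by simp [hf t x y h1 h2]
lemma ConeSupp.om {R0 : ℝ} {f : SmoothAlg} (hf : ConeSupp R0 f) : ConeSupp R0 (Om f) :=
  fun t x y h1 h2 => by
    simp [Om_apply, hf.der (0, 1, 0) t x y h1 h2, hf.der (0, 0, 1) t x y h1 h2]

lemma ConeSupp.ef {R0 : ℝ} (k : ℕ) : ∀ {f : SmoothAlg}, ConeSupp R0 f → ConeSupp R0 (ef k f) := by
  induction k with
  | zero => intro f hf t x y h1 h2; simp [lad, en, hf.der _ t x y h1 h2]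
  | succ k ih => intro f hf; exact (((ih hf).add (ih (hf.der _))).add (ih (hf.der _))).add (ih hf.om)

/-- A function supported in the cone vanishes on the sides of a large enough box. -/
lemma ConeSupp.side {R0 ρ t : ℝ} {f : SmoothAlg} (hf : ConeSupp R0 f) (hR : 0 ≤ R0) (ht : 0 ≤ t)
    (h : R0 + t < ρ) : (∀ y, ev f t (-ρ) y = 0 ∧ ev f t ρ y = 0) ∧
      ∀ x, ev f t x (-ρ) = 0 ∧ ev f t x ρ = 0 := by
  refine ⟨fun y => ⟨?_, ?_⟩, fun x => ⟨?_, ?_⟩⟩ <;> refine hf _ _ _ ht ?_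
  · nlinarith [sq_nonneg y]
  · nlinarith [sq_nonneg y]
  · nlinarith [sq_nonneg x]
  · nlinarith [sq_nonneg x]

lemma ConeSupp.BI_div {R0 ρ t : ℝ} {f : SmoothAlg} (hf : ConeSupp R0 f) (hR : 0 ≤ R0)
    (ht : 0 ≤ t) (h : R0 + t < ρ) :
    BI (-ρ) ρ (-ρ) ρ (d1 f) t = 0 ∧ BI (-ρ) ρ (-ρ) ρ (d2 f) t = 0 := by
  obtain ⟨h1, h2⟩ := hf.side hR ht h
  exact ⟨BI_d1_eq_zero (by linarith) f t (fun y => (h1 y).1) (fun y => (h1 y).2),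
    BI_d2_eq_zero _ _ _ _ f t (fun x => by rw [(h2 x).1, (h2 x).2])⟩

/-- Differential inequality for the energies of all `Γ`-derivatives. -/
lemma BI_d0_ef_le {R0 ρ t lam : ℝ} (hR : 0 ≤ R0) (ht : 0 ≤ t) (h : R0 + t < ρ) (hlam : 0 < lam)
    (k : ℕ) : ∀ {f : SmoothAlg}, ConeSupp R0 f → BI (-ρ) ρ (-ρ) ρ (d0 (ef k f)) t ≤
      lam * BI (-ρ) ρ (-ρ) ρ (Jf k (d0 f)) t + lam⁻¹ * BI (-ρ) ρ (-ρ) ρ (Jf k (bx f)) t := by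
  induction k with
  | zero =>
    intro f hf
    simp only [lad]
    rw [d0_en, BI_add, BI_add,
      ((hf.der (0, 1, 0)).mul_left (d0 f) |>.mul_left 2).BI_div hR ht h |>.1,
      ((hf.der (0, 0, 1)).mul_left (d0 f) |>.mul_left 2).BI_div hR ht h |>.2, add_zero, add_zero,
      ← BI_smul, ← BI_smul, ← BI_add]
    refine BI_mono (by linarith) (by linarith) fun x y _ _ _ _ => ?_
    simp only [ev_mul, ev_ofNat, ev_add, ev_smul, ev_pow]
    generalize ev (d0 f) t x y = a
    generalize ev (bx f) t x y = b
    have : lam * a ^ 2 + lam⁻¹ * b ^ 2 - 2 * (a * b) = lam⁻¹ * (lam * a - b) ^ 2 := by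
      field_simp; ring
    have : 0 ≤ lam⁻¹ * (lam * a - b) ^ 2 := by positivity
    linarith
  | succ k ih =>
    intro f hf
    have h0 := ih hf
    have h1 := ih (hf.der (0, 1, 0))
    have h2 := ih (hf.der (0, 0, 1))
    have h3 := ih hf.om
    rw [bx_d1, Der_comm (1, 0, 0)] at h1
    rw [bx_d2, Der_comm (1, 0, 0)] at h2
    rw [bx_Om, d0_Om] at h3
    simp only [lad, map_add, BI_add]
    linarith

/-- Sobolev inequality for the energy densities. -/
lemma ef_le_BI {R0 ρ t : ℝ} (hR : 0 ≤ R0) (ht : 0 ≤ t) (h : R0 + t < ρ)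
    {x y : ℝ} (hx1 : -ρ ≤ x) (hx2 : x ≤ ρ) (hy1 : -ρ ≤ y) (hy2 : y ≤ ρ)
    (k : ℕ) : ∀ {f : SmoothAlg}, ConeSupp R0 f →
      ev (ef k f) t x y ≤ 4 * ρ ^ 2 * BI (-ρ) ρ (-ρ) ρ (ef (k + 2) f) t := by
  induction k with
  | zero =>
    intro f hf
    have hS : ∀ g : SmoothAlg, ConeSupp R0 g → ev g t x y ^ 2 ≤
        4 * ρ ^ 2 * BI (-ρ) ρ (-ρ) ρ ((d2 (d1 g)) ^ 2) t := by
      intro g hg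
      have := sq_le_BI (a := -ρ) (b := ρ) (c := -ρ) (d := ρ) (by linarith) (by linarith) g t
        (fun y => ((hg.side hR ht h).1 y).1)
        (fun x => (((hg.der (0, 1, 0)).side hR ht h).2 x).1) hx1 hx2 hy1 hy2
      linarith
    have e0 := hS _ (hf.der (1, 0, 0))
    have e1 := hS _ (hf.der (0, 1, 0))
    have e2 := hS _ (hf.der (0, 0, 1))
    have c0 : d2 (d1 (d0 f)) = d0 (d2 (d1 f)) := by
      rw [Der_comm (0, 1, 0) (1, 0, 0), Der_comm (0, 0, 1) (1, 0, 0)]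
    have c1 : d2 (d1 (d1 f)) = d1 (d2 (d1 f)) := Der_comm _ _ _
    have c2 : d2 (d1 (d2 f)) = d2 (d2 (d1 f)) := by rw [Der_comm (0, 1, 0) (0, 0, 1) f]
    rw [c0] at e0
    rw [c1] at e1
    rw [c2] at e2
    have hle : BI (-ρ) ρ (-ρ) ρ (en (d2 (d1 f))) t ≤ BI (-ρ) ρ (-ρ) ρ (ef 2 f) t := by
      refine BI_mono (by linarith) (by linarith) fun x y _ _ _ _ => ?_
      simp only [lad, ev_add]
      have := fun f => en_nn f t x y
      linarith [this f, this (d1 f), this (d2 f), this (Om f), this (d1 (d1 f)),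
        this (Om (d1 f)), this (d1 (d2 f)), this (d2 (d2 f)), this (Om (d2 f)),
        this (d1 (Om f)), this (d2 (Om f)), this (Om (Om f))]
    have hsum : BI (-ρ) ρ (-ρ) ρ (en (d2 (d1 f))) t =
        BI (-ρ) ρ (-ρ) ρ ((d0 (d2 (d1 f))) ^ 2) t + BI (-ρ) ρ (-ρ) ρ ((d1 (d2 (d1 f))) ^ 2) t
        + BI (-ρ) ρ (-ρ) ρ ((d2 (d2 (d1 f))) ^ 2) t := by
      rw [en, BI_add, BI_add]
    have hgoal : ev (ef 0 f) t x y
        = ev (d0 f) t x y ^ 2 + ev (d1 f) t x y ^ 2 + ev (d2 f) t x y ^ 2 := by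
      simp only [lad, en, ev_add, ev_pow]
    rw [hgoal]
    have hρ : 0 ≤ 4 * ρ ^ 2 := by positivity
    have := mul_le_mul_of_nonneg_left hle hρ
    rw [hsum, mul_add, mul_add] at this
    linarith
  | succ k ih =>
    intro f hf
    have h0 := ih hf
    have h1 := ih (hf.der (0, 1, 0))
    have h2 := ih (hf.der (0, 0, 1))
    have h3 := ih hf.om
    have c1 : ef (k + 1) f = ef k f + ef k (d1 f) + ef k (d2 f) + ef k (Om f) := rfl
    have c2 : ef (k + 1 + 2) f = ef (k + 2) f + ef (k + 2) (d1 f) + ef (k + 2) (d2 f)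
      + ef (k + 2) (Om f) := rfl
    rw [c1, c2]
    simp only [BI_add, ev_add]
    linarith

/-! ### Bounds on bounded time intervals -/

/-- `f` and `g` agree at nonnegative times. -/
def PosEq (f g : SmoothAlg) : Prop := ∀ t x y, 0 ≤ t → ev f t x y = ev g t x y

lemma PosEq.der {f g : SmoothAlg} (h : PosEq f g) (e : ℝ × ℝ × ℝ) : PosEq (Der e f) (Der e g) := by
  intro t x y ht
  refine ev_eq_of_pos (fun s hs => ?_) t ht
  exact Der_eq_of_eqOn (U := {p | 0 < p.1}) (isOpen_lt continuous_const continuous_fst)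
    (fun p hp => h p.1 p.2.1 p.2.2 (le_of_lt hp)) e (s, x, y) hs

lemma PosEq.om {f g : SmoothAlg} (h : PosEq f g) : PosEq (Om f) (Om g) := fun t x y ht => by
  simp [Om_apply, h.der (0, 1, 0) t x y ht, h.der (0, 0, 1) t x y ht]

lemma PosEq.Jf (k : ℕ) : ∀ {f g : SmoothAlg}, PosEq f g → PosEq (Jf k f) (Jf k g) := by
  induction k with
  | zero => intro f g h t x y ht; simp [lad, h t x y ht]
  | succ k ih =>
    intro f g h t x y ht
    simp only [lad, ev_add]
    rw [ih h t x y ht, ih (h.der _) t x y ht, ih (h.der _) t x y ht, ih h.om t x y ht]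

lemma Jf_smul (c : ℝ) (k : ℕ) : ∀ (f : SmoothAlg) (t x y : ℝ),
    ev (Jf k (c • f)) t x y = c ^ 2 * ev (Jf k f) t x y := by
  induction k with
  | zero => intro f t x y; simp [lad, mul_pow]
  | succ k ih =>
    intro f t x y
    have hs : ∀ G : Derivation ℝ SmoothAlg SmoothAlg, G (c • f) = c • G f := fun G => G.map_smul c f
    simp only [lad, ev_add, hs, ih]
    ring

/-- `f` and `g` have the same Cauchy data at time zero. -/
def DataEq (f g : SmoothAlg) : Prop :=
  ∀ x y, ev f 0 x y = ev g 0 x y ∧ ev (d0 f) 0 x y = ev (d0 g) 0 x y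

lemma DataEq.tan {f g : SmoothAlg} (h : DataEq f g) (x y : ℝ) :
    ev (d1 f) 0 x y = ev (d1 g) 0 x y ∧ ev (d2 f) 0 x y = ev (d2 g) 0 x y := by
  constructor
  · have := ev_hasDerivAt_1 g 0 x y
    rw [← funext fun s => (h s y).1] at this
    exact ev_d1_eq this
  · have := ev_hasDerivAt_2 g 0 x y
    rw [← funext fun s => (h x s).1] at this
    exact ev_d2_eq this

lemma DataEq.dt_tan {f g : SmoothAlg} (h : DataEq f g) (x y : ℝ) :
    ev (d1 (d0 f)) 0 x y = ev (d1 (d0 g)) 0 x y ∧ ev (d2 (d0 f)) 0 x y = ev (d2 (d0 g)) 0 x y := by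
  constructor
  · have := ev_hasDerivAt_1 (d0 g) 0 x y
    rw [← funext fun s => (h s y).2] at this
    exact ev_d1_eq this
  · have := ev_hasDerivAt_2 (d0 g) 0 x y
    rw [← funext fun s => (h x s).2] at this
    exact ev_d2_eq this

lemma DataEq.d1 {f g : SmoothAlg} (h : DataEq f g) : DataEq (d1 f) (d1 g) := fun x y =>
  ⟨(h.tan x y).1, by rw [Der_comm (1, 0, 0), Der_comm (1, 0, 0)]; exact (h.dt_tan x y).1⟩
lemma DataEq.d2 {f g : SmoothAlg} (h : DataEq f g) : DataEq (d2 f) (d2 g) := fun x y =>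
  ⟨(h.tan x y).2, by rw [Der_comm (1, 0, 0), Der_comm (1, 0, 0)]; exact (h.dt_tan x y).2⟩
lemma DataEq.om {f g : SmoothAlg} (h : DataEq f g) : DataEq (Om f) (Om g) := fun x y =>
  ⟨by simp [Om_apply, h.tan x y], by rw [d0_Om, d0_Om]; simp [Om_apply, h.dt_tan x y]⟩

lemma DataEq.ef (k : ℕ) : ∀ {f g : SmoothAlg}, DataEq f g → ∀ x y,
    ev (ef k f) 0 x y = ev (ef k g) 0 x y := by
  induction k with
  | zero => intro f g h x y; simp [lad, en, h.tan x y, (h x y).2]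
  | succ k ih =>
    intro f g h x y
    simp only [lad, ev_add]
    rw [ih h, ih h.d1, ih h.d2, ih h.om]

/-- The equation commuted with `∂₁, ∂₂, Ω`. The equation is known on `t ≥ 0` only, so both sides are
compared there, through `PosEq`. -/
lemma Half.jf_bx {lam : ℝ} {z v w : SmoothAlg} (h : Half lam z v w) (k : ℕ) {t : ℝ} (ht : 0 ≤ t)
    (x y : ℝ) : ev (Jf k (bx v)) t x y = lam ^ 2 * ev (Jf k (d0 w * (d0 w * d0 v))) t x y := by
  have : PosEq (bx v) ((-lam) • (d0 w * (d0 w * d0 v))) := fun t x y ht => by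
    rw [h.pde t x y ht]; simp; ring
  rw [this.Jf k t x y ht, Jf_smul]; ring

/-- A nonnegative solution of `E' ≤ λ K (1 + E)³` stays bounded for times of order `1 / λ`. -/
lemma cubic_gronwall {E E' : ℝ → ℝ} {K lam T : ℝ} (hKp : 0 < K) (hT : 0 ≤ T)
    (hEn : ∀ t, 0 ≤ E t) (hEd : ∀ t, HasDerivAt E (E' t) t)
    (key : ∀ t, 0 ≤ t → t ≤ T → E' t ≤ lam * K * (1 + E t) ^ 3)
    (hle : lam ≤ ((1 + E 0) ^ 2)⁻¹ / (4 * K * (T + 1))) {t : ℝ} (ht : 0 ≤ t) (htT : t ≤ T) :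
    E t ≤ 2 * (1 + E 0) ^ 2 := by
  -- `(1 + E)⁻² + 2 λ K t` is nondecreasing
  have hG : ∀ t, HasDerivAt (fun t => ((1 + E t) ^ 2)⁻¹ + 2 * lam * K * t)
      (-(2 * (1 + E t) * E' t) / ((1 + E t) ^ 2) ^ 2 + 2 * lam * K) t := by
    intro t
    have hp : (1 + E t) ^ 2 ≠ 0 := by have := hEn t; positivity
    have h1 := (((hEd t).const_add 1).pow 2).inv hp
    have h2 := h1.add ((hasDerivAt_id t).const_mul (2 * lam * K))
    refine h2.congr_deriv ?_
    simp
  have hmono : MonotoneOn (fun t => ((1 + E t) ^ 2)⁻¹ + 2 * lam * K * t) (Set.Icc 0 T) := by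
    refine monotoneOn_of_deriv_nonneg (convex_Icc 0 T)
      (fun t _ => (hG t).continuousAt.continuousWithinAt)
      (fun t _ => (hG t).differentiableAt.differentiableWithinAt) fun t ht => ?_
    rw [interior_Icc] at ht
    rw [(hG t).deriv]
    have hk := key t ht.1.le ht.2.le
    have hp : 0 < 1 + E t := by have := hEn t; linarith
    rw [neg_div, ← sub_eq_neg_add, sub_nonneg, div_le_iff₀ (by positivity)]
    nlinarith [mul_le_mul_of_nonneg_left hk hp.le]
  have h1 := hmono ⟨le_rfl, hT⟩ ⟨ht, htT⟩ ht
  have h0 := hEn 0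
  have hp : 0 < 1 + E t := by have := hEn t; linarith
  have ht0 := hEn t
  simp only [mul_zero, add_zero] at h1
  generalize E t = X at *
  generalize E 0 = E0 at *
  have h2 : 2 * lam * K * t ≤ ((1 + E0) ^ 2)⁻¹ / 2 := by
    calc 2 * lam * K * t
        ≤ 2 * (((1 + E0) ^ 2)⁻¹ / (4 * K * (T + 1))) * K * (T + 1) := by gcongr; linarith
      _ = _ := by field_simp; ring
  have h3 : ((1 + E0) ^ 2)⁻¹ / 2 ≤ ((1 + X) ^ 2)⁻¹ := by linarith
  have h4 : (2 * (1 + E0) ^ 2)⁻¹ ≤ ((1 + X) ^ 2)⁻¹ := by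
    rw [mul_inv, mul_comm]; linarith
  have h5 : (1 + X) ^ 2 ≤ 2 * (1 + E0) ^ 2 := (inv_le_inv₀ (by positivity) (by positivity)).1 h4
  nlinarith

/-- Local-in-time bounds: on a fixed time interval the rescaled solutions are bounded together
with their derivatives, uniformly for small `λ`. -/
theorem crude (z1 z2 : SmoothAlg) {R0 : ℝ} (hR : 0 ≤ R0)
    (hz1 : ∀ t x y, R0 ^ 2 < x ^ 2 + y ^ 2 → ev z1 t x y = 0)
    (hz2 : ∀ t x y, R0 ^ 2 < x ^ 2 + y ^ 2 → ev z2 t x y = 0) {T : ℝ} (hT : 0 ≤ T) :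
    ∃ C lam1 : ℝ, 0 < C ∧ 0 < lam1 ∧ ∀ lam, 0 < lam → lam ≤ lam1 → ∀ v w,
      Half lam z1 v w → Half lam z2 w v → ∀ t, 0 ≤ t → t ≤ T → ∀ x y,
        ev (ef 3 v) t x y ≤ C ∧ ev (ef 3 w) t x y ≤ C := by
  set ρ := R0 + T + 1 with hρ
  have hρ0 : 0 < ρ := by positivity
  have hside : -ρ ≤ ρ := by linarith
  set A := fun f => BI (-ρ) ρ (-ρ) ρ f with hA
  set E0 := A (ef 5 z1) 0 + A (ef 5 z2) 0 with hE0
  have hE0n : 0 ≤ E0 := add_nonneg (BI_nonneg hside hside fun x y _ _ _ _ => lad_nonneg en_nn _ _ _ _ _)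
    (BI_nonneg hside hside fun x y _ _ _ _ => lad_nonneg en_nn _ _ _ _ _)
  set c5 : ℝ := (5 ^ 5 * 6) ^ 2 with hc5
  have hc5p : 0 < c5 := by positivity
  set K := 1 + 2 * c5 * (4 * ρ ^ 2) ^ 2 with hK
  have hKp : 0 < K := by positivity
  clear_value c5
  set lam1 := ((1 + E0) ^ 2)⁻¹ / (4 * K * (T + 1)) with hlam1
  refine ⟨4 * ρ ^ 2 * (2 * (1 + E0) ^ 2), lam1, by positivity, by positivity, ?_⟩
  intro lam hlam hle v w hv hw
  have cv := hv.coneSupp hlam.le hR hz1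
  have cw := hw.coneSupp hlam.le hR hz2
  set E := fun t => A (ef 5 v) t + A (ef 5 w) t with hE
  have nv := fun t => BI_nonneg hside hside (t := t) fun x y _ _ _ _ => lad_nonneg en_nn 5 v t x y
  have nw := fun t => BI_nonneg hside hside (t := t) fun x y _ _ _ _ => lad_nonneg en_nn 5 w t x y
  have hEn : ∀ t, 0 ≤ E t := fun t => add_nonneg (nv t) (nw t)
  have hEd : ∀ t, HasDerivAt E (A (d0 (ef 5 v)) t + A (d0 (ef 5 w)) t) t := fun t =>
    (BI_hasDerivAt _ _ _ _ _ t).add (BI_hasDerivAt _ _ _ _ _ t)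
  set E' := fun t => A (d0 (ef 5 v)) t + A (d0 (ef 5 w)) t with hE'
  have hE0' : E 0 = E0 := by
    have a1 : DataEq v z1 := fun x y => ⟨hv.init x y, hv.initd x y⟩
    have a2 : DataEq w z2 := fun x y => ⟨hw.init x y, hw.initd x y⟩
    simp only [hE, hE0, hA]
    rw [BI_congr hside hside fun x y _ _ _ _ => a1.ef 5 x y,
      BI_congr hside hside fun x y _ _ _ _ => a2.ef 5 x y]
  -- the cubic differential inequality for the energy
  have key : ∀ t, 0 ≤ t → t ≤ T → E' t ≤ lam * K * (1 + E t) ^ 3 := by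
    intro t ht htT
    have hlt : R0 + t < ρ := by linarith
    have b1 := BI_d0_ef_le hR ht hlt hlam 5 cv
    have b2 := BI_d0_ef_le hR ht hlt hlam 5 cw
    have j1 : BI (-ρ) ρ (-ρ) ρ (Jf 5 (d0 v)) t ≤ A (ef 5 v) t :=
      BI_mono hside hside fun x y _ _ _ _ => Jf_d0_le 5 v t x y
    have j2 : BI (-ρ) ρ (-ρ) ρ (Jf 5 (d0 w)) t ≤ A (ef 5 w) t :=
      BI_mono hside hside fun x y _ _ _ _ => Jf_d0_le 5 w t x y
    have m1 : ∀ x y, -ρ ≤ x → x ≤ ρ → -ρ ≤ y → y ≤ ρ →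
        ev (Jf 2 (d0 v)) t x y ≤ 4 * ρ ^ 2 * E t ∧ ev (Jf 2 (d0 w)) t x y ≤ 4 * ρ ^ 2 * E t := by
      intro x y h1 h2 h3 h4
      have hB : ∀ f, ConeSupp R0 f → ev (Jf 2 (d0 f)) t x y ≤ 4 * ρ ^ 2 * A (ef 5 f) t := by
        intro f hf
        refine (Jf_d0_le 2 f t x y).trans ((ef_le_BI hR ht hlt h1 h2 h3 h4 2 hf).trans ?_)
        refine mul_le_mul_of_nonneg_left ?_ (by positivity)
        exact BI_mono hside hside fun x y _ _ _ _ => lad_mono en_nn (by norm_num) f t x y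
      refine ⟨(hB v cv).trans ?_, (hB w cw).trans ?_⟩
      · exact mul_le_mul_of_nonneg_left (le_add_of_nonneg_right (nw t)) (by positivity)
      · exact mul_le_mul_of_nonneg_left (le_add_of_nonneg_left (nv t)) (by positivity)
    have cub : ∀ (a b : SmoothAlg), (∀ x y, -ρ ≤ x → x ≤ ρ → -ρ ≤ y → y ≤ ρ →
        ev (Jf 2 (d0 a)) t x y ≤ 4 * ρ ^ 2 * E t ∧ ev (Jf 2 (d0 b)) t x y ≤ 4 * ρ ^ 2 * E t) →
        ∀ z, Half lam z a b → A (ef 5 a) t + A (ef 5 b) t = E t →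
        lam⁻¹ * BI (-ρ) ρ (-ρ) ρ (Jf 5 (bx a)) t ≤ lam * (c5 * (4 * ρ ^ 2) ^ 2 * E t ^ 3) := by
      intro a b hm z hz hsum
      have : BI (-ρ) ρ (-ρ) ρ (Jf 5 (bx a)) t ≤ BI (-ρ) ρ (-ρ) ρ
          ((lam ^ 2 * (c5 * (4 * ρ ^ 2 * E t) ^ 2)) • (ef 5 a + ef 5 b)) t := by
        refine BI_mono hside hside fun x y h1 h2 h3 h4 => ?_
        rw [hz.jf_bx 5 ht, ev_smul, ev_add, mul_assoc]
        refine mul_le_mul_of_nonneg_left ?_ (by positivity)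
        obtain ⟨q1, q2⟩ := hm x y h1 h2 h3 h4
        have p1 := Jf_d0_le 5 a t x y
        have p2 := Jf_d0_le 5 b t x y
        have n1 := lad_nonneg en_nn 5 a t x y
        have n2 := lad_nonneg en_nn 5 b t x y
        have := Jf_cubic_le (q := d0 b) (p := d0 a) (t := t) (x := x) (y := y)
          (M := 4 * ρ ^ 2 * E t) (X := ev (ef 5 a) t x y + ev (ef 5 b) t x y)
          (mul_nonneg (by positivity) (hEn t)) (by linarith) q2 q1 (by linarith) (by linarith)
        rw [← hc5] at this
        linarith
      rw [BI_smul, BI_add] at this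
      have hs : BI (-ρ) ρ (-ρ) ρ (ef 5 a) t + BI (-ρ) ρ (-ρ) ρ (ef 5 b) t = E t := hsum
      rw [hs] at this
      calc _ ≤ lam⁻¹ * (lam ^ 2 * (c5 * (4 * ρ ^ 2 * E t) ^ 2) * E t) := by gcongr
        _ = _ := by field_simp
    have k1 := cub v w m1 z1 hv rfl
    have k2 := cub w v (fun x y h1 h2 h3 h4 => (m1 x y h1 h2 h3 h4).symm) z2 hw (add_comm _ _)
    have f1 : E' t ≤ lam * E t + 2 * (lam * (c5 * (4 * ρ ^ 2) ^ 2 * E t ^ 3)) := by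
      have : lam * E t = lam * A (ef 5 v) t + lam * A (ef 5 w) t := mul_add _ _ _
      have := mul_le_mul_of_nonneg_left j1 hlam.le
      have := mul_le_mul_of_nonneg_left j2 hlam.le
      show A (d0 (ef 5 v)) t + A (d0 (ef 5 w)) t ≤ _
      simp only [hA] at *
      linarith
    have hx := hEn t
    generalize E t = X at *
    have f2 : X ≤ (1 + X) ^ 3 := by nlinarith [sq_nonneg X, mul_nonneg hx (sq_nonneg X)]
    have f3 : X ^ 3 ≤ (1 + X) ^ 3 := by gcongr; linarith
    have f4 : 0 ≤ 2 * (c5 * (4 * ρ ^ 2) ^ 2) := by positivity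
    have f5 := mul_le_mul_of_nonneg_left f3 f4
    calc _ ≤ _ := f1
      _ = lam * (X + 2 * (c5 * (4 * ρ ^ 2) ^ 2) * X ^ 3) := by ring
      _ ≤ lam * ((1 + X) ^ 3 + 2 * (c5 * (4 * ρ ^ 2) ^ 2) * (1 + X) ^ 3) := by gcongr
      _ = _ := by rw [hK]; ring
  have hbd : ∀ t, 0 ≤ t → t ≤ T → E t ≤ 2 * (1 + E0) ^ 2 := by
    intro t ht htT
    rw [← hE0']
    refine cubic_gronwall hKp hT hEn hEd key ?_ ht htT
    rw [hE0']; exact hle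
  intro t ht htT x y
  have fin : ∀ f, ConeSupp R0 f → A (ef 5 f) t ≤ E t →
      ev (ef 3 f) t x y ≤ 4 * ρ ^ 2 * (2 * (1 + E0) ^ 2) := by
    intro f hf hfE
    have hlt : R0 + t < ρ := by linarith
    by_cases hin : (R0 + t) ^ 2 < x ^ 2 + y ^ 2
    · rw [hf.ef 3 t x y ht hin]; positivity
    · have hx : x ^ 2 ≤ ρ ^ 2 := by nlinarith [sq_nonneg y]
      have hy : y ^ 2 ≤ ρ ^ 2 := by nlinarith [sq_nonneg x]
      have hx' := abs_le_of_sq_le_sq' hx hρ0.le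
      have hy' := abs_le_of_sq_le_sq' hy hρ0.le
      refine (ef_le_BI hR ht hlt hx'.1 hx'.2 hy'.1 hy'.2 3 hf).trans ?_
      exact mul_le_mul_of_nonneg_left (hfE.trans (hbd t ht htT)) (by positivity)
  exact ⟨fin v cv (le_add_of_nonneg_right (nw t)), fin w cw (le_add_of_nonneg_left (nv t))⟩

/-- Functions supported in the cone are controlled by their derivatives. -/
lemma ConeSupp.sq_le {R0 t T C : ℝ} {f : SmoothAlg} (hf : ConeSupp R0 f) (hR : 0 ≤ R0)
    (ht : 0 ≤ t) (htT : t ≤ T) (h : ∀ x y, ev (d2 f) t x y ^ 2 ≤ C) (x y : ℝ) :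
    ev f t x y ^ 2 ≤ (2 * (R0 + T + 1)) ^ 2 * C := by
  set ρ := R0 + T + 1 with hρ
  have hC : 0 ≤ C := (sq_nonneg _).trans (h 0 0)
  have hρ0 : 0 ≤ ρ := by linarith
  by_cases hin : (R0 + t) ^ 2 < x ^ 2 + y ^ 2
  · rw [hf t x y ht hin, zero_pow two_ne_zero]; positivity
  · have hy : y ^ 2 ≤ ρ ^ 2 := by nlinarith [sq_nonneg x]
    have hy' := abs_le_of_sq_le_sq' hy (by linarith)
    have h0 := ((hf.side hR ht (show R0 + t < ρ by linarith)).2 x).1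
    have h1 := sq_le_integral_deriv_sq (a := -ρ) (b := ρ) (by linarith)
      (fun s => ev_hasDerivAt_2 f t x s) (by fun_prop) h0 hy'.1 hy'.2
    have h2 : ∫ s in (-ρ)..ρ, ev (d2 f) t x s ^ 2 ≤ ∫ s in (-ρ)..ρ, C :=
      intervalIntegral.integral_mono_on (by linarith)
        (Continuous.intervalIntegrable (by fun_prop) _ _) (by simp) fun s _ => h x s
    rw [intervalIntegral.integral_const, smul_eq_mul] at h2
    calc _ ≤ _ := h1
      _ ≤ (ρ - -ρ) * ((ρ - -ρ) * C) := by gcongr; linarith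
      _ = _ := by ring

/-! ### The angular quadratic form -/

/-- Gagliardo–Nirenberg type inequality for the third derivative of a cube on the circle. -/
lemma circle_cube {f f1 f2 f3 : ℝ → ℝ} {a b m : ℝ} (hab : a ≤ b)
    (h0 : ∀ x, HasDerivAt f (f1 x) x) (h1 : ∀ x, HasDerivAt f1 (f2 x) x)
    (h2 : ∀ x, HasDerivAt f2 (f3 x) x) (c3 : Continuous f3)
    (p0 : f a = f b) (p1 : f1 a = f1 b) (p2 : f2 a = f2 b) (hm : ∀ x, a ≤ x → x ≤ b → f x ^ 2 ≤ m ^ 2) :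
    ∫ x in a..b, (6 * f1 x ^ 3 + 18 * f x * f1 x * f2 x + 3 * f x ^ 2 * f3 x) ^ 2
      ≤ 10470 * m ^ 4 * ∫ x in a..b, f3 x ^ 2 := by
  have c0 : Continuous f := continuous_iff_continuousAt.2 fun x => (h0 x).continuousAt
  have c1 : Continuous f1 := continuous_iff_continuousAt.2 fun x => (h1 x).continuousAt
  have c2 : Continuous f2 := continuous_iff_continuousAt.2 fun x => (h2 x).continuousAt
  -- the multipliers 432 and 2124 of two exact derivatives make the integrand inequality pointwise
  have hz : ∫ x in a..b, (432 * (5 * f1 x ^ 4 * f2 x * f x + f1 x ^ 5 * f1 x)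
      + 2124 * m ^ 2 * (f3 x * f1 x ^ 3 + f2 x * (3 * f1 x ^ 2 * f2 x))) = 0 := by
    rw [intervalIntegral.integral_eq_sub_of_hasDerivAt
      (f := fun x => 432 * (f1 x ^ 5 * f x) + 2124 * m ^ 2 * (f2 x * f1 x ^ 3))]
    · simp only [p0, p1, p2, sub_self]
    · intro x _
      have := ((((h1 x).pow 5).mul (h0 x)).const_mul 432).add
        (((h2 x).mul ((h1 x).pow 3)).const_mul (2124 * m ^ 2))
      refine this.congr_deriv ?_
      simp
    · exact Continuous.intervalIntegrable (by fun_prop) _ _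
  rw [← intervalIntegral.integral_const_mul, ← add_zero (∫ x in a..b, 10470 * m ^ 4 * f3 x ^ 2), ← hz,
    ← intervalIntegral.integral_add (Continuous.intervalIntegrable (by fun_prop) _ _)
      (Continuous.intervalIntegrable (by fun_prop) _ _)]
  refine intervalIntegral.integral_mono_on hab (Continuous.intervalIntegrable (by fun_prop) _ _)
    (Continuous.intervalIntegrable (by fun_prop) _ _) fun x hx => ?_
  have hf := hm x hx.1 hx.2
  generalize f x = u at *
  generalize f1 x = p at *
  generalize f2 x = q at *
  generalize f3 x = s at *
  have e1 : (6 * p ^ 3 + 18 * u * p * q + 3 * u ^ 2 * s) ^ 2 ≤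
      3 * (36 * p ^ 6 + 324 * (u ^ 2 * (p * q) ^ 2) + 9 * ((u ^ 2) ^ 2 * s ^ 2)) := by
    nlinarith [sq_nonneg (6 * p ^ 3 - 18 * u * p * q), sq_nonneg (6 * p ^ 3 - 3 * u ^ 2 * s),
      sq_nonneg (18 * u * p * q - 3 * u ^ 2 * s)]
  have e2 : u ^ 2 * (p * q) ^ 2 ≤ m ^ 2 * (p * q) ^ 2 := by gcongr
  have e3 : (u ^ 2) ^ 2 * s ^ 2 ≤ (m ^ 2) ^ 2 * s ^ 2 := by gcongr
  have e4 : 0 ≤ 216 * (p ^ 3 + 5 * u * p * q) ^ 2 := by positivity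
  have e5 : 0 ≤ 108 * (p ^ 3 + 2124 / 216 * m ^ 2 * s) ^ 2 := by positivity
  have e6 : 0 ≤ m ^ 4 * s ^ 2 := by positivity
  nlinarith [e1, e2, e3, e4, e5, e6]

/-- `2π`-periodicity in the last variable. -/
def Per (f : SmoothAlg) : Prop := ∀ t x y, ev f t x (y + 2 * π) = ev f t x y

lemma Per.der {f : SmoothAlg} (h : Per f) (e : ℝ × ℝ × ℝ) : Per (Der e f) := by
  intro t x y
  have h1 : (fun p : ℝ × ℝ × ℝ => f.1 (p + (0, 0, 2 * π))) = f.1 := by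
    funext p
    have := h p.1 p.2.1 p.2.2
    simp only [ev] at this
    rw [← this]
    exact congrArg f.1 (Prod.ext (add_zero _) (Prod.ext (add_zero _) rfl))
  have h2 := fderiv_comp_add_right (𝕜 := ℝ) (f := f.1) (x := (t, x, y)) (0, 0, 2 * π)
  rw [h1] at h2
  show fderiv ℝ f.1 (t, x, y + 2 * π) e = fderiv ℝ f.1 (t, x, y) e
  rw [h2]
  simp

lemma Per.add {f g : SmoothAlg} (hf : Per f) (hg : Per g) : Per (f + g) := fun t x y => by
  simp [hf t x y, hg t x y]
lemma Per.sub {f g : SmoothAlg} (hf : Per f) (hg : Per g) : Per (f - g) := fun t x y => by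
  simp [hf t x y, hg t x y]
lemma Per.mul {f g : SmoothAlg} (hf : Per f) (hg : Per g) : Per (f * g) := fun t x y => by
  simp [hf t x y, hg t x y]
lemma Per.ends {f : SmoothAlg} (hf : Per f) (t x : ℝ) : ev f t x (-π) = ev f t x π := by
  rw [← hf t x (-π)]; congr 1; ring

/-- Third angular derivative. -/
def dd3 (f : SmoothAlg) : SmoothAlg := d2 (d2 (d2 f))

lemma dd3_add (f g : SmoothAlg) : dd3 (f + g) = dd3 f + dd3 g := by simp only [dd3, map_add]
lemma dd3_sub (f g : SmoothAlg) : dd3 (f - g) = dd3 f - dd3 g := by simp only [dd3, map_sub]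
lemma dd3_smul (c : ℝ) (f : SmoothAlg) : dd3 (c • f) = c • dd3 f := by
  simp only [dd3, Derivation.map_smul]

lemma dd3_cube (f : SmoothAlg) : dd3 (f ^ 3) =
    6 * d2 f ^ 3 + 18 * f * d2 f * d2 (d2 f) + 3 * f ^ 2 * d2 (d2 (d2 f)) := by
  have h : f ^ 3 = f * f * f := by ring
  simp only [dd3, h, Derivation.leibniz, map_add, smul_eq_mul]
  ring

lemma SI_dd3_cube {f : SmoothAlg} (hf : Per f) {m t x : ℝ}
    (hm : ∀ y, -π ≤ y → y ≤ π → ev f t x y ^ 2 ≤ m ^ 2) :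
    SI (-π) π (dd3 (f ^ 3) ^ 2) t x ≤ 10470 * m ^ 4 * SI (-π) π (dd3 f ^ 2) t x := by
  have := circle_cube (f := fun y => ev f t x y) (a := -π) (b := π) (by linarith [pi_pos])
    (fun y => ev_hasDerivAt_2 f t x y) (fun y => ev_hasDerivAt_2 (d2 f) t x y)
    (fun y => ev_hasDerivAt_2 (d2 (d2 f)) t x y) (by fun_prop)
    (hf.ends t x) ((hf.der _).ends t x) (((hf.der _).der _).ends t x) hm
  rw [dd3_cube]
  simpa [SI, dd3] using this

/-- Third angular derivatives of cubic products, by polarization of `SI_dd3_cube`. -/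
lemma SI_dd3_cubic {p q : SmoothAlg} (hp : Per p) (hq : Per q) {B t x : ℝ}
    (hB : ∀ y, -π ≤ y → y ≤ π → ev p t x y ^ 2 + ev q t x y ^ 2 ≤ B ^ 2) :
    SI (-π) π (dd3 (q ^ 2 * p) ^ 2) t x ≤
      10470 * B ^ 4 * (SI (-π) π (dd3 p ^ 2) t x + SI (-π) π (dd3 q ^ 2) t x) := by
  have hpi : -π ≤ π := by linarith [pi_pos]
  have e : q ^ 2 * p = (1 / 6 : ℝ) • ((p + q) ^ 3 + (p - q) ^ 3 - (2 : ℝ) • p ^ 3) :=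
    ev_ext fun t x y => by simp; ring
  -- `|p ± q|² ≤ 2 B²`
  have k1 := SI_dd3_cube (hp.add hq) (m := √2 * B) (t := t) (x := x) fun y h1 h2 => by
    have := hB y h1 h2
    rw [mul_pow, Real.sq_sqrt (by norm_num), ev_add]
    nlinarith [sq_nonneg (ev p t x y - ev q t x y)]
  have k2 := SI_dd3_cube (hp.sub hq) (m := √2 * B) (t := t) (x := x) fun y h1 h2 => by
    have := hB y h1 h2
    rw [mul_pow, Real.sq_sqrt (by norm_num), ev_sub]
    nlinarith [sq_nonneg (ev p t x y + ev q t x y)]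
  have k3 := SI_dd3_cube hp (m := B) (t := t) (x := x) fun y h1 h2 => by
    have := hB y h1 h2
    nlinarith [sq_nonneg (ev q t x y)]
  have h4 : (√2 * B) ^ 4 = 4 * B ^ 4 := by
    rw [mul_pow, show (√2) ^ 4 = ((√2) ^ 2) ^ 2 by ring, Real.sq_sqrt (by norm_num)]; norm_num
  rw [h4] at k1 k2
  set P := SI (-π) π (dd3 p ^ 2) t x
  set Q := SI (-π) π (dd3 q ^ 2) t x
  have hsum : SI (-π) π (dd3 (p + q) ^ 2) t x + SI (-π) π (dd3 (p - q) ^ 2) t x = 2 * (P + Q) := by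
    have : dd3 (p + q) ^ 2 + dd3 (p - q) ^ 2 = (2 : ℝ) • (dd3 p ^ 2 + dd3 q ^ 2) :=
      ev_ext fun t x y => by simp [dd3_add, dd3_sub]; ring
    rw [← SI_add, this, SI_smul, SI_add]
  have hmain : SI (-π) π (dd3 (q ^ 2 * p) ^ 2) t x ≤ SI (-π) π ((1 / 12 : ℝ) •
      (dd3 ((p + q) ^ 3) ^ 2 + dd3 ((p - q) ^ 3) ^ 2 + (4 : ℝ) • dd3 (p ^ 3) ^ 2)) t x := by
    refine SI_mono hpi fun y _ _ => ?_
    rw [e, dd3_smul, dd3_sub, dd3_add, dd3_smul]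
    simp only [ev_pow, ev_smul, ev_sub, ev_add]
    generalize ev (dd3 ((p + q) ^ 3)) t x y = a
    generalize ev (dd3 ((p - q) ^ 3)) t x y = b
    generalize ev (dd3 (p ^ 3)) t x y = c
    nlinarith [sq_nonneg (a - b), sq_nonneg (a + 2 * c), sq_nonneg (b + 2 * c)]
  rw [SI_smul, SI_add, SI_add, SI_smul] at hmain
  have hQ : 0 ≤ Q := SI_nonneg hpi fun y _ _ => by simp; positivity
  have hP : 0 ≤ P := SI_nonneg hpi fun y _ _ => by simp; positivity
  have hB4 : 0 ≤ B ^ 4 := by positivity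
  have hBP := mul_nonneg hB4 hP
  have hBQ := mul_nonneg hB4 hQ
  have k12 : SI (-π) π (dd3 ((p + q) ^ 3) ^ 2) t x + SI (-π) π (dd3 ((p - q) ^ 3) ^ 2) t x
      ≤ 10470 * (4 * B ^ 4) * (2 * (P + Q)) := by rw [← hsum]; linarith
  nlinarith

/-! ### The linear equation in the strip -/

/-- Cauchy–Schwarz bound for the oscillation. -/
lemma sub_sq_le {a b : ℝ} {g g' : ℝ → ℝ} (hg : ∀ x, HasDerivAt g (g' x) x)
    (hc : Continuous g') {x y : ℝ} (hx1 : a ≤ x) (hx2 : x ≤ b) (hy1 : a ≤ y) (hy2 : y ≤ b) :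
    (g x - g y) ^ 2 ≤ (b - a) * ∫ s in a..b, g' s ^ 2 := by
  wlog hxy : y ≤ x generalizing x y
  · have := this hy1 hy2 hx1 hx2 (le_of_not_ge hxy)
    rwa [← neg_sub, neg_sq] at this
  have hI : 0 ≤ ∫ s in a..b, g' s ^ 2 :=
    intervalIntegral.integral_nonneg (hx1.trans hx2) fun s _ => sq_nonneg _
  rcases hxy.eq_or_lt with rfl | hlt
  · rw [sub_self, zero_pow two_ne_zero]
    exact mul_nonneg (by linarith) hI
  have h1 := sq_le_integral_deriv_sq (g := fun s => g s - g y) hlt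
    (fun s => (hg s).sub_const _) hc (sub_self _) hlt.le le_rfl
  have h2 : ∫ s in y..x, g' s ^ 2 ≤ ∫ s in a..b, g' s ^ 2 :=
    intervalIntegral.integral_mono_interval hy1 hxy hx2
      (Eventually.of_forall fun s => sq_nonneg (g' s))
      (Continuous.intervalIntegrable (by fun_prop) _ _)
  refine h1.trans ?_
  have h3 : 0 ≤ ∫ s in y..x, g' s ^ 2 :=
    intervalIntegral.integral_nonneg hxy fun s _ => sq_nonneg _
  exact mul_le_mul (by linarith) h2 h3 (by linarith)

/-- Constant in the Sobolev inequality on an interval of length `L`. -/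
def sobC (L : ℝ) : ℝ := 2 / L + 2 * L ^ 5 + L ^ 3 + L

/-- Sobolev inequality for periodic functions. -/
lemma circle_sobolev {f f1 f2 f3 : ℝ → ℝ} {a b : ℝ} (hab : a < b)
    (h0 : ∀ x, HasDerivAt f (f1 x) x) (h1 : ∀ x, HasDerivAt f1 (f2 x) x)
    (h2 : ∀ x, HasDerivAt f2 (f3 x) x) (c3 : Continuous f3)
    (p0 : f a = f b) (p1 : f1 a = f1 b) {x : ℝ} (hx1 : a ≤ x) (hx2 : x ≤ b) :
    f x ^ 2 ≤ sobC (b - a) * ((∫ s in a..b, f s ^ 2) + ∫ s in a..b, f3 s ^ 2) ∧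
    f1 x ^ 2 ≤ sobC (b - a) * ((∫ s in a..b, f s ^ 2) + ∫ s in a..b, f3 s ^ 2) ∧
    f2 x ^ 2 ≤ sobC (b - a) * ((∫ s in a..b, f s ^ 2) + ∫ s in a..b, f3 s ^ 2) := by
  have c0 : Continuous f := continuous_iff_continuousAt.2 fun x => (h0 x).continuousAt
  have c1 : Continuous f1 := continuous_iff_continuousAt.2 fun x => (h1 x).continuousAt
  have c2 : Continuous f2 := continuous_iff_continuousAt.2 fun x => (h2 x).continuousAt
  set L := b - a with hL
  have hLp : 0 < L := by linarith
  set I := ∫ s in a..b, f s ^ 2 with hI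
  set N := ∫ s in a..b, f3 s ^ 2 with hN
  have hIn : 0 ≤ I := intervalIntegral.integral_nonneg hab.le fun s _ => sq_nonneg _
  have hNn : 0 ≤ N := intervalIntegral.integral_nonneg hab.le fun s _ => sq_nonneg _
  have step : ∀ (u v : ℝ → ℝ) (K : ℝ), (∀ x, HasDerivAt u (v x) x) → Continuous v → u a = u b →
      (∀ s, a ≤ s → s ≤ b → v s ^ 2 ≤ K) → ∫ s in a..b, v s ^ 2 ≤ L * K := by
    intro u v K _ hc _ hK
    have : ∫ s in a..b, v s ^ 2 ≤ ∫ s in a..b, K := intervalIntegral.integral_mono_on hab.le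
      (Continuous.intervalIntegrable (by fun_prop) _ _) (by simp) fun s hs => hK s hs.1 hs.2
    simpa using this
  have rolle : ∀ (u v w : ℝ → ℝ), (∀ x, HasDerivAt u (v x) x) → (∀ x, HasDerivAt v (w x) x) →
      Continuous w → u a = u b → ∀ s, a ≤ s → s ≤ b → v s ^ 2 ≤ L * ∫ s in a..b, w s ^ 2 := by
    intro u v w hu hv hw hp s hs1 hs2
    obtain ⟨c, hc, hc0⟩ := exists_hasDerivAt_eq_zero hab
      (fun x _ => (hu x).continuousAt.continuousWithinAt) hp (fun x _ => hu x)
    have := sub_sq_le hv hw hs1 hs2 hc.1.le hc.2.le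
    rwa [hc0, sub_zero] at this
  have b2 := rolle f1 f2 f3 h1 h2 c3 p1
  have i2 := step f1 f2 _ h1 c2 p1 b2
  have b1 : ∀ s, a ≤ s → s ≤ b → f1 s ^ 2 ≤ L ^ 3 * N := fun s hs1 hs2 =>
    (rolle f f1 f2 h0 h1 c2 p0 s hs1 hs2).trans
      ((mul_le_mul_of_nonneg_left i2 hLp.le).trans_eq (by ring))
  have i1 := step f f1 _ h0 c1 p0 b1
  have b0 : f x ^ 2 ≤ 2 / L * I + 2 * L ^ 5 * N := by
    have h : ∫ s in a..b, f x ^ 2 ≤ ∫ s in a..b, (2 * f s ^ 2 + 2 * (L * (L * (L ^ 3 * N)))) := by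
      refine intervalIntegral.integral_mono_on hab.le (by simp)
        (Continuous.intervalIntegrable (by fun_prop) _ _) fun s hs => ?_
      have := sub_sq_le h0 c1 hx1 hx2 hs.1 hs.2
      have := this.trans (mul_le_mul_of_nonneg_left i1 hLp.le)
      nlinarith [sq_nonneg (f x - 2 * f s)]
    rw [intervalIntegral.integral_add (Continuous.intervalIntegrable (by fun_prop) _ _) (by simp),
      intervalIntegral.integral_const_mul] at h
    simp only [intervalIntegral.integral_const, smul_eq_mul] at h
    rw [← hL, ← hI] at h
    have : f x ^ 2 ≤ (2 * I + L * (2 * (L * (L * (L ^ 3 * N))))) / L := by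
      rw [le_div_iff₀ hLp]; linarith
    refine this.trans_eq ?_
    field_simp
  have hC1 : 0 ≤ 2 / L := by positivity
  refine ⟨b0.trans ?_, (b1 x hx1 hx2).trans ?_, (b2 x hx1 hx2).trans ?_⟩ <;> rw [sobC]
  · have : 0 ≤ (2 * L ^ 5 + L ^ 3 + L) * I := by positivity
    have : 0 ≤ (2 / L + L ^ 3 + L) * N := by positivity
    nlinarith
  · have : 0 ≤ (2 / L + 2 * L ^ 5 + L ^ 3 + L) * I := by positivity
    have : 0 ≤ (2 / L + 2 * L ^ 5 + L) * N := by positivity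
    nlinarith
  · have : 0 ≤ (2 / L + 2 * L ^ 5 + L ^ 3 + L) * I := by positivity
    have : 0 ≤ (2 / L + 2 * L ^ 5 + L ^ 3) * N := by positivity
    nlinarith

/-- A smooth positive function equal to the identity on `[1/2, ∞)`. -/
def rfun (r : ℝ) : ℝ := r * smoothTransition (4 * r - 1) + (1 - smoothTransition (4 * r - 1))

lemma rfun_contDiff : ContDiff ℝ (⊤ : ℕ∞) rfun := by
  have : ContDiff ℝ (⊤ : ℕ∞) fun r : ℝ => smoothTransition (4 * r - 1) :=
    smoothTransition.contDiff.comp (by fun_prop)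
  unfold rfun
  exact (contDiff_id.mul this).add (contDiff_const.sub this)

lemma rfun_pos (r : ℝ) : 0 < rfun r := by
  have h0 := smoothTransition.nonneg (4 * r - 1)
  have h1 := smoothTransition.le_one (4 * r - 1)
  unfold rfun
  rcases le_or_gt r (1 / 4) with h | h
  · rw [smoothTransition.zero_of_nonpos (by linarith)]; norm_num
  · rcases h1.eq_or_lt with h2 | h2
    · rw [h2]; linarith
    · nlinarith

lemma rfun_eq {r : ℝ} (h : 1 / 2 ≤ r) : rfun r = r := by
  unfold rfun; rw [smoothTransition.one_of_one_le (by linarith)]; ring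

/-- The function `1/r`, `r = t + σ`, in the coordinates `(t, σ, θ)` (modified for `r < 1/2`). -/
def cRi : SmoothAlg := comp1 (fun r => (rfun r)⁻¹) (rfun_contDiff.inv fun r => (rfun_pos r).ne')
  (cT + cX)

lemma ev_cRi {t s : ℝ} (h : 1 / 2 ≤ t + s) (y : ℝ) : ev cRi t s y = (t + s)⁻¹ := by
  rw [cRi, ev_comp1]; simp only [ev_add, ev_cT, ev_cX]; rw [rfun_eq h]

lemma hasDerivAt_rfun {r : ℝ} (h : 1 / 2 < r) : HasDerivAt rfun 1 r := by
  refine (hasDerivAt_id r).congr_of_eventuallyEq ?_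
  filter_upwards [lt_mem_nhds h] with s hs using rfun_eq hs.le

lemma d2_cRi : d2 cRi = 0 := ev_ext fun t s y => by
  rw [ev_zero]
  refine ev_d2_eq ?_
  have : (fun y => ev cRi t s y) = fun _ => (rfun (t + s))⁻¹ := by
    funext y; rw [cRi, ev_comp1]; simp
  rw [this]; exact hasDerivAt_const _ _

lemma ev_d0_cRi {t s : ℝ} (h : 1 / 2 < t + s) (y : ℝ) :
    ev (d0 cRi) t s y = -ev cRi t s y ^ 2 := by
  rw [ev_cRi h.le]
  have : (fun t => ev cRi t s y) = fun t => (rfun (t + s))⁻¹ := by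
    funext t; rw [cRi, ev_comp1]; simp
  refine ev_d0_eq ?_
  rw [this]
  have h1 : HasDerivAt (fun t => rfun (t + s)) 1 t :=
    HasDerivAt.comp_add_const t s (hasDerivAt_rfun h)
  have h2 := h1.inv (rfun_pos _).ne'
  refine h2.congr_deriv ?_
  rw [rfun_eq h.le]; field_simp

lemma ev_d1_cRi {t s : ℝ} (h : 1 / 2 < t + s) (y : ℝ) :
    ev (d1 cRi) t s y = -ev cRi t s y ^ 2 := by
  rw [ev_cRi h.le]
  have : (fun s => ev cRi t s y) = fun s => (rfun (t + s))⁻¹ := by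
    funext t; rw [cRi, ev_comp1]; simp
  refine ev_d1_eq ?_
  rw [this]
  have h1 : HasDerivAt (fun s => rfun (t + s)) 1 s :=
    HasDerivAt.comp_const_add t s (hasDerivAt_rfun h)
  have h2 := h1.inv (rfun_pos _).ne'
  refine h2.congr_deriv ?_
  rw [rfun_eq h.le]; field_simp

/-- The derivative `∂ₜ` at a fixed point of the plane, in the coordinates `(t, σ, θ)` with
`σ = r - t`. -/
def PP (f : SmoothAlg) : SmoothAlg := d0 f - d1 f
/-- The incoming derivative `∂ₜ - ∂ᵣ` in the coordinates `(t, σ, θ)`. -/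
def YY (f : SmoothAlg) : SmoothAlg := d0 f - d1 f - d1 f

/-- `Φ` is a solution in the strip region of the linear equation
`∂ₜ(∂ₜ - 2∂_σ)Φ = r⁻²(∂_θ²Φ + Φ/4) + G`, vanishing near `σ = R`. -/
structure Lin (R : ℝ) (G Φ : SmoothAlg) : Prop where
  per : Per Φ
  supp : ∀ t s y, 0 < t → 1 / 2 < t + s → R - 1 < s → ev Φ t s y = 0
  pde : ∀ t s y, 0 < t → 1 / 2 < t + s →
    ev (d0 (YY Φ)) t s y = ev (cRi ^ 2 * (d2 (d2 Φ) + (1 / 4 : ℝ) • Φ) + G) t s y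

/-- The region of definition of the strip coordinates. -/
def stripU : Set (ℝ × ℝ × ℝ) := {p | 0 < p.1 ∧ 1 / 2 < p.1 + p.2.1}
lemma stripU_open : IsOpen stripU :=
  (isOpen_lt continuous_const continuous_fst).inter (isOpen_lt continuous_const (continuous_fst.add (continuous_fst.comp continuous_snd)))

lemma Der_eq_strip {f g : SmoothAlg} (e : ℝ × ℝ × ℝ)
    (h : ∀ t s y, 0 < t → 1 / 2 < t + s → ev f t s y = ev g t s y) :
    ∀ t s y, 0 < t → 1 / 2 < t + s → ev (Der e f) t s y = ev (Der e g) t s y :=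
  fun t s y h1 h2 => Der_eq_of_eqOn stripU_open (fun p hp => h p.1 p.2.1 p.2.2 hp.1 hp.2) e
    (t, s, y) ⟨h1, h2⟩

/-- Functions vanishing near `σ = R`. -/
def SuppR (R : ℝ) (f : SmoothAlg) : Prop :=
  ∀ t s y, 0 < t → 1 / 2 < t + s → R - 1 < s → ev f t s y = 0

lemma SuppR.der {R : ℝ} {f : SmoothAlg} (h : SuppR R f) (e : ℝ × ℝ × ℝ) : SuppR R (Der e f) := by
  intro t s y h1 h2 h3
  have hU : IsOpen {p : ℝ × ℝ × ℝ | p ∈ stripU ∧ R - 1 < p.2.1} :=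
    stripU_open.inter (isOpen_lt continuous_const (continuous_fst.comp continuous_snd))
  have := Der_eq_of_eqOn hU (f := f) (g := 0)
    (fun p hp => h p.1 p.2.1 p.2.2 hp.1.1 hp.1.2 hp.2) e (t, s, y) ⟨⟨h1, h2⟩, h3⟩
  rw [map_zero] at this
  exact this

/-- `∂_θ` commutes with the strip equation, so it maps solutions to solutions. -/
lemma Lin.ang {R : ℝ} {G Φ : SmoothAlg} (h : Lin R G Φ) : Lin R (d2 G) (d2 Φ) where
  per := h.per.der _
  supp := SuppR.der h.supp _
  pde := fun t s y h1 h2 => by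
    have e1 : d0 (YY (d2 Φ)) = d2 (d0 (YY Φ)) := by
      simp only [YY, map_sub, Der_comm (0, 0, 1)]
    rw [e1, Der_eq_strip (0, 0, 1) h.pde t s y h1 h2]
    congr 1
    simp only [map_add, Derivation.leibniz, Derivation.leibniz_pow, Derivation.map_smul, d2_cRi]
    simp

/-- Energy density for the equation in strip coordinates. -/
def ee (Φ : SmoothAlg) : SmoothAlg :=
  (1 / 2 : ℝ) • (YY Φ ^ 2 + d0 Φ ^ 2) + cRi ^ 2 * d2 Φ ^ 2

lemma ee_nn (Φ : SmoothAlg) (t s y : ℝ) : 0 ≤ ev (ee Φ) t s y := by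
  simp only [ee, ev_add, ev_smul, ev_mul, ev_pow]; positivity

lemma PP_sq_le (Φ : SmoothAlg) (t s y : ℝ) : ev (PP Φ) t s y ^ 2 ≤ ev (ee Φ) t s y := by
  simp only [ee, ev_add, ev_smul, ev_mul, ev_pow, PP, YY, ev_sub]
  have : 0 ≤ ev cRi t s y ^ 2 * ev (d2 Φ) t s y ^ 2 := by positivity
  nlinarith [sq_nonneg (ev (d1 Φ) t s y)]

lemma d1_sq_le (Φ : SmoothAlg) (t s y : ℝ) : ev (d1 Φ) t s y ^ 2 ≤ ev (ee Φ) t s y := by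
  simp only [ee, ev_add, ev_smul, ev_mul, ev_pow, YY, ev_sub]
  have : 0 ≤ ev cRi t s y ^ 2 * ev (d2 Φ) t s y ^ 2 := by positivity
  nlinarith [sq_nonneg (ev (d1 Φ) t s y - ev (d0 Φ) t s y)]

/-- Poincaré inequality in the strip. -/
lemma strip_poincare {R a t : ℝ} {Φ : SmoothAlg} (haR : a ≤ R) (hs : SuppR R Φ) (ht : 0 < t)
    (hr : 1 ≤ t + a) : BI a R (-π) π (Φ ^ 2) t ≤ 4 * (R - a) ^ 2 * BI a R (-π) π (d1 Φ ^ 2) t := by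
  have hpi : -π ≤ π := by linarith [pi_pos]
  set k := cX - algebraMap ℝ SmoothAlg a with hk
  have h0 : BI a R (-π) π (d1 (k * Φ ^ 2)) t = 0 := by
    refine BI_d1_eq_zero hpi _ t (fun y => ?_) (fun y => ?_)
    · simp [hk]
    · simp [hs t R y ht (by linarith) (by linarith)]
  have h1 : BI a R (-π) π (Φ ^ 2) t ≤ BI a R (-π) π ((2 : ℝ) • d1 (k * Φ ^ 2)
      + (4 * (R - a) ^ 2) • d1 Φ ^ 2) t := by
    refine BI_mono haR hpi fun x y hx1 hx2 _ _ => ?_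
    have hd : d1 k = 1 := by simp [hk]
    rw [Derivation.leibniz, hd, Derivation.leibniz_pow]
    simp only [ev_add, ev_smul, ev_mul, ev_pow, smul_eq_mul, hk, ev_sub, ev_cX, ev_algebraMap,
      ev_one]
    have : ev (2 • (Φ ^ (2 - 1) * d1 Φ)) t x y = 2 * (ev Φ t x y * ev (d1 Φ) t x y) := by
      rw [nsmul_eq_mul]; simp
    rw [this]
    generalize ev Φ t x y = p
    generalize ev (d1 Φ) t x y = q
    have e1 : (x - a) ^ 2 * q ^ 2 ≤ (R - a) ^ 2 * q ^ 2 := by gcongr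
    nlinarith [sq_nonneg (p + 2 * (x - a) * q)]
  rw [BI_add, BI_smul, BI_smul, h0] at h1
  linarith

/-- Energy inequality in the strip: the flux through `σ = a` has a favourable sign. -/
lemma Lin.energy {R a t : ℝ} {G Φ : SmoothAlg} (h : Lin R G Φ) (haR : a ≤ R) (ht : 0 < t)
    (hr : 1 ≤ t + a) : BI a R (-π) π (d0 (ee Φ)) t ≤
      (1 + 4 * (R - a) ^ 2) / 4 / (t + a) ^ 2 * BI a R (-π) π (ee Φ) t
        + BI a R (-π) π (2 * (PP Φ * G)) t := by
  have hpi : -π ≤ π := by linarith [pi_pos]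
  have hsd : ∀ e, SuppR R (Der e Φ) := fun e => SuppR.der h.supp e
  set A := d0 Φ ^ 2 + cRi ^ 2 * d2 Φ ^ 2 with hA
  set D := 2 * (PP Φ * (cRi ^ 2 * d2 Φ)) with hD
  have hAR : BI a R (-π) π (d1 A) t ≤ 0 := by
    rw [BI_d1]
    have e1 : SI (-π) π A t R = 0 := SI_eq_zero hpi fun y _ _ => by
      simp [hA, hsd _ t R y ht (by linarith) (by linarith)]
    have e2 : 0 ≤ SI (-π) π A t a := SI_nonneg hpi fun y _ _ => by
      simp only [hA, ev_add, ev_pow, ev_mul]; positivity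
    linarith
  have hcRiper : Per cRi := fun t x y => by simp only [cRi, ev_comp1, ev_add, ev_cT, ev_cX]
  have hDR : BI a R (-π) π (d2 D) t = 0 := by
    refine BI_d2_eq_zero _ _ _ _ _ t fun x => ?_
    have q1 : Per (PP Φ) := (h.per.der _).sub (h.per.der _)
    simp only [hD, ev_mul, ev_pow, ev_ofNat, q1.ends, hcRiper.ends, (h.per.der (0, 0, 1)).ends]
  have hid : BI a R (-π) π (d0 (ee Φ)) t = BI a R (-π) π (d1 A + d2 D
      + 2 * (PP Φ * (cRi ^ 2 * (1 / 4 : ℝ) • Φ + G))) t := by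
    refine BI_congr haR hpi fun x y hx1 hx2 _ _ => ?_
    have hx : 1 / 2 < t + x := by linarith
    have hp := h.pde t x y ht hx
    have f1 := ev_d0_cRi hx y
    have f2 := ev_d1_cRi hx y
    simp only [YY, map_sub, ev_sub, ev_add, ev_mul, ev_pow, ev_smul] at hp
    simp only [ee, hA, hD, YY, PP, map_add, map_sub, Derivation.leibniz, Derivation.leibniz_pow,
      Derivation.map_smul, d2_cRi, smul_eq_mul, nsmul_eq_mul, ev_add, ev_sub, ev_mul, ev_pow,
      ev_smul, ev_natCast, ev_ofNat, f1, f2, ev_zero, Der_comm (0, 0, 1) (1, 0, 0) Φ,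
      Der_comm (0, 0, 1) (0, 1, 0) Φ, Der_comm (0, 1, 0) (1, 0, 0) Φ] at hp ⊢
    simp only [Der_comm (1, 0, 0) (0, 1, 0) Φ, Der_comm (1, 0, 0) (0, 0, 1) Φ,
      Der_comm (0, 1, 0) (0, 0, 1) Φ] at hp ⊢
    have : ev (d2 (2 : SmoothAlg)) t x y = 0 := by
      have : (2 : SmoothAlg) = algebraMap ℝ SmoothAlg 2 := (map_ofNat _ 2).symm
      rw [this, Derivation.map_algebraMap, ev_zero]
    rw [this]
    have hp' : ev (d0 (d0 Φ)) t x y = 2 * ev (d1 (d0 Φ)) t x y + (ev cRi t x y ^ 2 *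
      (ev (d2 (d2 Φ)) t x y + 1 / 4 * ev Φ t x y) + ev G t x y) := by
      linarith
    rw [hp']
    push_cast
    ring
  have hlow : BI a R (-π) π (2 * (PP Φ * (cRi ^ 2 * (1 / 4 : ℝ) • Φ))) t ≤
      BI a R (-π) π ((1 / 4 / (t + a) ^ 2) • (ee Φ + Φ ^ 2)) t := by
    refine BI_mono haR hpi fun x y hx1 hx2 _ _ => ?_
    have hx : 1 / 2 ≤ t + x := by linarith
    simp only [ev_mul, ev_smul, ev_pow, ev_add, ev_ofNat]
    have hP := PP_sq_le Φ t x y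
    rw [ev_cRi hx]
    have e1 : ((t + x)⁻¹) ^ 2 ≤ 1 / (t + a) ^ 2 := by
      rw [inv_pow, one_div]
      exact inv_anti₀ (by positivity) (by gcongr)
    generalize ev (PP Φ) t x y = p at *
    generalize ev Φ t x y = q at *
    generalize ev (ee Φ) t x y = E at *
    have e2 : 2 * (p * q) ≤ E + q ^ 2 := by nlinarith [sq_nonneg (p - q)]
    have e3 : 0 ≤ E + q ^ 2 := by nlinarith [sq_nonneg p, sq_nonneg q]
    calc 2 * (p * ((t + x)⁻¹ ^ 2 * (1 / 4 * q))) = (t + x)⁻¹ ^ 2 * (1 / 4 * (2 * (p * q))) := by ring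
      _ ≤ (t + x)⁻¹ ^ 2 * (1 / 4 * (E + q ^ 2)) := by gcongr
      _ ≤ 1 / (t + a) ^ 2 * (1 / 4 * (E + q ^ 2)) := by gcongr
      _ = _ := by ring
  have hpo := strip_poincare haR h.supp ht hr
  have hd1 : BI a R (-π) π (d1 Φ ^ 2) t ≤ BI a R (-π) π (ee Φ) t :=
    BI_mono haR hpi fun x y _ _ _ _ => by rw [ev_pow]; exact d1_sq_le Φ t x y
  have hsplit : (2 : SmoothAlg) * (PP Φ * (cRi ^ 2 * (1 / 4 : ℝ) • Φ + G)) =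
      2 * (PP Φ * (cRi ^ 2 * (1 / 4 : ℝ) • Φ)) + 2 * (PP Φ * G) := by ring
  rw [hid, hsplit, BI_add, BI_add, BI_add, hDR]
  rw [BI_smul, BI_add] at hlow
  have hc : 0 ≤ 1 / 4 / (t + a) ^ 2 := by positivity
  have h6 := mul_le_mul_of_nonneg_left (hpo.trans
    (mul_le_mul_of_nonneg_left hd1 (by positivity : 0 ≤ 4 * (R - a) ^ 2))) hc
  have h7 : (1 + 4 * (R - a) ^ 2) / 4 / (t + a) ^ 2 * BI a R (-π) π (ee Φ) t =
    1 / 4 / (t + a) ^ 2 * BI a R (-π) π (ee Φ) t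
      + 1 / 4 / (t + a) ^ 2 * (4 * (R - a) ^ 2 * BI a R (-π) π (ee Φ) t) := by ring
  rw [h7]
  linarith

/-! ### Energies in the strip -/

/-- The cubic forcing term in strip coordinates. -/
def Gc (lam : ℝ) (φ ψ : SmoothAlg) : SmoothAlg := (-lam) • (cRi * (PP ψ ^ 2 * PP φ))

lemma Per.pp {f : SmoothAlg} (h : Per f) : Per (PP f) := (h.der _).sub (h.der _)
lemma Per.yy {f : SmoothAlg} (h : Per f) : Per (YY f) := ((h.der _).sub (h.der _)).sub (h.der _)

lemma dd3_PP (f : SmoothAlg) : dd3 (PP f) = PP (dd3 f) := by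
  simp only [dd3, PP, map_sub, Der_comm (1, 0, 0) (0, 0, 1), Der_comm (0, 1, 0) (0, 0, 1)]

lemma dd3_cRi_mul (f : SmoothAlg) : dd3 (cRi * f) = cRi * dd3 f := by
  have h : ∀ g : SmoothAlg, d2 (cRi * g) = cRi * d2 g := fun g => by
    rw [Derivation.leibniz, d2_cRi, smul_eq_mul, smul_zero, add_zero]
  simp only [dd3, h]

/-- Three angular derivatives commuted through the cubic equation. -/
lemma Lin.dd3 {lam R : ℝ} {φ ψ : SmoothAlg} (h : Lin R (Gc lam φ ψ) φ) :
    Lin R ((-lam) • (cRi * dd3 (PP ψ ^ 2 * PP φ))) (dd3 φ) := by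
  have := h.ang.ang.ang
  rw [← dd3_cRi_mul, ← dd3_smul]
  exact this

/-- Total energy density of a pair. -/
def etot (φ ψ : SmoothAlg) : SmoothAlg := ee φ + ee (dd3 φ) + (ee ψ + ee (dd3 ψ))

/-- Work of a forcing `-λ H / r` against `PΦ`, split by Young's inequality with the weight `B²` that
balances `H` of size `B²` times an energy. -/
lemma cubic_work {lam R a t B : ℝ} (hlam : 0 ≤ lam) (hB : 0 < B) (haR : a ≤ R) (hr : 1 ≤ t + a)
    (Φ H : SmoothAlg) : BI a R (-π) π (2 * (PP Φ * ((-lam) • (cRi * H)))) t ≤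
      lam / (t + a) * (B ^ 2 * BI a R (-π) π (ee Φ) t + (B ^ 2)⁻¹ * BI a R (-π) π (H ^ 2) t) := by
  rw [← BI_smul, ← BI_smul, ← BI_add, ← BI_smul]
  refine BI_mono haR (by linarith [pi_pos]) fun x y hx1 hx2 _ _ => ?_
  have hP := PP_sq_le Φ t x y
  simp only [ev_mul, ev_smul, ev_pow, ev_add, ev_ofNat]
  rw [ev_cRi (by linarith)]
  have e1 : (t + x)⁻¹ ≤ (t + a)⁻¹ := inv_anti₀ (by linarith) (by linarith)
  have e0 : 0 ≤ (t + x)⁻¹ := inv_nonneg.2 (by linarith)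
  generalize ev (PP Φ) t x y = p at *
  generalize ev H t x y = q at *
  generalize ev (ee Φ) t x y = E at *
  have e2 : -(2 * (p * q)) ≤ B ^ 2 * p ^ 2 + (B ^ 2)⁻¹ * q ^ 2 := by
    have : B ^ 2 * p ^ 2 + (B ^ 2)⁻¹ * q ^ 2 + 2 * (p * q) = (B ^ 2)⁻¹ * (B ^ 2 * p + q) ^ 2 := by
      field_simp; ring
    have : 0 ≤ (B ^ 2)⁻¹ * (B ^ 2 * p + q) ^ 2 := by positivity
    linarith
  have e3 : B ^ 2 * p ^ 2 ≤ B ^ 2 * E := by gcongr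
  have e4 : 0 ≤ B ^ 2 * E + (B ^ 2)⁻¹ * q ^ 2 := by
    have : 0 ≤ E := (sq_nonneg p).trans hP
    positivity
  calc 2 * (p * (-lam * ((t + x)⁻¹ * q))) = lam * (t + x)⁻¹ * -(2 * (p * q)) := by ring
    _ ≤ lam * (t + x)⁻¹ * (B ^ 2 * E + (B ^ 2)⁻¹ * q ^ 2) := by gcongr; linarith
    _ ≤ lam * (t + a)⁻¹ * (B ^ 2 * E + (B ^ 2)⁻¹ * q ^ 2) := by gcongr
    _ = _ := by rw [div_eq_mul_inv]

lemma BI_dd3_cubic {R a B t : ℝ} {φ ψ : SmoothAlg} (hφ : Per φ) (hψ : Per ψ) (haR : a ≤ R)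
    (hB : ∀ x y, a ≤ x → x ≤ R → -π ≤ y → y ≤ π →
      ev (PP φ) t x y ^ 2 + ev (PP ψ) t x y ^ 2 ≤ B ^ 2) :
    BI a R (-π) π (dd3 (PP ψ ^ 2 * PP φ) ^ 2) t ≤
      10470 * B ^ 4 * (BI a R (-π) π (ee (dd3 φ)) t + BI a R (-π) π (ee (dd3 ψ)) t) := by
  have hpi : -π ≤ π := by linarith [pi_pos]
  have hf : ∀ f : SmoothAlg, BI a R (-π) π (dd3 (PP f) ^ 2) t ≤ BI a R (-π) π (ee (dd3 f)) t :=
    fun f => BI_mono haR hpi fun x y _ _ _ _ => by rw [dd3_PP, ev_pow]; exact PP_sq_le _ t x y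
  have h1 : BI a R (-π) π (dd3 (PP ψ ^ 2 * PP φ) ^ 2) t ≤
      BI a R (-π) π ((10470 * B ^ 4) • (dd3 (PP φ) ^ 2 + dd3 (PP ψ) ^ 2)) t := by
    refine intervalIntegral.integral_mono_on haR (Continuous.intervalIntegrable (by fun_prop) _ _)
      (Continuous.intervalIntegrable (by fun_prop) _ _) fun x hx => ?_
    rw [SI_smul, SI_add]
    exact SI_dd3_cubic hφ.pp hψ.pp fun y h1 h2 => hB x y hx.1 hx.2 h1 h2
  rw [BI_smul, BI_add] at h1
  refine h1.trans (mul_le_mul_of_nonneg_left (add_le_add (hf φ) (hf ψ)) (by positivity))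

/-- Where `Pφ` and `Pψ` are bounded by `B`, the cubic term costs `B⁴` times the energy. -/
lemma BI_cubic {R a B t : ℝ} {φ ψ : SmoothAlg} (haR : a ≤ R)
    (hB : ∀ x y, a ≤ x → x ≤ R → -π ≤ y → y ≤ π →
      ev (PP φ) t x y ^ 2 + ev (PP ψ) t x y ^ 2 ≤ B ^ 2) :
    BI a R (-π) π ((PP ψ ^ 2 * PP φ) ^ 2) t ≤ B ^ 4 * BI a R (-π) π (ee φ) t := by
  rw [← BI_smul]
  refine BI_mono haR (by linarith [pi_pos]) fun x y h1 h2 h3 h4 => ?_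
  have h := hB x y h1 h2 h3 h4
  have hP := PP_sq_le φ t x y
  simp only [ev_mul, ev_smul, ev_pow]
  generalize ev (PP φ) t x y = p at *
  generalize ev (PP ψ) t x y = q at *
  have e1 : q ^ 2 ≤ B ^ 2 := by nlinarith [sq_nonneg p]
  calc (q ^ 2 * p) ^ 2 = (q ^ 2) ^ 2 * p ^ 2 := by ring
    _ ≤ (B ^ 2) ^ 2 * ev (ee φ) t x y := by gcongr
    _ = _ := by ring

/-- Energy growth inequality for a pair, under a pointwise bound on the outgoing derivatives. -/
lemma BI_d0_etot_le {lam R a t B : ℝ} {φ ψ : SmoothAlg} (hφ : Lin R (Gc lam φ ψ) φ)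
    (hψ : Lin R (Gc lam ψ φ) ψ) (hlam : 0 ≤ lam) (hB0 : 0 < B) (haR : a ≤ R) (ht : 0 < t)
    (hr : 1 ≤ t + a) (hB : ∀ x y, a ≤ x → x ≤ R → -π ≤ y → y ≤ π →
      ev (PP φ) t x y ^ 2 + ev (PP ψ) t x y ^ 2 ≤ B ^ 2) :
    BI a R (-π) π (d0 (etot φ ψ)) t ≤ ((1 + 4 * (R - a) ^ 2) / 4 / (t + a) ^ 2
      + 20941 * (lam * B ^ 2) / (t + a)) * BI a R (-π) π (etot φ ψ) t := by
  have hpi : -π ≤ π := by linarith [pi_pos]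
  have hB' : ∀ x y, a ≤ x → x ≤ R → -π ≤ y → y ≤ π →
      ev (PP ψ) t x y ^ 2 + ev (PP φ) t x y ^ 2 ≤ B ^ 2 := fun x y h1 h2 h3 h4 => by
    rw [add_comm]; exact hB x y h1 h2 h3 h4
  have e1 := hφ.energy haR ht hr
  have e2 := hψ.energy haR ht hr
  have e3 := hφ.dd3.energy haR ht hr
  have e4 := hψ.dd3.energy haR ht hr
  have w1 := cubic_work hlam hB0 haR hr φ (PP ψ ^ 2 * PP φ)
  have w2 := cubic_work hlam hB0 haR hr ψ (PP φ ^ 2 * PP ψ)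
  have w3 := cubic_work hlam hB0 haR hr (dd3 φ) (dd3 (PP ψ ^ 2 * PP φ))
  have w4 := cubic_work hlam hB0 haR hr (dd3 ψ) (dd3 (PP φ ^ 2 * PP ψ))
  have c1 := BI_cubic haR hB
  have c2 := BI_cubic haR hB'
  have c3 := BI_dd3_cubic hφ.per hψ.per haR hB
  have c4 := BI_dd3_cubic hψ.per hφ.per haR hB'
  have nn : ∀ f, 0 ≤ BI a R (-π) π (ee f) t := fun f =>
    BI_nonneg haR hpi fun x y _ _ _ _ => ee_nn f t x y
  have n1 := nn φ; have n2 := nn ψ; have n3 := nn (dd3 φ); have n4 := nn (dd3 ψ)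
  simp only [Gc] at e1 e2
  simp only [etot, map_add, BI_add]
  generalize BI a R (-π) π (ee φ) t = E1 at *
  generalize BI a R (-π) π (ee ψ) t = E2 at *
  generalize BI a R (-π) π (ee (dd3 φ)) t = E3 at *
  generalize BI a R (-π) π (ee (dd3 ψ)) t = E4 at *
  have hi : 0 ≤ (B ^ 2)⁻¹ := by positivity
  have hBB : (B ^ 2)⁻¹ * B ^ 4 = B ^ 2 := by field_simp
  have d1 := mul_le_mul_of_nonneg_left c1 hi
  have d2 := mul_le_mul_of_nonneg_left c2 hi
  have d3 := mul_le_mul_of_nonneg_left c3 hi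
  have d4 := mul_le_mul_of_nonneg_left c4 hi
  rw [← mul_assoc, hBB] at d1 d2
  rw [mul_comm (10470 : ℝ) (B ^ 4), mul_assoc, ← mul_assoc _ (B ^ 4), hBB] at d3 d4
  have hl : 0 ≤ lam / (t + a) := div_nonneg hlam (by linarith)
  have hl2 : 0 ≤ lam / (t + a) * B ^ 2 := by positivity
  have m : lam / (t + a) * (B ^ 2 * E1 + B ^ 2 * E1)
      + lam / (t + a) * (B ^ 2 * E2 + B ^ 2 * E2)
      + lam / (t + a) * (B ^ 2 * E3 + B ^ 2 * (10470 * (E3 + E4)))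
      + lam / (t + a) * (B ^ 2 * E4 + B ^ 2 * (10470 * (E4 + E3)))
      ≤ 20941 * (lam * B ^ 2) / (t + a) * (E1 + E3 + (E2 + E4)) := by
    have : 20941 * (lam * B ^ 2) / (t + a) * (E1 + E3 + (E2 + E4))
      = lam / (t + a) * B ^ 2 * (20941 * (E1 + E3 + (E2 + E4))) := by ring
    rw [this]
    have : lam / (t + a) * B ^ 2 * (2 * E1 + 2 * E2 + 20941 * E3 + 20941 * E4) ≤
      lam / (t + a) * B ^ 2 * (20941 * (E1 + E3 + (E2 + E4))) := by
      refine mul_le_mul_of_nonneg_left ?_ hl2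
      linarith
    linarith
  have m1 := mul_le_mul_of_nonneg_left (add_le_add_right d1 (B ^ 2 * E1)) hl
  have m2 := mul_le_mul_of_nonneg_left (add_le_add_right d2 (B ^ 2 * E2)) hl
  have m3 := mul_le_mul_of_nonneg_left (add_le_add_right d3 (B ^ 2 * E3)) hl
  have m4 := mul_le_mul_of_nonneg_left (add_le_add_right d4 (B ^ 2 * E4)) hl
  rw [add_mul]
  linarith

lemma hasDerivAt_growth_weight (a c t : ℝ) (h : 0 < t + a) :
    HasDerivAt (fun t => exp (c / (t + a)) / (t + a))
      (-(exp (c / (t + a)) / (t + a)) * (c / (t + a) ^ 2 + 1 / (t + a))) t := by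
  have h1 : HasDerivAt (fun t => t + a) 1 t := (hasDerivAt_id t).add_const a
  have h2 := ((h1.inv h.ne').const_mul c).exp.div h1 h.ne'
  refine (h2.congr_deriv ?_).congr_of_eventuallyEq (Eventually.of_forall fun s => ?_)
  · simp only [div_eq_mul_inv, Pi.inv_apply]
    field_simp
    ring
  · simp [div_eq_mul_inv]

/-- Grönwall inequality with rate `c / r² + 1 / r`. -/
lemma growth_gronwall {F F' : ℝ → ℝ} {a c t0 T : ℝ} (h0 : t0 + a = 1) (hc : 0 ≤ c)
    (hF : ∀ t, HasDerivAt F (F' t) t) (hFn : ∀ t, 0 ≤ F t)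
    (h : ∀ t, t0 ≤ t → t ≤ T → F' t ≤ (c / (t + a) ^ 2 + 1 / (t + a)) * F t) (hT : t0 ≤ T) :
    F T ≤ F t0 * exp c * (T + a) := by
  have hmono : AntitoneOn (fun t => F t * (exp (c / (t + a)) / (t + a))) (Set.Icc t0 T) := by
    have hd : ∀ t ∈ Set.Icc t0 T, HasDerivAt (fun t => F t * (exp (c / (t + a)) / (t + a)))
        _ t := fun t ht =>
      (hF t).mul (hasDerivAt_growth_weight a c t (by linarith [ht.1]))
    refine antitoneOn_of_deriv_nonpos (convex_Icc _ _)
      (fun t ht => (hd t ht).continuousAt.continuousWithinAt)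
      (fun t ht => (hd t (interior_subset ht)).differentiableAt.differentiableWithinAt)
      fun t ht => ?_
    have ht := interior_subset ht
    rw [(hd t ht).deriv]
    have hp : 0 < t + a := by linarith [ht.1]
    have hw : 0 ≤ exp (c / (t + a)) / (t + a) := by positivity
    nlinarith [mul_le_mul_of_nonneg_right (h t ht.1 ht.2) hw]
  have := hmono ⟨le_rfl, hT⟩ ⟨hT, le_rfl⟩ hT
  simp only [h0, div_one] at this
  have hp : 0 < T + a := by linarith
  have h1 : 1 ≤ exp (c / (T + a)) := one_le_exp (by positivity)
  calc F T = F T * (1 / (T + a)) * (T + a) := by field_simp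
    _ ≤ F T * (exp (c / (T + a)) / (T + a)) * (T + a) := by
        have := hFn T
        gcongr
    _ ≤ _ := by gcongr

/-- Sobolev inequality in the strip. -/
lemma strip_sobolev {R a t : ℝ} {φ : SmoothAlg} (hper : Per φ) (hs : SuppR R φ) (ht : 0 < t)
    (hr : 1 ≤ t + a) {x y : ℝ} (hx1 : a ≤ x) (hx2 : x ≤ R) (hy1 : -π ≤ y) (hy2 : y ≤ π)
    {E : ℝ} (hE : BI a R (-π) π (ee φ + ee (dd3 φ)) t ≤ E) :
    ev φ t x y ^ 2 ≤ (R - a) * sobC (2 * π) * E ∧ ev (d2 φ) t x y ^ 2 ≤ (R - a) * sobC (2 * π) * E ∧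
      ev (d2 (d2 φ)) t x y ^ 2 ≤ (R - a) * sobC (2 * π) * E := by
  have hpi : -π < π := by linarith [pi_pos]
  have haR : a ≤ R := hx1.trans hx2
  have hC : 0 ≤ sobC (2 * π) := by unfold sobC; positivity
  have hcirc : ∀ s, ev (d1 φ) t s y ^ 2 ≤ sobC (2 * π) * SI (-π) π (ee φ + ee (dd3 φ)) t s ∧
      ev (d1 (d2 φ)) t s y ^ 2 ≤ sobC (2 * π) * SI (-π) π (ee φ + ee (dd3 φ)) t s ∧
      ev (d1 (d2 (d2 φ))) t s y ^ 2 ≤ sobC (2 * π) * SI (-π) π (ee φ + ee (dd3 φ)) t s := by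
    intro s
    have := circle_sobolev hpi (fun y => ev_hasDerivAt_2 (d1 φ) t s y)
      (fun y => ev_hasDerivAt_2 (d2 (d1 φ)) t s y)
      (fun y => ev_hasDerivAt_2 (d2 (d2 (d1 φ))) t s y) (by fun_prop)
      ((hper.der _).ends t s) (((hper.der _).der _).ends t s) hy1 hy2
    rw [show π - -π = 2 * π by ring] at this
    have i1 : (∫ s' in (-π)..π, ev (d1 φ) t s s' ^ 2)
        + ∫ s' in (-π)..π, ev (d2 (d2 (d2 (d1 φ)))) t s s' ^ 2
        ≤ SI (-π) π (ee φ + ee (dd3 φ)) t s := by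
      rw [SI_add]
      refine add_le_add ?_ ?_
      · exact intervalIntegral.integral_mono_on hpi.le
          (Continuous.intervalIntegrable (by fun_prop) _ _)
          (Continuous.intervalIntegrable (by fun_prop) _ _) fun z _ => d1_sq_le φ t s z
      · refine intervalIntegral.integral_mono_on hpi.le
          (Continuous.intervalIntegrable (by fun_prop) _ _)
          (Continuous.intervalIntegrable (by fun_prop) _ _) fun z _ => ?_
        have : d2 (d2 (d2 (d1 φ))) = d1 (dd3 φ) := by
          simp only [dd3, Der_comm (0, 1, 0) (0, 0, 1)]
        rw [this]
        exact d1_sq_le (dd3 φ) t s z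
    have c1 : d1 (d2 φ) = d2 (d1 φ) := Der_comm _ _ _
    have c2 : d1 (d2 (d2 φ)) = d2 (d2 (d1 φ)) := by rw [Der_comm (0, 1, 0), c1]
    rw [c1, c2]
    have i2 := mul_le_mul_of_nonneg_left i1 hC
    exact ⟨this.1.trans i2, this.2.1.trans i2, this.2.2.trans i2⟩
  have main : ∀ f : SmoothAlg, SuppR R f →
      (∀ s, ev (d1 f) t s y ^ 2 ≤ sobC (2 * π) * SI (-π) π (ee φ + ee (dd3 φ)) t s) →
      ev f t x y ^ 2 ≤ (R - a) * sobC (2 * π) * E := by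
    intro f hf hle
    have h1 := sub_sq_le (fun s => ev_hasDerivAt_1 f t s y) (by fun_prop) hx1 hx2 haR le_rfl
    rw [hf t R y ht (by linarith) (by linarith), sub_zero] at h1
    have h2 : ∫ s in a..R, ev (d1 f) t s y ^ 2 ≤
        ∫ s in a..R, sobC (2 * π) * SI (-π) π (ee φ + ee (dd3 φ)) t s :=
      intervalIntegral.integral_mono_on haR (Continuous.intervalIntegrable (by fun_prop) _ _)
        (Continuous.intervalIntegrable (by fun_prop) _ _) fun s _ => hle s
    rw [intervalIntegral.integral_const_mul] at h2
    have h3 : ∫ s in a..R, SI (-π) π (ee φ + ee (dd3 φ)) t s ≤ E := hE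
    have hRa : 0 ≤ R - a := by linarith
    calc _ ≤ _ := h1
      _ ≤ (R - a) * (sobC (2 * π) * E) := by
        gcongr; exact h2.trans (mul_le_mul_of_nonneg_left h3 hC)
      _ = _ := by ring
  exact ⟨main φ hs fun s => (hcirc s).1, main _ (SuppR.der hs _) fun s => (hcirc s).2.1,
    main _ (SuppR.der (SuppR.der hs _) _) fun s => (hcirc s).2.2⟩

/-! ### Bootstrap in the strip -/

section Bootstrap

lemma abs_sub_le_of_deriv {g g' : ℝ → ℝ} {a b M : ℝ} (hab : a ≤ b)
    (hg : ∀ s, a ≤ s → s ≤ b → HasDerivAt g (g' s) s) (h : ∀ s, a ≤ s → s ≤ b → |g' s| ≤ M) :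
    |g b - g a| ≤ M * (b - a) := by
  have := (convex_Icc a b).norm_image_sub_le_of_norm_hasDerivWithin_le
    (fun s hs => (hg s hs.1 hs.2).hasDerivWithinAt) (fun s hs => h s hs.1 hs.2)
    (Set.left_mem_Icc.2 hab) (Set.right_mem_Icc.2 hab)
  simpa [Real.norm_eq_abs, abs_of_nonneg (sub_nonneg.2 hab)] using this

/-- Continuity argument: a strict bound that improves itself persists for all times. -/
lemma bootstrap {a R c d T0 M : ℝ} (f : SmoothAlg)
    (h0 : ∀ x y, a ≤ x → x ≤ R → c ≤ y → y ≤ d → ev f T0 x y < M)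
    (hstep : ∀ T, T0 ≤ T → (∀ t, T0 ≤ t → t ≤ T → ∀ x y, a ≤ x → x ≤ R → c ≤ y → y ≤ d →
      ev f t x y ≤ M) → ∀ x y, a ≤ x → x ≤ R → c ≤ y → y ≤ d → ev f T x y < M) :
    ∀ t, T0 ≤ t → ∀ x y, a ≤ x → x ≤ R → c ≤ y → y ≤ d → ev f t x y < M := by
  by_contra! hcon
  obtain ⟨t1, ht1, x1, y1, hx1, hx2, hy1, hy2, hM⟩ := hcon
  set K : Set (ℝ × ℝ × ℝ) := Set.Icc T0 t1 ×ˢ (Set.Icc a R ×ˢ Set.Icc c d) with hK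
  have hKc : IsCompact K := isCompact_Icc.prod (isCompact_Icc.prod isCompact_Icc)
  have hbad : IsCompact (K ∩ {p | M ≤ ev f p.1 p.2.1 p.2.2}) :=
    hKc.inter_right (isClosed_le continuous_const (ev_continuous f))
  obtain ⟨p, ⟨hpK, hpM⟩, hmin⟩ := hbad.exists_isMinOn
    ⟨(t1, x1, y1), ⟨⟨ht1, le_rfl⟩, ⟨hx1, hx2⟩, hy1, hy2⟩, hM⟩ continuous_fst.continuousOn
  obtain ⟨⟨hp1, hp1'⟩, ⟨hp2, hp2'⟩, hp3, hp3'⟩ := hpK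
  have hlt : ∀ t, T0 ≤ t → t < p.1 → ∀ x y, a ≤ x → x ≤ R → c ≤ y → y ≤ d → ev f t x y < M := by
    intro t ht htp x y h1 h2 h3 h4
    by_contra! hc
    have : p.1 ≤ t :=
      hmin (a := (t, x, y)) ⟨⟨⟨ht, htp.le.trans hp1'⟩, ⟨h1, h2⟩, h3, h4⟩, hc⟩
    linarith
  have hp0 : T0 < p.1 := by
    refine lt_of_le_of_ne hp1 fun he => ?_
    have h := h0 p.2.1 p.2.2 hp2 hp2' hp3 hp3'
    rw [he] at h
    exact absurd hpM (not_le.2 h)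
  refine absurd hpM (not_le.2 (hstep p.1 hp1 (fun t ht htp x y h1 h2 h3 h4 => ?_) _ _ hp2 hp2' hp3 hp3'))
  rcases htp.lt_or_eq with h | h
  · exact (hlt t ht h x y h1 h2 h3 h4).le
  · have ht : Tendsto (fun s => ev f s x y) (𝓝[<] p.1) (𝓝 (ev f p.1 x y)) :=
      (Continuous.tendsto (by fun_prop) p.1).mono_left nhdsWithin_le_nhds
    rw [h]
    refine le_of_tendsto ht ?_
    filter_upwards [Ioo_mem_nhdsLT hp0] with s hs using (hlt s hs.1.le hs.2 x y h1 h2 h3 h4).le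

/-- A pair of solutions of the system in strip coordinates with data of size `N` at time `1 - a`. -/
structure Strip (a R N lam : ℝ) (φ ψ : SmoothAlg) : Prop where
  ha : a ≤ -1
  haR : a + 1 ≤ R
  hN : 0 ≤ N
  hlam : 0 ≤ lam
  eq1 : Lin R (Gc lam φ ψ) φ
  eq2 : Lin R (Gc lam ψ φ) ψ
  hE : BI a R (-π) π (etot φ ψ) (1 - a) ≤ N
  hL1 : ∀ x y, a ≤ x → x ≤ R → -π ≤ y → y ≤ π → |ev (d0 φ) (1 - a) x y| ≤ N
  hL2 : ∀ x y, a ≤ x → x ≤ R → -π ≤ y → y ≤ π → |ev (d0 ψ) (1 - a) x y| ≤ N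
  hY1 : ∀ x y, a ≤ x → x ≤ R → -π ≤ y → y ≤ π → |ev (YY φ) (1 - a) x y| ≤ N
  hY2 : ∀ x y, a ≤ x → x ≤ R → -π ≤ y → y ≤ π → |ev (YY ψ) (1 - a) x y| ≤ N

lemma etot_comm (φ ψ : SmoothAlg) : etot φ ψ = etot ψ φ := add_comm _ _

lemma Strip.symm {a R N lam : ℝ} {φ ψ : SmoothAlg} (h : Strip a R N lam φ ψ) :
    Strip a R N lam ψ φ :=
  ⟨h.ha, h.haR, h.hN, h.hlam, h.eq2, h.eq1, etot_comm φ ψ ▸ h.hE, h.hL2, h.hL1, h.hY2, h.hY1⟩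

/-- Bound for `φ / √r` and its angular derivatives. -/
def kap (a R N : ℝ) : ℝ :=
  √((R - a) * sobC (2 * π) * (N * exp ((1 + 4 * (R - a) ^ 2) / 4)))

/-- Bound for `r ∂ₜφ` in strip coordinates. -/
def cLam (a R N : ℝ) : ℝ :=
  (1 + (R - a) / 2) * ((5 / 4 * kap a R N + 1) * ((R - a) / 2) + N)

/-- Bound for the incoming derivative. -/
def cY' (a R N : ℝ) : ℝ := √((1 + N ^ 2) * exp (2 * (5 / 4 * kap a R N + cLam a R N)))

/-- Bound used in the continuity argument. -/
def cB (a R N : ℝ) : ℝ := cY' a R N + cLam a R N + N + 1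

lemma kap_nn (a R N : ℝ) : 0 ≤ kap a R N := sqrt_nonneg _
lemma cLam_nn {a R N : ℝ} (haR : a + 1 ≤ R) (hN : 0 ≤ N) : 0 ≤ cLam a R N := by
  have := kap_nn a R N
  have : 0 ≤ (R - a) / 2 := by linarith
  unfold cLam; positivity
lemma cY'_ge {a R N : ℝ} (haR : a + 1 ≤ R) (hN : 0 ≤ N) : N ≤ cY' a R N := by
  have h1 := kap_nn a R N
  have h2 := cLam_nn haR hN
  refine le_sqrt_of_sq_le ?_
  have : 1 ≤ exp (2 * (5 / 4 * kap a R N + cLam a R N)) := one_le_exp (by positivity)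
  nlinarith [sq_nonneg N]
lemma cB_pos {a R N : ℝ} (haR : a + 1 ≤ R) (hN : 0 ≤ N) : 0 < cB a R N := by
  have h1 := cY'_ge haR hN
  have h2 := cLam_nn haR hN
  unfold cB; linarith

/-- The bound on `Pφ`, `Pψ` assumed up to time `T` in the continuity argument. -/
def PBound (a R N T : ℝ) (φ ψ : SmoothAlg) : Prop :=
  ∀ t, 1 - a ≤ t → t ≤ T → ∀ x y, a ≤ x → x ≤ R → -π ≤ y → y ≤ π →
    ev (PP φ) t x y ^ 2 + ev (PP ψ) t x y ^ 2 ≤ cB a R N ^ 2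

lemma PBound.symm {a R N T : ℝ} {φ ψ : SmoothAlg} (h : PBound a R N T φ ψ) :
    PBound a R N T ψ φ := fun t h1 h2 x y h3 h4 h5 h6 => by
  rw [add_comm]; exact h t h1 h2 x y h3 h4 h5 h6

variable {a R N lam T : ℝ} {φ ψ : SmoothAlg}

/-- The total energy in the strip grows at most linearly in `r`: the linear forcing contributes an
integrable rate `c / r²`, and smallness of `λ B²` keeps the rate of the cubic terms below `1 / r`. -/
lemma Strip.energy_le (h : Strip a R N lam φ ψ) (hT : 1 - a ≤ T) (hP : PBound a R N T φ ψ)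
    (hl : 20941 * (lam * cB a R N ^ 2) ≤ 1) :
    BI a R (-π) π (etot φ ψ) T ≤ N * exp ((1 + 4 * (R - a) ^ 2) / 4) * (T + a) := by
  have haR : a ≤ R := by linarith [h.haR]
  have ha := h.ha
  have := growth_gronwall (F := BI a R (-π) π (etot φ ψ)) (F' := BI a R (-π) π (d0 (etot φ ψ)))
    (a := a) (c := (1 + 4 * (R - a) ^ 2) / 4) (t0 := 1 - a) (T := T) (by ring) (by positivity)
    (fun t => BI_hasDerivAt _ _ _ _ _ t)
    (fun t => BI_nonneg haR (by linarith [pi_pos]) fun x y _ _ _ _ => by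
      have := ee_nn φ t x y; have := ee_nn ψ t x y
      have := ee_nn (dd3 φ) t x y; have := ee_nn (dd3 ψ) t x y
      simp only [etot, ev_add]; positivity)
    (fun t ht1 ht2 => by
      refine (BI_d0_etot_le h.eq1 h.eq2 h.hlam (cB_pos h.haR h.hN) haR (by linarith)
        (by linarith) (hP t ht1 ht2)).trans ?_
      have hn : 0 ≤ BI a R (-π) π (etot φ ψ) t :=
        BI_nonneg haR (by linarith [pi_pos]) fun x y _ _ _ _ => by
          have := ee_nn φ t x y; have := ee_nn ψ t x y
          have := ee_nn (dd3 φ) t x y; have := ee_nn (dd3 ψ) t x y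
          simp only [etot, ev_add]; positivity
      have : 0 ≤ t + a := by linarith
      gcongr) hT
  refine this.trans ?_
  have := h.hE
  have : 0 ≤ T + a := by linarith
  gcongr

/-- Pointwise bounds from the energy bound, by the Sobolev inequality in the strip; the third angular
derivative in the energy is what reaches `∂_θ²φ`. -/
lemma Strip.phi_le (h : Strip a R N lam φ ψ) (hT : 1 - a ≤ T) (hP : PBound a R N T φ ψ)
    (hl : 20941 * (lam * cB a R N ^ 2) ≤ 1) {x y : ℝ} (hx1 : a ≤ x) (hx2 : x ≤ R)
    (hy1 : -π ≤ y) (hy2 : y ≤ π) :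
    |ev φ T x y| ≤ kap a R N * √(T + a) ∧ |ev (d2 φ) T x y| ≤ kap a R N * √(T + a) ∧
      |ev (d2 (d2 φ)) T x y| ≤ kap a R N * √(T + a) := by
  have haR : a ≤ R := by linarith [h.haR]
  have ha := h.ha
  have hE : BI a R (-π) π (ee φ + ee (dd3 φ)) T ≤
      N * exp ((1 + 4 * (R - a) ^ 2) / 4) * (T + a) := by
    refine le_trans ?_ (h.energy_le hT hP hl)
    refine BI_mono haR (by linarith [pi_pos]) fun x y _ _ _ _ => ?_
    have := ee_nn ψ T x y; have := ee_nn (dd3 ψ) T x y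
    simp only [etot, ev_add]; linarith
  have := strip_sobolev h.eq1.per h.eq1.supp (by linarith) (by linarith) hx1 hx2 hy1 hy2 hE
  have e : (R - a) * sobC (2 * π) * (N * exp ((1 + 4 * (R - a) ^ 2) / 4) * (T + a)) =
      (R - a) * sobC (2 * π) * (N * exp ((1 + 4 * (R - a) ^ 2) / 4)) * (T + a) := by ring
  have hn : 0 ≤ (R - a) * sobC (2 * π) * (N * exp ((1 + 4 * (R - a) ^ 2) / 4)) := by
    have := h.hN; have : 0 ≤ R - a := by linarith
    unfold sobC; positivity
  have hs : √((R - a) * sobC (2 * π) * (N * exp ((1 + 4 * (R - a) ^ 2) / 4)) * (T + a)) =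
      kap a R N * √(T + a) := by rw [sqrt_mul hn]; rfl
  rw [e] at this
  exact ⟨hs ▸ abs_le_sqrt this.1, hs ▸ abs_le_sqrt this.2.1, hs ▸ abs_le_sqrt this.2.2⟩

/-- The linear part of the forcing in strip coordinates. -/
def Sf (φ : SmoothAlg) : SmoothAlg := cRi ^ 2 * (d2 (d2 φ) + (1 / 4 : ℝ) • φ)

/-- The linear forcing is integrable in time, being `r⁻²` times a quantity of size `√r`. -/
lemma Strip.S_le (h : Strip a R N lam φ ψ) (hT : 1 - a ≤ T) (hP : PBound a R N T φ ψ)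
    (hl : 20941 * (lam * cB a R N ^ 2) ≤ 1) {x y : ℝ} (hx1 : a ≤ x) (hx2 : x ≤ R)
    (hy1 : -π ≤ y) (hy2 : y ≤ π) :
    |ev (Sf φ) T x y| ≤ 5 / 4 * kap a R N / ((T + a) * √(T + a)) := by
  obtain ⟨b0, -, b2⟩ := h.phi_le hT hP hl hx1 hx2 hy1 hy2
  have hr : 1 ≤ T + a := by linarith
  simp only [Sf, ev_mul, ev_pow, ev_add, ev_smul]
  rw [ev_cRi (by linarith), abs_mul, abs_of_nonneg (by positivity)]
  have h1 : |ev (d2 (d2 φ)) T x y + 1 / 4 * ev φ T x y| ≤ 5 / 4 * (kap a R N * √(T + a)) := by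
    refine (abs_add_le _ _).trans ?_
    rw [abs_mul, abs_of_pos (by norm_num : (0 : ℝ) < 1 / 4)]
    linarith
  have h2 : ((T + x)⁻¹) ^ 2 ≤ ((T + a)⁻¹) ^ 2 := by
    have : 0 < T + x := by linarith
    gcongr
  have hs : √(T + a) * √(T + a) = T + a := mul_self_sqrt (by linarith)
  have hs0 : 0 < √(T + a) := sqrt_pos.2 (by linarith)
  calc _ ≤ ((T + a)⁻¹) ^ 2 * (5 / 4 * (kap a R N * √(T + a))) := by gcongr
    _ = 5 / 4 * kap a R N * √(T + a) / (T + a) ^ 2 := by field_simp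
    _ = _ := by
      rw [div_eq_div_iff (by positivity) (by positivity)]
      linear_combination (5 / 4 * kap a R N * (T + a)) * hs

lemma Strip.pde (h : Strip a R N lam φ ψ) (hT : 1 - a ≤ T) {x : ℝ} (hx : a ≤ x) (y : ℝ) :
    ev (d0 (YY φ)) T x y = ev (Sf φ) T x y -
      lam * ((T + x)⁻¹ * (ev (PP ψ) T x y ^ 2 * ev (PP φ) T x y)) := by
  have ha := h.ha
  rw [h.eq1.pde T x y (by linarith) (by linarith), ev_add]
  simp only [Gc, ev_smul, ev_mul, ev_pow]
  rw [ev_cRi (by linarith), Sf]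
  simp only [ev_mul, ev_pow, ev_add, ev_smul]
  rw [ev_cRi (by linarith)]
  ring

lemma w_le {r : ℝ} (hr : 1 ≤ r) : 1 / (r * √r) ≤ 1 / r := by
  have : 1 ≤ √r := one_le_sqrt.2 hr
  exact one_div_le_one_div_of_le (by linarith) (by nlinarith)

lemma le_w {r : ℝ} (hr : 1 ≤ r) : 1 / r ^ 2 ≤ 1 / (r * √r) := by
  have h1 : 1 ≤ √r := one_le_sqrt.2 hr
  have h2 : √r * √r = r := mul_self_sqrt (by linarith)
  exact one_div_le_one_div_of_le (by positivity) (by nlinarith)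

lemma Strip.dY_le (h : Strip a R N lam φ ψ) (hT : 1 - a ≤ T) (hP : PBound a R N T φ ψ)
    (hl : 20941 * (lam * cB a R N ^ 2) ≤ 1) {x y : ℝ} (hx1 : a ≤ x) (hx2 : x ≤ R)
    (hy1 : -π ≤ y) (hy2 : y ≤ π) :
    |ev (d0 (YY φ)) T x y| ≤ 5 / 4 * kap a R N * (1 / ((T + a) * √(T + a)))
      + lam * cB a R N ^ 3 * (1 / (T + a)) := by
  have hr : 1 ≤ T + a := by linarith
  have hB := cB_pos h.haR h.hN
  have hp := hP T hT le_rfl x y hx1 hx2 hy1 hy2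
  have hlam := h.hlam
  rw [h.pde hT hx1]
  refine (abs_sub _ _).trans (add_le_add ((h.S_le hT hP hl hx1 hx2 hy1 hy2).trans_eq (by ring)) ?_)
  have e1 : |ev (PP φ) T x y| ≤ cB a R N := abs_le_of_sq_le_sq (by nlinarith [sq_nonneg (ev (PP ψ) T x y)]) hB.le
  have e2 : ev (PP ψ) T x y ^ 2 ≤ cB a R N ^ 2 := by nlinarith [sq_nonneg (ev (PP φ) T x y)]
  rw [abs_mul, abs_mul, abs_mul, abs_of_nonneg hlam,
    abs_of_nonneg (sq_nonneg (ev (PP ψ) T x y)),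
    abs_of_nonneg (inv_nonneg.2 (by linarith : 0 ≤ T + x))]
  have e3 : (T + x)⁻¹ ≤ (T + a)⁻¹ := inv_anti₀ (by linarith) (by linarith)
  calc _ ≤ lam * ((T + a)⁻¹ * (cB a R N ^ 2 * cB a R N)) := by
        have : 0 ≤ (T + a)⁻¹ := by positivity
        gcongr
    _ = _ := by rw [one_div]; ring

/-- `∂ₜφ = O(1 / r)`: integrate `Y ∂ₜφ` backwards along the characteristics of `Y`, which reach `σ = R`,
where `φ` vanishes, or the initial time within `(R - a) / 2`. -/
lemma Strip.Lam_le (h : Strip a R N lam φ ψ) (hT : 1 - a ≤ T) (hP : PBound a R N T φ ψ)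
    (hl : 20941 * (lam * cB a R N ^ 2) ≤ 1) (hl3 : lam * cB a R N ^ 3 ≤ 1)
    {x y : ℝ} (hx1 : a ≤ x) (hx2 : x ≤ R) (hy1 : -π ≤ y) (hy2 : y ≤ π) :
    |ev (d0 φ) T x y| ≤ cLam a R N / (T + a) := by
  have hr : 1 ≤ T + a := by linarith
  have ha := h.ha
  have haR := h.haR
  have hN := h.hN
  have hk := kap_nn a R N
  set l := (R - a) / 2 with hl'
  set s1 := min ((R - x) / 2) (T - (1 - a)) with hs1
  have hs0 : 0 ≤ s1 := le_min (by linarith) (by linarith)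
  have hsA : s1 ≤ (R - x) / 2 := min_le_left _ _
  have hsB : s1 ≤ T - (1 - a) := min_le_right _ _
  have hl0 : 0 ≤ l := by rw [hl']; linarith
  have hc : ∀ s, HasDerivAt (fun s => ev (d0 φ) (T - s) (x + 2 * s) y)
      (-ev (d0 (YY φ)) (T - s) (x + 2 * s) y) s := fun s => by
    have h1 : HasDerivAt (fun s => T - s) (-1) s := by
      simpa using (hasDerivAt_id s).const_sub T
    have h2 : HasDerivAt (fun s => x + 2 * s) 2 s := by
      simpa using ((hasDerivAt_id s).const_mul 2).const_add x
    refine (ev_hasDerivAt_curve (d0 φ) h1 h2 (hasDerivAt_const s y)).congr_deriv ?_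
    simp only [YY, map_sub, ev_sub, Der_comm (0, 1, 0) (1, 0, 0)]
    ring
  have hrr : ∀ s, 0 ≤ s → s ≤ s1 → 1 / (T - s + a) ≤ (1 + l) / (T + a) := fun s h1 h2 => by
    rw [div_le_div_iff₀ (by linarith) (by linarith)]
    nlinarith
  have hb : ∀ s, 0 ≤ s → s ≤ s1 → |-ev (d0 (YY φ)) (T - s) (x + 2 * s) y| ≤
      (5 / 4 * kap a R N + 1) * ((1 + l) / (T + a)) := fun s h1 h2 => by
    rw [abs_neg]
    have hr' : 1 ≤ T - s + a := by linarith
    refine (h.dY_le (T := T - s) (by linarith) (fun t h3 h4 => hP t h3 (by linarith)) hl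
      (by linarith) (by linarith) hy1 hy2).trans ?_
    have := w_le hr'
    have h5 := hrr s h1 h2
    have h6 : 0 ≤ 1 / (T - s + a) := by positivity
    calc _ ≤ 5 / 4 * kap a R N * (1 / (T - s + a)) + 1 * (1 / (T - s + a)) := by gcongr
      _ = (5 / 4 * kap a R N + 1) * (1 / (T - s + a)) := by ring
      _ ≤ _ := by gcongr
  have hm := abs_sub_le_of_deriv hs0 (fun s _ _ => hc s) hb
  simp only [sub_zero, mul_zero, add_zero] at hm
  have hend : |ev (d0 φ) (T - s1) (x + 2 * s1) y| ≤ N * ((1 + l) / (T + a)) := by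
    rcases min_choice ((R - x) / 2) (T - (1 - a)) with hc | hc
    · have : x + 2 * s1 = R := by rw [hs1, hc]; ring
      rw [this, SuppR.der h.eq1.supp _ _ _ _ (by linarith) (by linarith) (by linarith), abs_zero]
      positivity
    · have e : T - s1 = 1 - a := by rw [hs1, hc]; ring
      have := hrr s1 hs0 le_rfl
      rw [e] at this ⊢
      refine (h.hL1 _ y (by linarith) (by linarith) hy1 hy2).trans ?_
      have e2 : (1 : ℝ) / (1 - a + a) = 1 := by norm_num
      rw [e2] at this
      nlinarith
  have hfin : |ev (d0 φ) T x y| ≤ |ev (d0 φ) (T - s1) (x + 2 * s1) y|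
      + |ev (d0 φ) (T - s1) (x + 2 * s1) y - ev (d0 φ) T x y| := by
    have := abs_sub (ev (d0 φ) (T - s1) (x + 2 * s1) y)
      (ev (d0 φ) (T - s1) (x + 2 * s1) y - ev (d0 φ) T x y)
    rwa [sub_sub_cancel] at this
  have hs1l : s1 ≤ l := by rw [hl']; linarith
  calc _ ≤ _ := hfin
    _ ≤ N * ((1 + l) / (T + a)) + (5 / 4 * kap a R N + 1) * ((1 + l) / (T + a)) * s1 := by gcongr
    _ ≤ N * ((1 + l) / (T + a)) + (5 / 4 * kap a R N + 1) * ((1 + l) / (T + a)) * l := by gcongr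
    _ = _ := by rw [cLam]; ring

/-- Grönwall inequality with the integrable rate `r^{-3/2}`. -/
lemma integrable_gronwall {F F' : ℝ → ℝ} {a c t0 T : ℝ} (h0 : 1 ≤ t0 + a) (hc : 0 ≤ c)
    (hF : ∀ t, HasDerivAt F (F' t) t) (hFn : ∀ t, 0 ≤ F t)
    (h : ∀ t, t0 ≤ t → t ≤ T → F' t ≤ c * (1 / ((t + a) * √(t + a))) * F t) (hT : t0 ≤ T) :
    F T ≤ F t0 * exp (2 * c) := by
  have hw : ∀ t, t0 ≤ t → HasDerivAt (fun t => exp (2 * c / √(t + a)))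
      (exp (2 * c / √(t + a)) * -(c * (1 / ((t + a) * √(t + a))))) t := fun t ht => by
    have hp : 0 < t + a := by linarith
    have h1 : HasDerivAt (fun t => √(t + a)) (1 / (2 * √(t + a))) t :=
      HasDerivAt.sqrt ((hasDerivAt_id t).add_const a) hp.ne'
    have hs : √(t + a) * √(t + a) = t + a := mul_self_sqrt hp.le
    have hs0 : 0 < √(t + a) := sqrt_pos.2 hp
    have h2 := ((h1.inv hs0.ne').const_mul (2 * c)).exp
    refine (h2.congr_deriv ?_).congr_of_eventuallyEq (Eventually.of_forall fun s => ?_)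
    · simp only [div_eq_mul_inv, Pi.inv_apply]
      congr 1
      generalize √(t + a) = s at *
      rw [← hs]
      field_simp
    · simp [div_eq_mul_inv]
  have hmono : AntitoneOn (fun t => F t * exp (2 * c / √(t + a))) (Set.Icc t0 T) := by
    have hd : ∀ t ∈ Set.Icc t0 T, HasDerivAt (fun t => F t * exp (2 * c / √(t + a))) _ t :=
      fun t ht => (hF t).mul (hw t ht.1)
    refine antitoneOn_of_deriv_nonpos (convex_Icc _ _)
      (fun t ht => (hd t ht).continuousAt.continuousWithinAt)
      (fun t ht => (hd t (interior_subset ht)).differentiableAt.differentiableWithinAt)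
      fun t ht => ?_
    have ht := interior_subset ht
    rw [(hd t ht).deriv]
    have := h t ht.1 ht.2
    have hw : 0 ≤ exp (2 * c / √(t + a)) := by positivity
    nlinarith [mul_le_mul_of_nonneg_right this hw]
  have h1 := hmono ⟨le_rfl, hT⟩ ⟨hT, le_rfl⟩ hT
  simp only at h1
  have h2 : 1 ≤ exp (2 * c / √(T + a)) := one_le_exp (by positivity)
  have h3 : 2 * c / √(t0 + a) ≤ 2 * c := div_le_self (by positivity) (one_le_sqrt.2 h0)
  calc F T ≤ F T * exp (2 * c / √(T + a)) := le_mul_of_one_le_right (hFn T) h2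
    _ ≤ _ := h1
    _ ≤ _ := by have := hFn t0; gcongr

/-- `Yφ` stays bounded. In `∂ₜ (Yφ)²` the cubic term, with `P = (∂ₜ + Y) / 2`, has a part of good sign,
and the rest is integrable in time. -/
lemma Strip.Y_le (h : Strip a R N lam φ ψ) (hT : 1 - a ≤ T) (hP : PBound a R N T φ ψ)
    (hl : 20941 * (lam * cB a R N ^ 2) ≤ 1) (hl3 : lam * cB a R N ^ 3 ≤ 1)
    {x y : ℝ} (hx1 : a ≤ x) (hx2 : x ≤ R) (hy1 : -π ≤ y) (hy2 : y ≤ π) :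
    |ev (YY φ) T x y| ≤ cY' a R N := by
  have ha := h.ha
  have haR := h.haR
  have hN := h.hN
  have hlam := h.hlam
  have hk := kap_nn a R N
  have hcl := cLam_nn haR hN
  have hB := cB_pos haR hN
  have hg := integrable_gronwall (F := fun t => 1 + ev (YY φ) t x y ^ 2)
    (F' := fun t => 2 * ev (YY φ) t x y * ev (d0 (YY φ)) t x y) (a := a)
    (c := 5 / 4 * kap a R N + cLam a R N) (t0 := 1 - a) (T := T) (by linarith) (by positivity)
    (fun t => by simpa using ((ev_hasDerivAt_0 (YY φ) t x y).pow 2).const_add 1)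
    (fun t => by positivity)
    (fun t ht1 ht2 => by
      have hr : 1 ≤ t + a := by linarith
      have hP' : PBound a R N t φ ψ := fun t h3 h4 => hP t h3 (by linarith)
      have hS := h.S_le ht1 hP' hl hx1 hx2 hy1 hy2
      have hL := h.Lam_le ht1 hP' hl hl3 hx1 hx2 hy1 hy2
      have hp := hP t ht1 ht2 x y hx1 hx2 hy1 hy2
      rw [h.pde ht1 hx1]
      have hPP : ev (PP φ) t x y = (ev (YY φ) t x y + ev (d0 φ) t x y) / 2 := by
        simp only [PP, YY, ev_sub]; ring
      have e2 : ev (PP ψ) t x y ^ 2 ≤ cB a R N ^ 2 := by nlinarith [sq_nonneg (ev (PP φ) t x y)]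
      have e3 : (t + x)⁻¹ ≤ (t + a)⁻¹ := inv_anti₀ (by linarith) (by linarith)
      have e0 : 0 ≤ (t + x)⁻¹ := inv_nonneg.2 (by linarith)
      have hw := le_w hr
      have hw0 : 0 ≤ 1 / ((t + a) * √(t + a)) := by positivity
      rw [hPP]
      rw [div_eq_mul_one_div _ ((t + a) * √(t + a))] at hS
      generalize ev (YY φ) t x y = Y at *
      generalize ev (d0 φ) t x y = L at *
      generalize ev (PP ψ) t x y = q at *
      generalize ev (Sf φ) t x y = S at *
      generalize 1 / ((t + a) * √(t + a)) = w at *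
      have hYa : 2 * |Y| ≤ 1 + Y ^ 2 := by nlinarith [sq_nonneg (|Y| - 1), sq_abs Y]
      have g1 : 2 * Y * S ≤ 5 / 4 * kap a R N * w * (1 + Y ^ 2) := by
        calc 2 * Y * S ≤ |2 * Y * S| := le_abs_self _
          _ = 2 * |Y| * |S| := by rw [abs_mul, abs_mul, abs_two]
          _ ≤ (1 + Y ^ 2) * (5 / 4 * kap a R N * w) := by gcongr
          _ = _ := by ring
      have hlB : lam * q ^ 2 ≤ 1 := by
        have := mul_le_mul_of_nonneg_left e2 hlam
        nlinarith
      have hlq : 0 ≤ lam * q ^ 2 := by positivity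
      have g2 : -(lam * q ^ 2 * (t + x)⁻¹ * (Y * L)) ≤ cLam a R N * w * (1 + Y ^ 2) := by
        calc -(lam * q ^ 2 * (t + x)⁻¹ * (Y * L)) ≤ |lam * q ^ 2 * (t + x)⁻¹ * (Y * L)| :=
              neg_le_abs _
          _ = lam * q ^ 2 * (t + x)⁻¹ * (|Y| * |L|) := by
              rw [abs_mul, abs_mul, abs_mul Y L, abs_of_nonneg hlq, abs_of_nonneg e0]
          _ ≤ 1 * (t + a)⁻¹ * ((1 + Y ^ 2) * (cLam a R N / (t + a))) := by
              have : |Y| ≤ 1 + Y ^ 2 := by linarith [abs_nonneg Y]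
              gcongr
          _ = cLam a R N * (1 / (t + a) ^ 2) * (1 + Y ^ 2) := by field_simp
          _ ≤ _ := by gcongr
      have g3 : 0 ≤ lam * q ^ 2 * (t + x)⁻¹ * Y ^ 2 := by positivity
      calc _ = 2 * Y * S - lam * q ^ 2 * (t + x)⁻¹ * Y ^ 2
            + -(lam * q ^ 2 * (t + x)⁻¹ * (Y * L)) := by ring
        _ ≤ _ := by linarith) hT
  rw [cY']
  refine abs_le_sqrt ?_
  have h0 := h.hY1 x y hx1 hx2 hy1 hy2
  have h1 : ev (YY φ) (1 - a) x y ^ 2 ≤ N ^ 2 := sq_le_sq' (abs_le.1 h0).1 (abs_le.1 h0).2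
  have h2 := mul_le_mul_of_nonneg_right (add_le_add_right h1 1)
    (exp_pos (2 * (5 / 4 * kap a R N + cLam a R N))).le
  linarith

lemma abs_mul_le_half {p q B : ℝ} (h : p ^ 2 + q ^ 2 ≤ B ^ 2) : |p * q| ≤ B ^ 2 / 2 := by
  rw [abs_le]
  constructor <;> nlinarith [sq_nonneg (p + q), sq_nonneg (p - q)]

lemma Strip.pBound (h : Strip a R N lam φ ψ) 
    (hl : 20941 * (lam * cB a R N ^ 2) ≤ 1) (hl3 : lam * cB a R N ^ 3 ≤ 1) (T : ℝ) :
    PBound a R N T φ ψ := by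
  have haR := h.haR
  have hN := h.hN
  have hcl := cLam_nn haR hN
  have hcy := cY'_ge haR hN
  have hPP : ∀ (φ : SmoothAlg) t x y, ev (PP φ) t x y = (ev (YY φ) t x y + ev (d0 φ) t x y) / 2 :=
    fun φ t x y => by simp only [PP, YY, ev_sub]; ring
  have hbd : ∀ (M Y L : ℝ), |Y| ≤ cY' a R N → |L| ≤ cLam a R N + N → ((Y + L) / 2) ^ 2 ≤
      (cB a R N - 1) ^ 2 / 4 := fun M Y L h1 h2 => by
    have : |Y + L| ≤ cB a R N - 1 := (abs_add_le _ _).trans (by rw [cB]; linarith)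
    have := sq_le_sq' (abs_le.1 this).1 (abs_le.1 this).2
    nlinarith
  have hlt : (cB a R N - 1) ^ 2 / 4 + (cB a R N - 1) ^ 2 / 4 < cB a R N ^ 2 := by
    have : 0 ≤ cB a R N - 1 := by rw [cB]; linarith
    nlinarith
  have := bootstrap (a := a) (R := R) (c := -π) (d := π) (T0 := 1 - a) (M := cB a R N ^ 2)
    (PP φ ^ 2 + PP ψ ^ 2) (fun x y h1 h2 h3 h4 => by
      simp only [ev_add, ev_pow, hPP]
      have a1 := hbd 0 _ _ ((h.hY1 x y h1 h2 h3 h4).trans hcy)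
        ((h.hL1 x y h1 h2 h3 h4).trans (by linarith))
      have a2 := hbd 0 _ _ ((h.hY2 x y h1 h2 h3 h4).trans hcy)
        ((h.hL2 x y h1 h2 h3 h4).trans (by linarith))
      linarith)
    (fun T hT hP x y h1 h2 h3 h4 => by
      have hP' : PBound a R N T φ ψ := hP
      have hr : 1 ≤ T + a := by linarith
      have hd : cLam a R N / (T + a) ≤ cLam a R N + N :=
        (div_le_self hcl hr).trans (by linarith)
      simp only [ev_add, ev_pow, hPP]
      have a1 := hbd 0 _ _ (h.Y_le hT hP' hl hl3 h1 h2 h3 h4)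
        ((h.Lam_le hT hP' hl hl3 h1 h2 h3 h4).trans hd)
      have a2 := hbd 0 _ _ (h.symm.Y_le hT hP'.symm hl hl3 h1 h2 h3 h4)
        ((h.symm.Lam_le hT hP'.symm hl hl3 h1 h2 h3 h4).trans hd)
      linarith)
  exact fun t h1 _ x y h2 h3 h4 h5 => (this t h1 x y h2 h3 h4 h5).le

/-- Uniform bounds for the strip system for small coupling. -/
structure SB (a R C lam : ℝ) (φ : SmoothAlg) : Prop where
  phi : ∀ t, 1 - a ≤ t → ∀ x y, a ≤ x → x ≤ R → |ev φ t x y| ≤ C * √(t + a)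
  phi2 : ∀ t, 1 - a ≤ t → ∀ x y, a ≤ x → x ≤ R → |ev (d2 φ) t x y| ≤ C * √(t + a)
  Lam : ∀ t, 1 - a ≤ t → ∀ x y, a ≤ x → x ≤ R → |ev (d0 φ) t x y| ≤ C / (t + a)
  Y : ∀ t, 1 - a ≤ t → ∀ x y, a ≤ x → x ≤ R → |ev (YY φ) t x y| ≤ C
  dY : ∀ t, 1 - a ≤ t → ∀ x y, a ≤ x → x ≤ R → |ev (d0 (YY φ)) t x y| ≤
    C * (1 / ((t + a) * √(t + a))) + C * lam * (1 / (t + a))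

lemma Per.exists_mem {f : SmoothAlg} (hf : Per f) (y : ℝ) :
    ∃ y', -π ≤ y' ∧ y' ≤ π ∧ ∃ k : ℤ, y' = y + k * (2 * π) := by
  obtain ⟨y', hy', hk⟩ : ∃ y', y' ∈ Set.Ioc (-π) (-π + 2 * π) ∧ ∃ k : ℤ, y' = y + k * (2 * π) := by
    refine ⟨toIocMod two_pi_pos (-π) y, toIocMod_mem_Ioc _ _ _, -toIocDiv two_pi_pos (-π) y, ?_⟩
    rw [← self_sub_toIocDiv_zsmul, zsmul_eq_mul]; push_cast; ring
  exact ⟨y', hy'.1.le, by linarith [hy'.2], hk⟩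

lemma Per.add_int {f : SmoothAlg} (hf : Per f) (k : ℤ) (t x y : ℝ) :
    ev f t x (y + k * (2 * π)) = ev f t x y := by
  have : Function.Periodic (fun y => ev f t x y) (2 * π) := fun y => hf t x y
  exact this.int_mul k y

set_option maxHeartbeats 1000000 in
/-- The bounds for the full solution of the strip system. -/
lemma Strip.SB (a R N : ℝ) (haR : a + 1 ≤ R) (hN : 0 ≤ N) : ∃ C lam1, 0 < C ∧ 0 < lam1 ∧
    ∀ lam φ ψ, Strip a R N lam φ ψ → lam ≤ lam1 → SB a R C lam φ ∧ SB a R C lam ψ ∧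
      ∀ t, 1 - a ≤ t → ∀ x y, a ≤ x → x ≤ R →
        |ev (d0 (YY φ ^ 2 - YY ψ ^ 2)) t x y| ≤ C * (1 / ((t + a) * √(t + a))) := by
  have hB := cB_pos haR hN
  have hcl := cLam_nn haR hN
  have hcy := cY'_ge haR hN
  have hk := kap_nn a R N
  have hcy0 : 0 ≤ cY' a R N := hN.trans hcy
  set B := cB a R N with hBd
  set C1 := 5 / 4 * kap a R N + cLam a R N + cY' a R N + B ^ 3 + 1 with hC1
  have hC1p : 0 < C1 := by positivity
  refine ⟨4 * C1 * C1 + C1, min (1 / (20941 * B ^ 2)) (1 / B ^ 3), by positivity, by positivity,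
    fun lam φ ψ h hlam => ?_⟩
  have hl0 := h.hlam
  have hl : 20941 * (lam * B ^ 2) ≤ 1 := by
    have := hlam.trans (min_le_left _ _)
    rw [le_div_iff₀ (by positivity)] at this
    linarith
  have hl3 : lam * B ^ 3 ≤ 1 := by
    have := hlam.trans (min_le_right _ _)
    rwa [le_div_iff₀ (by positivity)] at this
  set C := 4 * C1 * C1 + C1 with hC
  have hCC : C1 ≤ C := by rw [hC]; nlinarith
  have hB3 : 0 < B ^ 3 := pow_pos hB 3
  have m1 : kap a R N ≤ C := by linarith
  have m2 : cLam a R N ≤ C := by linarith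
  have m3 : cY' a R N ≤ C := by linarith
  have m4 : B ^ 3 ≤ C := by linarith
  have m5 : 5 / 4 * kap a R N ≤ C := by linarith
  have m6 : 5 / 4 * kap a R N ≤ C1 := by linarith
  have m7 : cY' a R N ≤ C1 := by linarith
  have m8 : cLam a R N ≤ C1 := by linarith
  have key : ∀ φ ψ, Strip a R N lam φ ψ → _root_.SB a R C lam φ := by
    intro φ ψ h
    have hP := h.pBound hl hl3
    constructor
    · intro t ht x y hx1 hx2
      obtain ⟨y', h1, h2, k, rfl⟩ := h.eq1.per.exists_mem y
      rw [← h.eq1.per.add_int k]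
      refine (h.phi_le ht (hP t) hl hx1 hx2 h1 h2).1.trans ?_
      gcongr
    · intro t ht x y hx1 hx2
      obtain ⟨y', h1, h2, k, rfl⟩ := h.eq1.per.exists_mem y
      rw [← (h.eq1.per.der _).add_int k]
      refine (h.phi_le ht (hP t) hl hx1 hx2 h1 h2).2.1.trans ?_
      gcongr
    · intro t ht x y hx1 hx2
      obtain ⟨y', h1, h2, k, rfl⟩ := h.eq1.per.exists_mem y
      rw [← (h.eq1.per.der _).add_int k]
      refine (h.Lam_le ht (hP t) hl hl3 hx1 hx2 h1 h2).trans ?_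
      have : 0 ≤ t + a := by linarith
      gcongr
    · intro t ht x y hx1 hx2
      obtain ⟨y', h1, h2, k, rfl⟩ := h.eq1.per.exists_mem y
      rw [← h.eq1.per.yy.add_int k]
      refine (h.Y_le ht (hP t) hl hl3 hx1 hx2 h1 h2).trans ?_
      exact m3
    · intro t ht x y hx1 hx2
      obtain ⟨y', h1, h2, k, rfl⟩ := h.eq1.per.exists_mem y
      rw [← (h.eq1.per.yy.der _).add_int k]
      refine (h.dY_le ht (hP t) hl hx1 hx2 h1 h2).trans ?_
      have hr : 0 < t + a := by linarith
      rw [mul_comm lam]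
      gcongr
  refine ⟨key φ ψ h, key ψ φ h.symm, fun t ht x y hx1 hx2 => ?_⟩
  have hper : Per (YY φ ^ 2 - YY ψ ^ 2) := by
    have := (h.eq1.per.yy.mul h.eq1.per.yy).sub (h.eq2.per.yy.mul h.eq2.per.yy)
    rwa [← sq, ← sq] at this
  obtain ⟨y', h1, h2, k, hy'⟩ := hper.exists_mem y
  rw [← (hper.der _).add_int k, ← hy']
  have hP := h.pBound hl hl3 t
  have hp := hP t ht le_rfl x y' hx1 hx2 h1 h2
  have hr : 1 ≤ t + a := by linarith
  have S1 := h.S_le ht hP hl hx1 hx2 h1 h2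
  have S2 := h.symm.S_le ht hP.symm hl hx1 hx2 h1 h2
  have Y1 := h.Y_le ht hP hl hl3 hx1 hx2 h1 h2
  have Y2 := h.symm.Y_le ht hP.symm hl hl3 hx1 hx2 h1 h2
  have L1 := h.Lam_le ht hP hl hl3 hx1 hx2 h1 h2
  have L2 := h.symm.Lam_le ht hP.symm hl hl3 hx1 hx2 h1 h2
  have q1 := h.pde ht hx1 y'
  have q2 := h.symm.pde ht hx1 y'
  have hPP : ∀ (φ : SmoothAlg), ev (PP φ) t x y' = (ev (YY φ) t x y' + ev (d0 φ) t x y') / 2 :=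
    fun φ => by simp only [PP, YY, ev_sub]; ring
  have hd : ev (d0 (YY φ ^ 2 - YY ψ ^ 2)) t x y' = 2 * ev (YY φ) t x y' * ev (d0 (YY φ)) t x y'
      - 2 * ev (YY ψ) t x y' * ev (d0 (YY ψ)) t x y' := by
    rw [sq, sq, map_sub, Derivation.leibniz, Derivation.leibniz]
    simp only [smul_eq_mul, ev_sub, ev_add, ev_mul]; ring
  have hid : ev (d0 (YY φ ^ 2 - YY ψ ^ 2)) t x y' =
      2 * (ev (YY φ) t x y' * ev (Sf φ) t x y') - 2 * (ev (YY ψ) t x y' * ev (Sf ψ) t x y')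
      - lam * ((t + x)⁻¹ * (ev (PP φ) t x y' * ev (PP ψ) t x y' *
        (ev (d0 ψ) t x y' * ev (YY φ) t x y' - ev (d0 φ) t x y' * ev (YY ψ) t x y'))) := by
    rw [hd, q1, q2, hPP φ, hPP ψ]; ring
  have hS : ∀ u v : ℝ, |u| ≤ cY' a R N → |v| ≤ 5 / 4 * kap a R N / ((t + a) * √(t + a)) →
      |2 * (u * v)| ≤ 2 * (C1 * C1) * (1 / ((t + a) * √(t + a))) := fun u v hu hv => by
    rw [abs_mul, abs_mul, abs_two]
    calc 2 * (|u| * |v|) ≤ 2 * (C1 * (C1 / ((t + a) * √(t + a)))) := by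
          have e1 : |u| ≤ C1 := hu.trans m7
          have e2 : |v| ≤ C1 / ((t + a) * √(t + a)) := by
            refine hv.trans ?_
            gcongr
          gcongr
      _ = _ := by ring
  have T3 : |lam * ((t + x)⁻¹ * (ev (PP φ) t x y' * ev (PP ψ) t x y' *
        (ev (d0 ψ) t x y' * ev (YY φ) t x y' - ev (d0 φ) t x y' * ev (YY ψ) t x y')))| ≤
        C1 * (1 / ((t + a) * √(t + a))) := by
    have e3 : (t + x)⁻¹ ≤ (t + a)⁻¹ := inv_anti₀ (by linarith) (by linarith)
    have e0 : 0 ≤ (t + x)⁻¹ := inv_nonneg.2 (by linarith)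
    have hpp : |ev (PP φ) t x y' * ev (PP ψ) t x y'| ≤ B ^ 2 / 2 := by
      exact abs_mul_le_half hp
    have hc0 : cY' a R N ≤ B := by rw [hBd, cB]; linarith
    have hLY : |ev (d0 ψ) t x y' * ev (YY φ) t x y' - ev (d0 φ) t x y' * ev (YY ψ) t x y'| ≤
        2 * (cLam a R N / (t + a) * B) := by
      refine (abs_sub _ _).trans ?_
      rw [abs_mul, abs_mul]
      have : 0 ≤ cLam a R N / (t + a) := by positivity
      have i1 : |ev (d0 ψ) t x y'| * |ev (YY φ) t x y'| ≤ cLam a R N / (t + a) * B := by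
        gcongr; exact Y1.trans hc0
      have i2 : |ev (d0 φ) t x y'| * |ev (YY ψ) t x y'| ≤ cLam a R N / (t + a) * B := by
        gcongr; exact Y2.trans hc0
      linarith
    rw [abs_mul, abs_mul, abs_mul, abs_of_nonneg hl0, abs_of_nonneg e0]
    calc _ ≤ lam * ((t + a)⁻¹ * (B ^ 2 / 2 * (2 * (cLam a R N / (t + a) * B)))) := by gcongr
      _ = lam * B ^ 3 * cLam a R N * (1 / (t + a) ^ 2) := by field_simp
      _ ≤ 1 * cLam a R N * (1 / ((t + a) * √(t + a))) := by
          have := le_w hr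
          gcongr
      _ ≤ _ := by
          rw [one_mul]; gcongr
  rw [hid]
  refine (abs_sub _ _).trans ((add_le_add_left (abs_sub _ _) _).trans ?_)
  have r1 := hS _ _ Y1 S1
  have r2 := hS _ _ Y2 S2
  rw [hC]
  linarith

end Bootstrap

/-! ### Polar coordinates -/

/-- Pullback by the strip coordinates `(t, σ, θ) ↦ (t, (t+σ) cos θ, (t+σ) sin θ)`. -/
def Pol (v : SmoothAlg) : SmoothAlg :=
  ⟨fun p => v.1 (p.1, (p.1 + p.2.1) * cos p.2.2, (p.1 + p.2.1) * sin p.2.2),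
    ((smooth_contDiff v).comp (by fun_prop) : ContDiff ℝ (⊤ : ℕ∞) _)⟩

lemma ev_Pol (v : SmoothAlg) (t s y : ℝ) :
    ev (Pol v) t s y = ev v t ((t + s) * cos y) ((t + s) * sin y) := rfl

lemma ev_d0_Pol (v : SmoothAlg) (t s y : ℝ) :
    ev (d0 (Pol v)) t s y = ev (Pol (d0 v)) t s y
      + (cos y * ev (Pol (d1 v)) t s y + sin y * ev (Pol (d2 v)) t s y) := by
  have h0 : HasDerivAt (fun t : ℝ => t + s) 1 t := (hasDerivAt_id t).add_const s
  refine ev_d0_eq ((ev_hasDerivAt_curve v (hasDerivAt_id t) (h0.mul_const (cos y))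
    (h0.mul_const (sin y))).congr_deriv ?_)
  simp only [ev_Pol, id]; ring

lemma ev_d1_Pol (v : SmoothAlg) (t s y : ℝ) :
    ev (d1 (Pol v)) t s y =
      cos y * ev (Pol (d1 v)) t s y + sin y * ev (Pol (d2 v)) t s y := by
  have h0 : HasDerivAt (fun s : ℝ => t + s) 1 s := (hasDerivAt_id s).const_add t
  refine ev_d1_eq ((ev_hasDerivAt_curve v (hasDerivAt_const s t) (h0.mul_const (cos y))
    (h0.mul_const (sin y))).congr_deriv ?_)
  simp only [ev_Pol]; ring

lemma d2_Pol (v : SmoothAlg) : d2 (Pol v) = Pol (Om v) := ev_ext fun t s y => by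
  refine ev_d2_eq ((ev_hasDerivAt_curve v (hasDerivAt_const y t)
    ((hasDerivAt_cos y).const_mul (t + s)) ((hasDerivAt_sin y).const_mul (t + s))).congr_deriv ?_)
  rw [Om_apply]
  simp only [ev_Pol, ev_sub, ev_mul, ev_cX, ev_cY]; ring

/-- The functions `cos θ`, `sin θ`. -/
def cC : SmoothAlg := comp1 cos contDiff_cos cY
/-- See `cC`. -/
def cS : SmoothAlg := comp1 sin contDiff_sin cY

@[simp] lemma ev_cC (t s y : ℝ) : ev cC t s y = cos y := rfl
@[simp] lemma ev_cS (t s y : ℝ) : ev cS t s y = sin y := rfl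
lemma d1_cC : d1 cC = 0 := ev_ext fun t s y => by simp [cC, ev_d1_comp1]
lemma d1_cS : d1 cS = 0 := ev_ext fun t s y => by simp [cS, ev_d1_comp1]

lemma d1_Pol (v : SmoothAlg) : d1 (Pol v) = cC * Pol (d1 v) + cS * Pol (d2 v) :=
  ev_ext fun t s y => by rw [ev_d1_Pol]; rfl
lemma d0_Pol (v : SmoothAlg) : d0 (Pol v) = Pol (d0 v) + d1 (Pol v) :=
  ev_ext fun t s y => by rw [ev_d0_Pol, ev_add, ev_d1_Pol]

lemma d11_Pol (v : SmoothAlg) : d1 (d1 (Pol v)) =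
    cC * (cC * Pol (d1 (d1 v)) + cS * Pol (d2 (d1 v)))
      + cS * (cC * Pol (d1 (d2 v)) + cS * Pol (d2 (d2 v))) := by
  rw [d1_Pol, map_add, Derivation.leibniz, Derivation.leibniz, d1_cC, d1_cS, d1_Pol, d1_Pol]
  simp

/-- The operator `∂ₜ² - 2 ∂ₜ ∂_σ` in strip coordinates is `∂ₜ² - ∂ᵣ²` in the plane. -/
lemma box_Pol (v : SmoothAlg) :
    d0 (d0 (Pol v)) - 2 * d0 (d1 (Pol v)) = Pol (d0 (d0 v)) - d1 (d1 (Pol v)) := by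
  have h1 : d0 (d1 (Pol v)) = d1 (Pol (d0 v)) + d1 (d1 (Pol v)) := by
    rw [Der_comm, d0_Pol, map_add]
  have h2 : d0 (d0 (Pol v)) = Pol (d0 (d0 v)) + d1 (Pol (d0 v)) + d0 (d1 (Pol v)) := by
    conv_lhs => rw [d0_Pol v, map_add, d0_Pol (d0 v)]
  rw [h2, h1]; ring

/-- The function `√r` in strip coordinates (modified for `r < 1/2`). -/
def cq : SmoothAlg := comp1 (fun r => √(rfun r)) (rfun_contDiff.sqrt fun r => (rfun_pos r).ne')
  (cT + cX)

lemma ev_cq {t s : ℝ} (h : 1 / 2 ≤ t + s) (y : ℝ) : ev cq t s y = √(t + s) := by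
  rw [cq, ev_comp1]; simp only [ev_add, ev_cT, ev_cX]; rw [rfun_eq h]

lemma cRi_cq : cRi * cq ^ 2 = 1 := ev_ext fun t s y => by
  have := rfun_pos (t + s)
  simp only [cRi, cq, ev_mul, ev_comp1, ev_pow, ev_add, ev_cT, ev_cX, ev_one]
  rw [sq_sqrt this.le]; field_simp

lemma deriv_sqrt_rfun {r : ℝ} (h : 1 / 2 < r) :
    deriv (fun r => √(rfun r)) r = 1 / 2 * r⁻¹ * √r := by
  have := (hasDerivAt_rfun h).sqrt (rfun_pos r).ne'
  rw [this.deriv, rfun_eq h.le]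
  have hr : 0 < r := by linarith
  have h2 := sqrt_pos.2 hr
  have h3 := sq_sqrt hr.le
  field_simp
  linarith

lemma ev_d0_cq {t s : ℝ} (h : 1 / 2 < t + s) (y : ℝ) :
    ev (d0 cq) t s y = ev ((1 / 2 : ℝ) • (cRi * cq)) t s y := by
  rw [cq, ev_d0_comp1, ← cq]
  simp only [ev_smul, ev_mul, ev_cRi h.le, ev_cq h.le, ev_add, ev_cT, ev_cX, map_add, d0_cT,
    d0_cX, ev_one, ev_zero]
  rw [deriv_sqrt_rfun h]; ring

lemma ev_d1_cq {t s : ℝ} (h : 1 / 2 < t + s) (y : ℝ) :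
    ev (d1 cq) t s y = ev ((1 / 2 : ℝ) • (cRi * cq)) t s y := by
  rw [cq, ev_d1_comp1, ← cq]
  simp only [ev_smul, ev_mul, ev_cRi h.le, ev_cq h.le, ev_add, ev_cT, ev_cX, map_add, d1_cT,
    d1_cX, ev_one, ev_zero]
  rw [deriv_sqrt_rfun h]; ring

lemma d2_cq : d2 cq = 0 := ev_ext fun t s y => by
  rw [cq, ev_d2_comp1]; simp

lemma ev_d00_cq {t s : ℝ} (ht : 0 < t) (h : 1 / 2 < t + s) (y : ℝ) :
    ev (d0 (d0 cq)) t s y = -(1 / 4) * ev cRi t s y ^ 2 * ev cq t s y := by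
  rw [Der_eq_strip (1, 0, 0) (fun t s y _ h2 => ev_d0_cq h2 y) t s y ht h]
  simp only [Derivation.map_smul, Derivation.leibniz, ev_smul, ev_add, smul_eq_mul, ev_mul,
    ev_d0_cq h, ev_d0_cRi h]
  ring

lemma ev_d01_cq {t s : ℝ} (ht : 0 < t) (h : 1 / 2 < t + s) (y : ℝ) :
    ev (d0 (d1 cq)) t s y = -(1 / 4) * ev cRi t s y ^ 2 * ev cq t s y := by
  rw [Der_eq_strip (1, 0, 0) (fun t s y _ h2 => ev_d1_cq h2 y) t s y ht h]
  simp only [Derivation.map_smul, Derivation.leibniz, ev_smul, ev_add, smul_eq_mul, ev_mul,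
    ev_d0_cq h, ev_d0_cRi h]
  ring

/-- The rescaled solution `√r v` in strip coordinates. -/
def phi (v : SmoothAlg) : SmoothAlg := cq * Pol v

lemma polar_laplace_aux {r c s v1 v2 v11 v12 v22 : ℝ} (hr : r ≠ 0) (h : c ^ 2 + s ^ 2 = 1) :
    -v11 - v22 + r⁻¹ ^ 2 * (r ^ 2 * c ^ 2 * v22 - r * c * v1 - 2 * r ^ 2 * c * s * v12
      - r * s * v2 + r ^ 2 * s ^ 2 * v11) =
    -(c ^ 2 * v11 + 2 * c * s * v12 + s ^ 2 * v22) - r⁻¹ * (c * v1 + s * v2) := by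
  have hr' : r⁻¹ * r = 1 := inv_mul_cancel₀ hr
  linear_combination (v11 + v22) * h + (-r⁻¹ * (c * v1 + s * v2)
    + (r⁻¹ * r + 1) * (c ^ 2 * v22 - 2 * c * s * v12 + s ^ 2 * v11)) * hr'

/-- The d'Alembertian in polar coordinates, for `φ = √r v`: the factor `√r` removes the first-order
term `∂ᵣ / r` and leaves `φ / (4 r²)`. -/
lemma phi_pde (v : SmoothAlg) {t s : ℝ} (ht : 0 < t) (h : 1 / 2 < t + s) (y : ℝ) :
    ev (d0 (YY (phi v))) t s y = ev cq t s y * ev (Pol (bx v)) t s y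
      + ev (cRi ^ 2 * (d2 (d2 (phi v)) + (1 / 4 : ℝ) • phi v)) t s y := by
  have hb := congrArg (fun f => ev f t s y) (box_Pol v)
  simp only [ev_sub, ev_mul, ev_ofNat] at hb
  have e1 : ev (d0 (YY (phi v))) t s y =
      1 / 4 * ev cRi t s y ^ 2 * ev cq t s y * ev (Pol v) t s y
        + ev cq t s y * (ev (Pol (d0 (d0 v))) t s y - ev (d1 (d1 (Pol v))) t s y)
        - ev cRi t s y * ev cq t s y * ev (d1 (Pol v)) t s y := by
    rw [← hb]
    simp only [YY, phi, map_sub, map_add, Derivation.leibniz, smul_eq_mul, ev_add, ev_mul, ev_sub,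
      ev_d00_cq ht h, ev_d01_cq ht h, ev_d0_cq h, ev_d1_cq h, ev_smul]
    ring
  have e2 : d2 (d2 (phi v)) = cq * Pol (Om (Om v)) := by
    simp only [phi, Derivation.leibniz, d2_cq, d2_Pol, mul_zero, add_zero, smul_eq_mul]
  have e3 : ev (Pol (Om (Om v))) t s y =
      (t + s) ^ 2 * cos y ^ 2 * ev (Pol (d2 (d2 v))) t s y
      - (t + s) * cos y * ev (Pol (d1 v)) t s y
      - 2 * (t + s) ^ 2 * cos y * sin y * ev (Pol (d2 (d1 v))) t s y
      - (t + s) * sin y * ev (Pol (d2 v)) t s y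
      + (t + s) ^ 2 * sin y ^ 2 * ev (Pol (d1 (d1 v))) t s y := by
    simp only [ev_Pol, Om_apply, map_sub, Derivation.leibniz, smul_eq_mul, d1_cX, d2_cX, d1_cY,
      d2_cY, ev_sub, ev_mul, ev_add, ev_cX, ev_cY, ev_one, ev_zero, Der_comm (0, 1, 0) (0, 0, 1)]
    ring
  have hr : t + s ≠ 0 := by linarith
  have key := polar_laplace_aux (v1 := ev (Pol (d1 v)) t s y) (v2 := ev (Pol (d2 v)) t s y)
    (v11 := ev (Pol (d1 (d1 v))) t s y) (v12 := ev (Pol (d2 (d1 v))) t s y)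
    (v22 := ev (Pol (d2 (d2 v))) t s y) hr (cos_sq_add_sin_sq y)
  rw [e1, e2, d11_Pol, ev_d1_Pol]
  have e4 : ev (Pol (bx v)) t s y = ev (Pol (d0 (d0 v))) t s y - ev (Pol (d1 (d1 v))) t s y
    - ev (Pol (d2 (d2 v))) t s y := rfl
  rw [e4, Der_comm (0, 1, 0) (0, 0, 1) v]
  simp only [ev_add, ev_mul, ev_smul, ev_pow, phi, e3, ev_cC, ev_cS]
  rw [ev_cRi h.le] at *
  linear_combination (-ev cq t s y) * key

/-- `P` applied to the profile is `√r ∂ₜ v` at a fixed point of the plane. -/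
lemma PP_phi (v : SmoothAlg) {t s : ℝ} (h : 1 / 2 < t + s) (y : ℝ) :
    ev (PP (phi v)) t s y = ev cq t s y * ev (Pol (d0 v)) t s y := by
  have := congrArg (fun f => ev f t s y) (d0_Pol v)
  simp only [ev_add] at this
  simp only [PP, phi, Derivation.leibniz, smul_eq_mul, ev_sub, ev_add, ev_mul, ev_d0_cq h,
    ev_d1_cq h]
  linear_combination ev cq t s y * this

lemma Per_Pol (v : SmoothAlg) : Per (Pol v) := fun t s y => by
  simp [ev_Pol, cos_add_two_pi, sin_add_two_pi]
lemma Per_phi (v : SmoothAlg) : Per (phi v) :=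
  Per.mul (fun _ _ _ => rfl) (Per_Pol v)

/-- The rescaled equation in strip coordinates. -/
lemma Half.lin {lam R0 R : ℝ} {z v w : SmoothAlg} (h : Half lam z v w) (hc : ConeSupp R0 v)
    (hR0 : 0 ≤ R0) (hR : R0 + 1 ≤ R) : Lin R (Gc lam (phi v) (phi w)) (phi v) where
  per := Per_phi v
  supp := fun t s y ht hr hs => by
    rw [phi, ev_mul, ev_Pol, hc t _ _ ht.le, mul_zero]
    have h1 := cos_sq_add_sin_sq y
    have h2 : ((t + s) * cos y) ^ 2 + ((t + s) * sin y) ^ 2 = (t + s) ^ 2 := by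
      linear_combination (t + s) ^ 2 * h1
    rw [h2]; exact pow_lt_pow_left₀ (by linarith) (by linarith) two_ne_zero
  pde := fun t s y ht hr => by
    rw [phi_pde v ht hr, ev_Pol, h.pde _ _ _ ht.le, ev_add, add_comm]
    congr 1
    simp only [Gc, ev_smul, ev_mul, ev_pow, PP_phi _ hr]
    have h3 := congrArg (fun f => ev f t s y) cRi_cq
    simp only [ev_mul, ev_pow, ev_one] at h3
    simp only [ev_Pol]
    linear_combination (lam * ev cq t s y * ev (d0 w) t ((t + s) * cos y) ((t + s) * sin y) ^ 2
      * ev (d0 v) t ((t + s) * cos y) ((t + s) * sin y)) * h3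

/-! ### Bounds where the strip estimates start -/

/-- `|f|` and its first derivatives are at most `K` at time `t`. -/
def C1Bd (K t : ℝ) (f : SmoothAlg) : Prop := ∀ x y, |ev f t x y| ≤ K ∧
  |ev (d0 f) t x y| ≤ K ∧ |ev (d1 f) t x y| ≤ K ∧ |ev (d2 f) t x y| ≤ K

lemma C1Bd_of_en {R0 T C t : ℝ} {f : SmoothAlg} (hf : ConeSupp R0 f) (hR : 0 ≤ R0)
    (ht : 0 ≤ t) (htT : t ≤ T) (hC : 0 ≤ C) (h : ∀ x y, ev (en f) t x y ≤ C) :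
    C1Bd (√C + 2 * (R0 + T + 1) * √C) t f := by
  have hx : ∀ x y, ev (d0 f) t x y ^ 2 ≤ C ∧ ev (d1 f) t x y ^ 2 ≤ C ∧ ev (d2 f) t x y ^ 2 ≤ C := by
    intro x y
    have := h x y
    simp only [en, ev_add, ev_pow] at this
    have h0 := sq_nonneg (ev (d0 f) t x y)
    have h1 := sq_nonneg (ev (d1 f) t x y)
    have h2 := sq_nonneg (ev (d2 f) t x y)
    exact ⟨by linarith, by linarith, by linarith⟩
  have hs := sqrt_nonneg C
  have hp : 0 ≤ 2 * (R0 + T + 1) := by linarith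
  have hp2 : 0 ≤ 2 * (R0 + T + 1) * √C := by positivity
  have hv := hf.sq_le hR ht htT fun x y => (hx x y).2.2
  intro x y
  obtain ⟨a, b, c⟩ := hx x y
  have := abs_le_sqrt a; have := abs_le_sqrt b; have := abs_le_sqrt c
  have h4 := abs_le_sqrt (hv x y)
  rw [sqrt_mul (sq_nonneg _), sqrt_sq hp] at h4
  exact ⟨by linarith, by linarith, by linarith, by linarith⟩

lemma en_om_le (f : SmoothAlg) (t x y : ℝ) :
    ev (en f) t x y ≤ ev (ef 3 f) t x y ∧
      ev (en (Om (Om (Om f)))) t x y ≤ ev (ef 3 f) t x y := by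
  refine ⟨lad_mono en_nn (Nat.zero_le 3) f t x y, ?_⟩
  have step : ∀ k g, ev (ef k (Om g)) t x y ≤ ev (ef (k + 1) g) t x y := by
    intro k g
    simp only [ef, lad, ev_add]
    have := lad_nonneg en_nn k g t x y
    have := lad_nonneg en_nn k (d1 g) t x y
    have := lad_nonneg en_nn k (d2 g) t x y
    linarith
  exact (step 0 _).trans ((step 1 _).trans (step 2 f))

/-- Uniform `C¹` bounds for the solutions and their angular derivatives on a fixed time
interval. -/
theorem crude_C1 (z1 z2 : SmoothAlg) {R0 : ℝ} (hR : 0 ≤ R0)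
    (hz1 : ∀ t x y, R0 ^ 2 < x ^ 2 + y ^ 2 → ev z1 t x y = 0)
    (hz2 : ∀ t x y, R0 ^ 2 < x ^ 2 + y ^ 2 → ev z2 t x y = 0) {T : ℝ} (hT : 0 ≤ T) :
    ∃ K lam1 : ℝ, 1 ≤ K ∧ 0 < lam1 ∧ ∀ lam, 0 < lam → lam ≤ lam1 → ∀ v w,
      Half lam z1 v w → Half lam z2 w v → ∀ t, 0 ≤ t → t ≤ T →
        C1Bd K t v ∧ C1Bd K t (Om (Om (Om v))) ∧ C1Bd K t w ∧ C1Bd K t (Om (Om (Om w))) := by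
  obtain ⟨C, lam1, hC, hl1, H⟩ := crude z1 z2 hR hz1 hz2 hT
  have hm : ∀ {t f}, C1Bd (√C + 2 * (R0 + T + 1) * √C) t f →
      C1Bd (1 + (√C + 2 * (R0 + T + 1) * √C)) t f := fun h x y =>
    ⟨by linarith [(h x y).1], by linarith [(h x y).2.1], by linarith [(h x y).2.2.1],
      by linarith [(h x y).2.2.2]⟩
  refine ⟨1 + (√C + 2 * (R0 + T + 1) * √C), lam1, ?_, hl1, ?_⟩
  · have : 0 ≤ √C + 2 * (R0 + T + 1) * √C := by positivity
    linarith
  intro lam h0 h1 v w hv hw t ht htT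
  have hcv := hv.coneSupp h0.le hR hz1
  have hcw := hw.coneSupp h0.le hR hz2
  have HH := H lam h0 h1 v w hv hw t ht htT
  exact ⟨hm (C1Bd_of_en hcv hR ht htT hC.le fun x y => (en_om_le v t x y).1.trans (HH x y).1),
    hm (C1Bd_of_en hcv.om.om.om hR ht htT hC.le
      fun x y => (en_om_le v t x y).2.trans (HH x y).1),
    hm (C1Bd_of_en hcw hR ht htT hC.le fun x y => (en_om_le w t x y).1.trans (HH x y).2),
    hm (C1Bd_of_en hcw.om.om.om hR ht htT hC.le
      fun x y => (en_om_le w t x y).2.trans (HH x y).2)⟩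

lemma dd3_phi (v : SmoothAlg) : dd3 (phi v) = phi (Om (Om (Om v))) := by
  simp only [dd3, phi, Derivation.leibniz, d2_cq, d2_Pol, mul_zero, add_zero, smul_eq_mul]

lemma abs_cos_mul_le {K X : ℝ} (y : ℝ) (h : |X| ≤ K) : |cos y * X| ≤ K := by
  rw [abs_mul]; nlinarith [abs_cos_le_one y, abs_nonneg X, abs_nonneg (cos y)]
lemma abs_sin_mul_le {K X : ℝ} (y : ℝ) (h : |X| ≤ K) : |sin y * X| ≤ K := by
  rw [abs_mul]; nlinarith [abs_sin_le_one y, abs_nonneg X, abs_nonneg (sin y)]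

/-- First derivatives of the profile at bounded radius, from first derivatives of the solution. -/
lemma phi_bounds {K r1 t s : ℝ} {f : SmoothAlg} (hK : 1 ≤ K) (hr : 1 ≤ t + s) (hr1 : t + s ≤ r1)
    (h : C1Bd K t f) (y : ℝ) :
    |ev (d0 (phi f)) t s y| ≤ 4 * r1 * K ∧ |ev (YY (phi f)) t s y| ≤ 12 * r1 * K ∧
      ev (ee (phi f)) t s y ≤ 84 * (r1 ^ 2 * K) ^ 2 := by
  obtain ⟨b0, b1, b2, b3⟩ := h ((t + s) * cos y) ((t + s) * sin y)
  simp only [← ev_Pol] at b0 b1 b2 b3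
  have hr2 : 1 / 2 < t + s := by linarith
  set r := t + s with hrd
  have hr0 : 0 < r := by linarith
  have hq : √r ≤ r1 := by
    have : √r ≤ r := by rw [sqrt_le_left hr0.le]; nlinarith
    linarith
  have hq0 := sqrt_nonneg r
  have hi : r⁻¹ ≤ 1 := inv_le_one_of_one_le₀ hr
  have hi0 : 0 < r⁻¹ := inv_pos.2 hr0
  have hr1' : 1 ≤ r1 := by linarith
  have c1 := abs_cos_mul_le y b2; have s2 := abs_sin_mul_le y b3
  have c2 := abs_cos_mul_le y b3; have s1 := abs_sin_mul_le y b2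
  have hb0 : |r⁻¹ * ev (Pol f) t s y| ≤ K := by
    rw [abs_mul, abs_of_pos hi0]; nlinarith [abs_nonneg (ev (Pol f) t s y)]
  have mulq : ∀ {X k : ℝ}, |X| ≤ k → |√r * X| ≤ r1 * k := fun {X k} hX => by
    rw [abs_mul, abs_of_nonneg hq0]
    exact mul_le_mul hq hX (abs_nonneg _) (by linarith)
  have e1 : ev (d1 (phi f)) t s y = √r * (1 / 2 * (r⁻¹ * ev (Pol f) t s y) +
      (cos y * ev (Pol (d1 f)) t s y + sin y * ev (Pol (d2 f)) t s y)) := by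
    simp only [phi, Derivation.leibniz, smul_eq_mul, ev_add, ev_mul, ev_d1_cq hr2, ev_smul,
      ev_d1_Pol, ev_cq hr2.le, ev_cRi hr2.le, ← hrd]
    ring
  have e0 : ev (d0 (phi f)) t s y = √r * (1 / 2 * (r⁻¹ * ev (Pol f) t s y) +
      (ev (Pol (d0 f)) t s y
        + (cos y * ev (Pol (d1 f)) t s y + sin y * ev (Pol (d2 f)) t s y))) := by
    simp only [phi, Derivation.leibniz, smul_eq_mul, ev_add, ev_mul, ev_d0_cq hr2, ev_smul,
      ev_d0_Pol, ev_cq hr2.le, ev_cRi hr2.le, ← hrd]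
    ring
  have e2 : ev (d2 (phi f)) t s y = r * (√r * (cos y * ev (Pol (d2 f)) t s y -
      sin y * ev (Pol (d1 f)) t s y)) := by
    have : d2 (phi f) = cq * Pol (Om f) := by
      simp only [phi, Derivation.leibniz, d2_cq, d2_Pol, mul_zero, add_zero, smul_eq_mul]
    rw [this, ev_mul, ev_cq hr2.le]
    simp only [ev_Pol, Om_apply, ev_sub, ev_mul, ev_cX, ev_cY, ← hrd]
    ring
  have f0 : |ev (d0 (phi f)) t s y| ≤ 4 * r1 * K := by
    rw [e0]
    refine (mulq (k := 4 * K) ?_).trans (by linarith)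
    rw [abs_le] at *; constructor <;> linarith
  have f1 : |ev (d1 (phi f)) t s y| ≤ 4 * r1 * K := by
    rw [e1]
    refine (mulq (k := 4 * K) ?_).trans (by linarith)
    rw [abs_le] at *; constructor <;> linarith
  have f2 : |ev (d2 (phi f)) t s y| ≤ 2 * (r1 ^ 2 * K) := by
    rw [e2, abs_mul, abs_of_pos hr0]
    have := mulq (X := cos y * ev (Pol (d2 f)) t s y - sin y * ev (Pol (d1 f)) t s y) (k := 2 * K)
      (by rw [abs_le] at *; constructor <;> linarith)
    calc _ ≤ r1 * (r1 * (2 * K)) := mul_le_mul hr1 this (abs_nonneg _) (by linarith)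
      _ = _ := by ring
  have f3 : |ev (YY (phi f)) t s y| ≤ 12 * r1 * K := by
    simp only [YY, ev_sub]
    rw [abs_le] at *; constructor <;> linarith
  refine ⟨f0, f3, ?_⟩
  simp only [ee, ev_add, ev_smul, ev_mul, ev_pow, ev_cRi hr2.le, ← hrd]
  have g0 := sq_le_sq' (neg_le_of_abs_le f0) (le_of_abs_le f0)
  have g2 := sq_le_sq' (neg_le_of_abs_le f2) (le_of_abs_le f2)
  have g3 := sq_le_sq' (neg_le_of_abs_le f3) (le_of_abs_le f3)
  have g4 : r⁻¹ ^ 2 ≤ 1 := pow_le_one₀ hi0.le hi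
  have g5 : (r1 * K) ^ 2 ≤ (r1 ^ 2 * K) ^ 2 := by
    apply pow_le_pow_left₀ (by positivity); gcongr; nlinarith
  have g6 : r⁻¹ ^ 2 * ev (d2 (phi f)) t s y ^ 2 ≤ 1 * ev (d2 (phi f)) t s y ^ 2 := by gcongr
  nlinarith

lemma BI_le_const {a b c d M t : ℝ} (hab : a ≤ b) (hcd : c ≤ d) {f : SmoothAlg}
    (h : ∀ x y, a ≤ x → x ≤ b → c ≤ y → y ≤ d → ev f t x y ≤ M) :
    BI a b c d f t ≤ M * ((b - a) * (d - c)) := by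
  refine (BI_mono hab hcd (g := algebraMap ℝ SmoothAlg M) (by simpa using h)).trans (le_of_eq ?_)
  simp [BI, SI]; ring

/-- The solutions give a pair in strip coordinates, with bounds uniform in `λ`. -/
theorem exists_strip (z1 z2 : SmoothAlg) {R0 a R : ℝ} (hR : 0 ≤ R0)
    (hz1 : ∀ t x y, R0 ^ 2 < x ^ 2 + y ^ 2 → ev z1 t x y = 0)
    (hz2 : ∀ t x y, R0 ^ 2 < x ^ 2 + y ^ 2 → ev z2 t x y = 0) (ha : a ≤ -1) (hRR : R0 + 1 ≤ R) :
    ∃ N lam1 : ℝ, 0 ≤ N ∧ 0 < lam1 ∧ ∀ lam, 0 < lam → lam ≤ lam1 → ∀ v w,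
      Half lam z1 v w → Half lam z2 w v → Strip a R N lam (phi v) (phi w) := by
  obtain ⟨K, lam1, hK, hl1, H⟩ := crude_C1 z1 z2 hR hz1 hz2 (T := 1 - a) (by linarith)
  set r1 := 1 - a + R with hr1
  have hr1' : 1 ≤ r1 := by linarith
  set M := 4 * (84 * (r1 ^ 2 * K) ^ 2) * ((R - a) * (π - -π)) with hM
  have hM0 : 0 ≤ M := by
    have := pi_pos
    have : 0 ≤ R - a := by linarith
    have : 0 ≤ π - -π := by linarith
    positivity
  have hrK : 0 ≤ r1 * K := by positivity
  refine ⟨M + 12 * r1 * K, lam1, by linarith, hl1, ?_⟩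
  intro lam h0 h1 v w hv hw
  have hcv := hv.coneSupp h0.le hR hz1
  have hcw := hw.coneSupp h0.le hR hz2
  obtain ⟨b1, b2, b3, b4⟩ := H lam h0 h1 v w hv hw (1 - a) (by linarith) le_rfl
  have key : ∀ f, C1Bd K (1 - a) f → ∀ x y, a ≤ x → x ≤ R →
    |ev (d0 (phi f)) (1 - a) x y| ≤ 4 * r1 * K ∧ |ev (YY (phi f)) (1 - a) x y| ≤ 12 * r1 * K ∧
      ev (ee (phi f)) (1 - a) x y ≤ 84 * (r1 ^ 2 * K) ^ 2 := fun f hf x y hx hxR =>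
    phi_bounds hK (by linarith) (by linarith) hf y
  refine ⟨ha, by linarith, by linarith, h0.le, hv.lin hcv hR hRR, hw.lin hcw hR hRR, ?_, ?_, ?_,
    ?_, ?_⟩
  · have : BI a R (-π) π (etot (phi v) (phi w)) (1 - a) ≤ M := by
      refine BI_le_const (by linarith) (by linarith [pi_pos]) fun x y hx hxR _ _ => ?_
      simp only [etot, dd3_phi, ev_add]
      linarith [(key _ b1 x y hx hxR).2.2, (key _ b2 x y hx hxR).2.2, (key _ b3 x y hx hxR).2.2,
        (key _ b4 x y hx hxR).2.2]
    linarith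
  · intro x y hx hxR _ _; linarith [(key _ b1 x y hx hxR).1]
  · intro x y hx hxR _ _; linarith [(key _ b3 x y hx hxR).1]
  · intro x y hx hxR _ _; linarith [(key _ b1 x y hx hxR).2.1]
  · intro x y hx hxR _ _; linarith [(key _ b3 x y hx hxR).2.1]

/-! ### The energy and the rescaled solution -/

lemma ConeSupp.compact {R0 t : ℝ} {f : SmoothAlg} (hf : ConeSupp R0 f) (hR : 0 ≤ R0)
    (ht : 0 ≤ t) : (∀ x y, (x, y) ∉ Set.Icc (-(R0 + t)) (R0 + t) ×ˢ Set.Icc (-(R0 + t)) (R0 + t) →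
      ev f t x y = 0) ∧ HasCompactSupport fun p : ℝ × ℝ => ev f t p.1 p.2 := by
  have h : ∀ x y, (x, y) ∉ Set.Icc (-(R0 + t)) (R0 + t) ×ˢ Set.Icc (-(R0 + t)) (R0 + t) →
      ev f t x y = 0 := by
    intro x y hxy
    refine hf t x y ht ?_
    by_contra hlt
    push Not at hlt
    refine hxy ⟨?_, ?_⟩
    · exact abs_le.1 (abs_le_of_sq_le_sq (by nlinarith [sq_nonneg y]) (by positivity))
    · exact abs_le.1 (abs_le_of_sq_le_sq (by nlinarith [sq_nonneg x]) (by positivity))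
  exact ⟨h, HasCompactSupport.intro (isCompact_Icc.prod isCompact_Icc) fun p hp => h p.1 p.2 hp⟩

lemma ConeSupp.integrable {R0 t : ℝ} {f : SmoothAlg} (hf : ConeSupp R0 f) (hR : 0 ≤ R0)
    (ht : 0 ≤ t) : Integrable fun p : ℝ × ℝ => ev f t p.1 p.2 :=
  Continuous.integrable_of_hasCompactSupport (by fun_prop) (hf.compact hR ht).2

lemma ConeSupp.integral_eq {R0 t ρ : ℝ} {f : SmoothAlg} (hf : ConeSupp R0 f) (hR : 0 ≤ R0)
    (ht : 0 ≤ t) (h : R0 + t < ρ) :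
    ∫ p : ℝ × ℝ, ev f t p.1 p.2 = BI (-ρ) ρ (-ρ) ρ f t := by
  have hle : -ρ ≤ ρ := by linarith
  rw [← setIntegral_eq_integral_of_forall_compl_eq_zero (s := Set.Ioc (-ρ) ρ ×ˢ Set.Ioc (-ρ) ρ)]
  · rw [Measure.volume_eq_prod, setIntegral_prod]
    · simp only [BI, SI, intervalIntegral.integral_of_le hle]
    · exact (hf.integrable hR ht).integrableOn
  · rintro ⟨x, y⟩ hxy
    refine (hf.compact hR ht).1 x y fun hm => hxy ?_
    exact ⟨⟨by linarith [hm.1.1], by linarith [hm.1.2]⟩, ⟨by linarith [hm.2.1], by linarith [hm.2.2]⟩⟩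

lemma ConeSupp.en {R0 : ℝ} {f : SmoothAlg} (hf : ConeSupp R0 f) : ConeSupp R0 (en f) := hf.ef 0

/-- The energy of a solution is nonincreasing. -/
lemma Half.antitone {lam R0 : ℝ} {z v w : SmoothAlg} (h : Half lam z v w) (hc : ConeSupp R0 v)
    (hR0 : 0 ≤ R0) (hlam : 0 ≤ lam) {s t : ℝ} (hs : 0 ≤ s) (hst : s ≤ t) :
    ∫ p : ℝ × ℝ, ev (en v) t p.1 p.2 ≤ ∫ p : ℝ × ℝ, ev (en v) s p.1 p.2 := by
  have ht : 0 ≤ t := hs.trans hst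
  set ρ := R0 + t + 1 with hρ
  rw [hc.en.integral_eq hR0 ht (ρ := ρ) (by linarith),
    hc.en.integral_eq hR0 hs (ρ := ρ) (by linarith)]
  have : AntitoneOn (BI (-ρ) ρ (-ρ) ρ (en v)) (Set.Icc s t) := by
    refine antitoneOn_of_deriv_nonpos (convex_Icc s t) (BI_continuous _ _ _ _ _).continuousOn
      (fun x _ => (BI_hasDerivAt _ _ _ _ _ x).differentiableAt.differentiableWithinAt) ?_
    intro x hx
    rw [interior_Icc] at hx
    have hx0 : 0 ≤ x := hs.trans hx.1.le
    have hxρ : R0 + x < ρ := by linarith [hx.2]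
    have hside : ∀ e, ConeSupp R0 (2 * (d0 v * Der e v)) :=
      fun e => ((hc.der e).mul_left _).mul_left _
    rw [(BI_hasDerivAt _ _ _ _ _ x).deriv, d0_en, BI_add, BI_add,
      ((hside _).BI_div hR0 hx0 hxρ).1, ((hside _).BI_div hR0 hx0 hxρ).2, add_zero, add_zero]
    have hle : -ρ ≤ ρ := by linarith
    have h2 := BI_mono hle hle (f := 2 * (d0 v * bx v)) (g := 0) (t := x) fun a b _ _ _ _ => by
      simp only [ev_mul, ev_ofNat, h.pde x a b hx0, ev_zero]
      have := mul_nonneg hlam (sq_nonneg (ev (d0 w) x a b * ev (d0 v) x a b))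
      nlinarith
    simpa using h2
  exact this ⟨le_rfl, hst⟩ ⟨hst, le_rfl⟩ hst

/-- A lower bound for the energy by the contribution of a sector of an annulus. -/
lemma ConeSupp.energy_ge {R0 t σ1 σ2 θ1 θ2 c : ℝ} {v : SmoothAlg} (hc : ConeSupp R0 v)
    (hR0 : 0 ≤ R0) (ht : 0 ≤ t) (hr : 1 ≤ t + σ1) (hσ : σ1 ≤ σ2) (hθ : θ1 ≤ θ2) (h1 : -π ≤ θ1)
    (h2 : θ2 ≤ π)
    (h : ∀ s y, σ1 < s → s < σ2 → θ1 < y → y < θ2 → c ≤ ev (PP (phi v)) t s y ^ 2) :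
    c * ((σ2 - σ1) * (θ2 - θ1)) ≤ ∫ p : ℝ × ℝ, ev (_root_.en v) t p.1 p.2 := by
  have hint := hc.en.integrable hR0 ht
  have hnn : 0 ≤ ∫ p : ℝ × ℝ, ev (_root_.en v) t p.1 p.2 :=
    integral_nonneg fun p => en_nn v t p.1 p.2
  rw [← ENNReal.ofReal_le_ofReal_iff hnn,
    ofReal_integral_eq_lintegral_ofReal hint (ae_of_all _ fun p => en_nn v t p.1 p.2),
    ← lintegral_comp_polarCoord_symm]
  set B : Set (ℝ × ℝ) := Set.Ioo (t + σ1) (t + σ2) ×ˢ Set.Ioo θ1 θ2 with hB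
  have hBs : B ⊆ polarCoord.target := by
    rintro ⟨r, y⟩ ⟨hr1, hy⟩
    rw [polarCoord_target]
    exact ⟨by simp only [Set.mem_Ioi]; linarith [hr1.1], by linarith [hy.1], by linarith [hy.2]⟩
  have hBm : MeasurableSet B := measurableSet_Ioo.prod measurableSet_Ioo
  calc ENNReal.ofReal (c * ((σ2 - σ1) * (θ2 - θ1)))
      ≤ ∫⁻ _ in B, ENNReal.ofReal c := by
        rw [setLIntegral_const, hB, Measure.volume_eq_prod, Measure.prod_prod, Real.volume_Ioo,
          Real.volume_Ioo]
        rcases le_or_gt c 0 with hc0 | hc0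
        · rw [ENNReal.ofReal_of_nonpos]
          · exact zero_le
          · exact mul_nonpos_of_nonpos_of_nonneg hc0
              (mul_nonneg (by linarith) (by linarith))
        · rw [ENNReal.ofReal_mul hc0.le, ENNReal.ofReal_mul (by linarith)]
          rw [add_sub_add_left_eq_sub]
    _ ≤ ∫⁻ p in B, ENNReal.ofReal p.1 •
          ENNReal.ofReal (ev (_root_.en v) t (polarCoord.symm p).1 (polarCoord.symm p).2) := by
        refine setLIntegral_mono' hBm ?_
        rintro ⟨r, y⟩ ⟨hr1, hy⟩
        have hr0 : 0 < r := by linarith [hr1.1]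
        have h3 := h (r - t) y (by linarith [hr1.1]) (by linarith [hr1.2]) hy.1 hy.2
        have hrr : 1 / 2 < t + (r - t) := by linarith [hr1.1]
        rw [PP_phi v hrr, mul_pow, ev_cq hrr.le, ev_Pol, add_sub_cancel, sq_sqrt hr0.le] at h3
        rw [polarCoord_symm_apply, smul_eq_mul, ← ENNReal.ofReal_mul hr0.le]
        refine ENNReal.ofReal_le_ofReal (h3.trans ?_)
        gcongr
        simp only [_root_.en, ev_add, ev_pow]
        have := sq_nonneg (ev (d1 v) t (r * cos y) (r * sin y))
        have := sq_nonneg (ev (d2 v) t (r * cos y) (r * sin y))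
        linarith
    _ ≤ _ := lintegral_mono_set hBs

/-- The normalized energy norm of a solution converges, with positive limit as soon as the energy
stays away from zero. -/
lemma Half.limit {lam R0 : ℝ} {z v w : SmoothAlg} (h : Half lam z v w) (hc : ConeSupp R0 v)
    (hR0 : 0 ≤ R0) (hlam : 0 ≤ lam) {c t0 : ℝ} (hc0 : 0 < c)
    (hlow : ∀ t, t0 ≤ t → c ≤ ∫ p : ℝ × ℝ, ev (en v) t p.1 p.2) :
    ∃ L, 0 < L ∧ Tendsto (fun t => ∫ p : ℝ × ℝ, ev (en v) t p.1 p.2) atTop (𝓝 L) := by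
  set E := fun t => ∫ p : ℝ × ℝ, ev (en v) t p.1 p.2 with hE
  have hanti : Antitone fun t => E (max t 0) := fun s t hst =>
    h.antitone hc hR0 hlam (le_max_right _ _) (max_le_max hst le_rfl)
  have hbdd : BddBelow (Set.range fun t => E (max t 0)) :=
    ⟨0, by rintro _ ⟨t, rfl⟩; exact integral_nonneg fun p => en_nn v _ p.1 p.2⟩
  have hlim := tendsto_atTop_ciInf hanti hbdd
  have hlim2 : Tendsto E atTop (𝓝 (⨅ t, E (max t 0))) := by
    refine hlim.congr' ?_
    filter_upwards [eventually_ge_atTop 0] with t ht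
    rw [max_eq_left ht]
  refine ⟨_, hc0.trans_le (ge_of_tendsto hlim2 ?_), hlim2⟩
  filter_upwards [eventually_ge_atTop t0] with t ht using hlow t ht

lemma pt_ev (f : SmoothAlg) : pt (ev f) = ev (d0 f) := by
  funext t x y; exact (ev_hasDerivAt_0 f t x y).deriv
lemma p1_ev (f : SmoothAlg) : p1 (ev f) = ev (d1 f) := by
  funext t x y; exact (ev_hasDerivAt_1 f t x y).deriv
lemma p2_ev (f : SmoothAlg) : p2 (ev f) = ev (d2 f) := by
  funext t x y; exact (ev_hasDerivAt_2 f t x y).deriv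

/-- The squared energy norm of `ε v` as an integral of the energy density of `v`. -/
lemma energySq_ev (ε : ℝ) (v : SmoothAlg) (t : ℝ) :
    energySq (ev (ε • v)) t = ε ^ 2 / 2 * ∫ p : ℝ × ℝ, ev (en v) t p.1 p.2 := by
  have e : ∀ p : ℝ × ℝ, ev (d0 (ε • v)) t p.1 p.2 ^ 2 + ev (d1 (ε • v)) t p.1 p.2 ^ 2
      + ev (d2 (ε • v)) t p.1 p.2 ^ 2 = ε ^ 2 * ev (en v) t p.1 p.2 := fun p => by
    simp only [Derivation.map_smul, ev_smul, en, ev_add, ev_pow]; ring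
  simp only [energySq, pt_ev, p1_ev, p2_ev, e]
  rw [integral_const_mul]; ring

/-- A function on the plane as a time-independent element of `SmoothAlg`. -/
def lift2 (f : ℝ → ℝ → ℝ) (hf : SmoothCompact2 f) : SmoothAlg :=
  ⟨fun p => f p.2.1 p.2.2, (hf.1.comp contDiff_snd : ContDiff ℝ (⊤ : ℕ∞) _)⟩

@[simp] lemma ev_lift2 (f : ℝ → ℝ → ℝ) (hf : SmoothCompact2 f) (t x y : ℝ) :
    ev (lift2 f hf) t x y = f x y := rfl
lemma d0_lift2 (f : ℝ → ℝ → ℝ) (hf : SmoothCompact2 f) : d0 (lift2 f hf) = 0 :=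
  ev_ext fun t x y => ev_d0_eq (hasDerivAt_const t (f x y))

/-- A smooth function with Cauchy data `(f, g)` at `t = 0`. -/
def dat (f g : ℝ → ℝ → ℝ) (hf : SmoothCompact2 f) (hg : SmoothCompact2 g) : SmoothAlg :=
  lift2 f hf + cT * lift2 g hg

lemma SmoothCompact2.exists_radius {f : ℝ → ℝ → ℝ} (hf : SmoothCompact2 f) :
    ∃ R, 0 ≤ R ∧ ∀ x y, R ^ 2 < x ^ 2 + y ^ 2 → f x y = 0 := by
  obtain ⟨R, hR⟩ := hf.2.isBounded.subset_closedBall 0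
  refine ⟨2 * max R 0, by positivity, fun x y hxy => ?_⟩
  by_contra hne
  have : (x, y) ∈ Metric.closedBall (0 : ℝ × ℝ) R := hR (subset_tsupport _ hne)
  rw [mem_closedBall_zero_iff, Prod.norm_def, max_le_iff, norm_eq_abs, norm_eq_abs] at this
  have hx := this.1.trans (le_max_left R 0)
  have hy := this.2.trans (le_max_left R 0)
  have h1 := sq_le_sq' (neg_le_of_abs_le hx) (le_of_abs_le hx)
  have h2 := sq_le_sq' (neg_le_of_abs_le hy) (le_of_abs_le hy)
  nlinarith [sq_nonneg (max R 0)]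

/-- Rescaling by `ε` turns a solution of the Cauchy problem into a solution of the system with
coupling `λ = ε²` and data of unit size. -/
lemma IsSolution.half {ε : ℝ} (hε : 0 < ε) {f1 f2 g1 g2 : ℝ → ℝ → ℝ} (hf1 : SmoothCompact2 f1)
    (hf2 : SmoothCompact2 f2) (hg1 : SmoothCompact2 g1) (hg2 : SmoothCompact2 g2)
    {u1 u2 : ℝ → ℝ → ℝ → ℝ} (h : IsSolution ε f1 f2 g1 g2 u1 u2) :
    ∃ v w : SmoothAlg, u1 = ev (ε • v) ∧ u2 = ev (ε • w) ∧
      Half (ε ^ 2) (dat f1 g1 hf1 hg1) v w ∧ Half (ε ^ 2) (dat f2 g2 hf2 hg2) w v := by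
  obtain ⟨U, hU⟩ : ∃ U : SmoothAlg, u1 = ev U := ⟨⟨_, h.smooth1⟩, rfl⟩
  obtain ⟨V, hV⟩ : ∃ V : SmoothAlg, u2 = ev V := ⟨⟨_, h.smooth2⟩, rfl⟩
  have hUv : U = ε • (ε⁻¹ • U) := by rw [smul_smul, mul_inv_cancel₀ hε.ne', one_smul]
  have hVw : V = ε • (ε⁻¹ • V) := by rw [smul_smul, mul_inv_cancel₀ hε.ne', one_smul]
  generalize ε⁻¹ • U = v at hUv
  generalize ε⁻¹ • V = w at hVw
  subst hUv hVw hU hV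
  refine ⟨v, w, rfl, rfl, ⟨?_, ?_, ?_⟩, ⟨?_, ?_, ?_⟩⟩
  · have hp : ∀ t, 0 < t → ∀ x y, ev (bx v) t x y =
        ev ((-(ε ^ 2)) • (d0 w ^ 2 * d0 v)) t x y := fun t ht x y => by
      have := h.pde1 t x y ht
      simp only [dAlembert, pt_ev, p1_ev, p2_ev, Derivation.map_smul, ev_smul] at this
      apply mul_left_cancel₀ hε.ne'
      simp only [bx, ev_sub, ev_smul, ev_mul, ev_pow]
      linear_combination this
    intro t x y ht
    rw [ev_eq_of_pos (fun t ht => hp t ht x y) t ht]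
    simp only [ev_smul, ev_mul, ev_pow]; ring
  · intro x y
    have := h.init1 x y
    simpa [dat, hε.ne'] using this
  · intro x y
    have := h.initd1 x y
    rw [pt_ev, Derivation.map_smul, ev_smul] at this
    simpa [dat, hε.ne', d0_lift2] using this
  · have hp : ∀ t, 0 < t → ∀ x y, ev (bx w) t x y =
        ev ((-(ε ^ 2)) • (d0 v ^ 2 * d0 w)) t x y := fun t ht x y => by
      have := h.pde2 t x y ht
      simp only [dAlembert, pt_ev, p1_ev, p2_ev, Derivation.map_smul, ev_smul] at this
      apply mul_left_cancel₀ hε.ne'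
      simp only [bx, ev_sub, ev_smul, ev_mul, ev_pow]
      linear_combination this
    intro t x y ht
    rw [ev_eq_of_pos (fun t ht => hp t ht x y) t ht]
    simp only [ev_smul, ev_mul, ev_pow]; ring
  · intro x y
    have := h.init2 x y
    simpa [dat, hε.ne'] using this
  · intro x y
    have := h.initd2 x y
    rw [pt_ev, Derivation.map_smul, ev_smul] at this
    simpa [dat, hε.ne', d0_lift2] using this

/-! ### Line integrals of a solution -/

/-- Pullback by `(t, σ, τ) ↦ (t, (t + σ) ω + τ ω^⊥)`. -/
def Wp (w1 w2 : ℝ) (v : SmoothAlg) : SmoothAlg :=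
  ⟨fun p => v.1 (p.1, (p.1 + p.2.1) * w1 - p.2.2 * w2, (p.1 + p.2.1) * w2 + p.2.2 * w1),
    ((smooth_contDiff v).comp (by fun_prop) : ContDiff ℝ (⊤ : ℕ∞) _)⟩

lemma ev_Wp (w1 w2 : ℝ) (v : SmoothAlg) (t s τ : ℝ) : ev (Wp w1 w2 v) t s τ =
    ev v t ((t + s) * w1 - τ * w2) ((t + s) * w2 + τ * w1) := rfl

/-- The derivative in the direction `ω`. -/
def Xo (w1 w2 : ℝ) (v : SmoothAlg) : SmoothAlg := w1 • d1 v + w2 • d2 v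

lemma d0_Wp (w1 w2 : ℝ) (v : SmoothAlg) : d0 (Wp w1 w2 v) = Wp w1 w2 (d0 v + Xo w1 w2 v) :=
  ev_ext fun t s τ => by
    have h0 : HasDerivAt (fun t : ℝ => t + s) 1 t := (hasDerivAt_id t).add_const s
    refine ev_d0_eq ((ev_hasDerivAt_curve v (hasDerivAt_id t)
      ((h0.mul_const w1).sub_const (τ * w2)) ((h0.mul_const w2).add_const (τ * w1))).congr_deriv ?_)
    simp only [ev_Wp, Xo, ev_add, ev_smul, id]; ring

lemma d1_Wp (w1 w2 : ℝ) (v : SmoothAlg) : d1 (Wp w1 w2 v) = Wp w1 w2 (Xo w1 w2 v) :=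
  ev_ext fun t s τ => by
    have h0 : HasDerivAt (fun s : ℝ => t + s) 1 s := (hasDerivAt_id s).const_add t
    refine ev_d1_eq ((ev_hasDerivAt_curve v (hasDerivAt_const s t)
      ((h0.mul_const w1).sub_const (τ * w2)) ((h0.mul_const w2).add_const (τ * w1))).congr_deriv ?_)
    simp only [ev_Wp, Xo, ev_add, ev_smul]; ring

lemma d2_Wp (w1 w2 : ℝ) (v : SmoothAlg) : d2 (Wp w1 w2 v) = Wp w1 w2 (Xo (-w2) w1 v) :=
  ev_ext fun t s τ => by
    refine ev_d2_eq ((ev_hasDerivAt_curve v (hasDerivAt_const τ t)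
      (((hasDerivAt_id τ).mul_const w2).const_sub ((t + s) * w1))
      (((hasDerivAt_id τ).mul_const w1).const_add ((t + s) * w2))).congr_deriv ?_)
    simp only [ev_Wp, Xo, ev_add, ev_smul, id]; ring

/-- The derivative `∂ₜ - ∂_ω`. -/
def Xm (w1 w2 : ℝ) (v : SmoothAlg) : SmoothAlg := d0 v - Xo w1 w2 v

lemma d0_Wp_Xm {w1 w2 : ℝ} (h : w1 ^ 2 + w2 ^ 2 = 1) (v : SmoothAlg) :
    d0 (Wp w1 w2 (Xm w1 w2 v)) = Wp w1 w2 (bx v) + d2 (Wp w1 w2 (Xo (-w2) w1 v)) := by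
  rw [d0_Wp, d2_Wp]
  refine ev_ext fun t s τ => ?_
  simp only [ev_add, ev_Wp]
  simp only [Xm, Xo, map_sub, map_add, Derivation.map_smul, ev_add, ev_sub, ev_smul, bx,
    Der_comm (0, 1, 0) (1, 0, 0), Der_comm (0, 0, 1) (1, 0, 0), Der_comm (0, 0, 1) (0, 1, 0)]
  linear_combination (-ev (d1 (d1 v)) t ((t + s) * w1 - τ * w2) ((t + s) * w2 + τ * w1)
    - ev (d2 (d2 v)) t ((t + s) * w1 - τ * w2) ((t + s) * w2 + τ * w1)) * h

lemma Wp_norm {w1 w2 : ℝ} (h : w1 ^ 2 + w2 ^ 2 = 1) (r τ : ℝ) :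
    (r * w1 - τ * w2) ^ 2 + (r * w2 + τ * w1) ^ 2 = r ^ 2 + τ ^ 2 := by
  linear_combination (r ^ 2 + τ ^ 2) * h

lemma ConeSupp.wp {R0 t s τ w1 w2 : ℝ} {f : SmoothAlg} (hf : ConeSupp R0 f)
    (h : w1 ^ 2 + w2 ^ 2 = 1) (ht : 0 ≤ t) (hlt : (R0 + t) ^ 2 < (t + s) ^ 2 + τ ^ 2) :
    ev (Wp w1 w2 f) t s τ = 0 := by
  rw [ev_Wp]; exact hf _ _ _ ht (by rwa [Wp_norm h])

lemma ConeSupp.xo {R0 : ℝ} {f : SmoothAlg} (hf : ConeSupp R0 f) (w1 w2 : ℝ) :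
    ConeSupp R0 (Xo w1 w2 f) := fun t x y h1 h2 => by
  simp [Xo, hf.der (0, 1, 0) t x y h1 h2, hf.der (0, 0, 1) t x y h1 h2]
lemma ConeSupp.xm {R0 : ℝ} {f : SmoothAlg} (hf : ConeSupp R0 f) (w1 w2 : ℝ) :
    ConeSupp R0 (Xm w1 w2 f) := fun t x y h1 h2 => by
  simp [Xm, hf.der (1, 0, 0) t x y h1 h2, hf.xo w1 w2 t x y h1 h2]

/-- The integral of `(∂ₜ - ∂_ω) v` over the lines `x · ω = t + σ` is conserved by the free
evolution, and almost conserved for small coupling. -/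
lemma Half.line_le {lam R0 T K ρ w1 w2 : ℝ} {z v w : SmoothAlg} (h : Half lam z v w)
    (hc : ConeSupp R0 v) (hR0 : 0 ≤ R0) (hlam : 0 ≤ lam) (hT : 0 ≤ T) (hw : w1 ^ 2 + w2 ^ 2 = 1)
    (hK : ∀ t, 0 ≤ t → t ≤ T → C1Bd K t v ∧ C1Bd K t w) (hρ : R0 + T < ρ) (σ : ℝ) :
    |SI (-ρ) ρ (Wp w1 w2 (Xm w1 w2 v)) T σ - SI (-ρ) ρ (Wp w1 w2 (Xm w1 w2 v)) 0 σ| ≤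
      lam * K ^ 3 * (2 * ρ) * T := by
  have hρ0 : 0 < ρ := by linarith
  have hder : ∀ t, 0 ≤ t → t ≤ T → HasDerivAt (fun t => SI (-ρ) ρ (Wp w1 w2 (Xm w1 w2 v)) t σ)
      (SI (-ρ) ρ (Wp w1 w2 (bx v)) t σ) t := by
    intro t ht htT
    have := SI_hasDerivAt_0 (-ρ) ρ (Wp w1 w2 (Xm w1 w2 v)) t σ
    rw [d0_Wp_Xm hw, SI_add] at this
    refine this.congr_deriv ?_
    rw [add_eq_left, SI_d2, (hc.xo _ _).wp hw ht, (hc.xo _ _).wp hw ht, sub_self]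
    · nlinarith [sq_nonneg (t + σ)]
    · nlinarith [sq_nonneg (t + σ)]
  have hb := abs_sub_le_of_deriv (M := lam * K ^ 3 * (2 * ρ)) hT
    (fun s hs hsT => hder s hs hsT) ?_
  · simpa using hb
  intro t ht htT
  obtain ⟨h1, h2⟩ := hK t ht htT
  have := intervalIntegral.norm_integral_le_of_norm_le_const (a := -ρ) (b := ρ)
    (f := fun y => ev (Wp w1 w2 (bx v)) t σ y) (C := lam * K ^ 3) fun y _ => by
      rw [ev_Wp, h.pde _ _ _ ht, norm_eq_abs, abs_mul, abs_mul, abs_neg, abs_of_nonneg hlam, abs_pow]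
      have b1 := (h1 ((t + σ) * w1 - y * w2) ((t + σ) * w2 + y * w1)).2.1
      have b2 := (h2 ((t + σ) * w1 - y * w2) ((t + σ) * w2 + y * w1)).2.1
      have hK0 : 0 ≤ K := (abs_nonneg _).trans b1
      calc _ ≤ lam * K ^ 2 * K := by gcongr
        _ = _ := by ring
  rw [norm_eq_abs, sub_neg_eq_add, abs_of_pos (by linarith : 0 < ρ + ρ), ← two_mul] at this
  exact this

/-! ### Drift and spatial Lipschitz bounds of the profile -/

lemma abs_sub_le_of_deriv_le {g g' G G' : ℝ → ℝ} {a b : ℝ} (hab : a ≤ b)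
    (hg : ∀ s, a ≤ s → s ≤ b → HasDerivAt g (g' s) s)
    (hG : ∀ s, a ≤ s → s ≤ b → HasDerivAt G (G' s) s)
    (h : ∀ s, a ≤ s → s ≤ b → |g' s| ≤ G' s) : |g b - g a| ≤ G b - G a := by
  have key : ∀ (F F' : ℝ → ℝ), (∀ s, a ≤ s → s ≤ b → HasDerivAt F (F' s) s) →
      (∀ s, a ≤ s → s ≤ b → 0 ≤ F' s) → F a ≤ F b := fun F F' hF h0 =>
    monotoneOn_of_hasDerivWithinAt_nonneg (convex_Icc a b)
      (fun s hs => (hF s hs.1 hs.2).continuousAt.continuousWithinAt)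
      (fun s hs => (hF s (interior_subset hs).1 (interior_subset hs).2).hasDerivWithinAt)
      (fun s hs => h0 s (interior_subset hs).1 (interior_subset hs).2)
      (Set.left_mem_Icc.2 hab) (Set.right_mem_Icc.2 hab) hab
  have h1 := key (fun s => G s - g s) _ (fun s h1 h2 => (hG s h1 h2).sub (hg s h1 h2))
    fun s h1 h2 => by linarith [le_abs_self (g' s), h s h1 h2]
  have h2 := key (fun s => G s + g s) _ (fun s h1 h2 => (hG s h1 h2).add (hg s h1 h2))
    fun s h1 h2 => by linarith [neg_abs_le (g' s), h s h1 h2]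
  rw [abs_le]; constructor <;> linarith

lemma hasDerivAt_neg_two_div_sqrt {a t C : ℝ} (h : 0 < t + a) :
    HasDerivAt (fun t => -(2 * C) / √(t + a)) (C * (1 / ((t + a) * √(t + a)))) t := by
  have h1 : HasDerivAt (fun t => √(t + a)) (1 / (2 * √(t + a))) t :=
    ((hasDerivAt_id t).add_const a).sqrt h.ne'
  have hs := sqrt_pos.2 h
  refine ((hasDerivAt_const t (-(2 * C))).div h1 hs.ne').congr_deriv ?_
  rw [sq_sqrt h.le]; field_simp; ring

/-- The profile converges at rate `t^{-1/2}` up to a slow drift caused by the coupling. -/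
lemma drift_le {a C lam t1 t2 x y : ℝ} {f : SmoothAlg} (hC : 0 ≤ C) (hlam : 0 ≤ lam)
    (h1 : 1 - a ≤ t1) (h12 : t1 ≤ t2)
    (h : ∀ t, 1 - a ≤ t → |ev (d0 f) t x y| ≤
      C * (1 / ((t + a) * √(t + a))) + C * lam * (1 / (t + a))) :
    |ev f t2 x y - ev f t1 x y| ≤ 2 * C / √(t1 + a) + C * lam * (t2 - t1) := by
  have := abs_sub_le_of_deriv_le (g := fun t => ev f t x y)
    (G := fun t => -(2 * C) / √(t + a) + C * lam * t)
    (G' := fun t => C * (1 / ((t + a) * √(t + a))) + C * lam) h12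
    (fun s _ _ => ev_hasDerivAt_0 f s x y)
    (fun s hs _ => (hasDerivAt_neg_two_div_sqrt (by linarith)).add
      (((hasDerivAt_id s).const_mul (C * lam)).congr_deriv (by simp)))
    (fun s hs _ => (h s (h1.trans hs)).trans ?_)
  · have hp : 0 ≤ 2 * C / √(t2 + a) := by positivity
    rw [neg_div, neg_div] at this
    linarith
  · have : 1 / (s + a) ≤ 1 := by rw [div_le_one (by linarith)]; linarith
    have : C * lam * (1 / (s + a)) ≤ C * lam * 1 := by gcongr
    linarith

/-- The strip bounds hold for all `σ ≥ a`. -/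
lemma SB.ext {a R C lam : ℝ} {φ : SmoothAlg} (h : SB a R C lam φ) (hs : SuppR R φ) (ha : a ≤ -1)
    (hC : 0 ≤ C) (hlam : 0 ≤ lam) (t : ℝ) (ht : 1 - a ≤ t) (x y : ℝ) (hx : a ≤ x) :
    |ev φ t x y| ≤ C * √(t + a) ∧ |ev (d2 φ) t x y| ≤ C * √(t + a) ∧
    |ev (d0 φ) t x y| ≤ C / (t + a) ∧ |ev (YY φ) t x y| ≤ C ∧
    |ev (d0 (YY φ)) t x y| ≤ C * (1 / ((t + a) * √(t + a))) + C * lam * (1 / (t + a)) := by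
  by_cases hR : x ≤ R
  · exact ⟨h.phi t ht x y hx hR, h.phi2 t ht x y hx hR, h.Lam t ht x y hx hR, h.Y t ht x y hx hR,
      h.dY t ht x y hx hR⟩
  · have h1 : 0 < t := by linarith
    have h2 : 1 / 2 < t + x := by linarith
    have h3 : R - 1 < x := by linarith
    have hy : SuppR R (YY φ) := fun t s y h1 h2 h3 => by
      simp [YY, hs.der _ t s y h1 h2 h3]
    have hr : 0 < t + a := by linarith
    rw [hs t x y h1 h2 h3, hs.der _ t x y h1 h2 h3, hs.der _ t x y h1 h2 h3, hy t x y h1 h2 h3,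
      hy.der _ t x y h1 h2 h3, abs_zero]
    refine ⟨?_, ?_, ?_, hC, ?_⟩ <;> positivity

lemma SuppR.yy {R : ℝ} {φ : SmoothAlg} (hs : SuppR R φ) : SuppR R (YY φ) :=
  fun t s y h1 h2 h3 => by simp [YY, hs.der _ t s y h1 h2 h3]

lemma YY_phi (v : SmoothAlg) {t s : ℝ} (h : 1 / 2 < t + s) (y : ℝ) :
    ev (YY (phi v)) t s y =
      ev (cq * (Pol (d0 v) - d1 (Pol v)) - (1 / 2 : ℝ) • (cRi * (cq * Pol v))) t s y := by
  have := PP_phi v h y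
  simp only [PP, ev_sub] at this
  simp only [YY, ev_sub, this, ev_mul, ev_smul]
  simp only [phi, Derivation.leibniz, smul_eq_mul, ev_add, ev_mul, ev_d1_cq h, ev_smul]
  ring

lemma C1Bd.pol {K t : ℝ} {f : SmoothAlg} (h : C1Bd K t f) (s y : ℝ) :
    |ev (Pol f) t s y| ≤ K ∧ |ev (Pol (d0 f)) t s y| ≤ K ∧ |ev (d1 (Pol f)) t s y| ≤ 2 * K := by
  obtain ⟨b0, b1, b2, b3⟩ := h ((t + s) * cos y) ((t + s) * sin y)
  simp only [← ev_Pol] at *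
  refine ⟨b0, b1, ?_⟩
  rw [ev_d1_Pol]
  exact (abs_add_le _ _).trans (by linarith [abs_cos_mul_le y b2, abs_sin_mul_le y b3])

lemma abs_mul_le_mul {q X k r : ℝ} (hq : 0 ≤ q) (hqr : q ≤ r) (hX : |X| ≤ k) :
    |q * X| ≤ r * k := by
  rw [abs_mul, abs_of_nonneg hq]
  exact mul_le_mul hqr hX (abs_nonneg _) (hq.trans hqr)

lemma abs_add5_le {a b c d e A B C D E : ℝ} (ha : |a| ≤ A) (hb : |b| ≤ B) (hc : |c| ≤ C)
    (hd : |d| ≤ D) (he : |e| ≤ E) : |a - b + c - d + e| ≤ A + B + C + D + E := by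
  rw [abs_le] at *
  constructor <;> linarith [ha.1, hb.1, hc.1, hd.1, he.1, ha.2, hb.2, hc.2, hd.2, he.2]

/-- Spatial derivatives of `Yφ` at bounded radius, from first derivatives of the solution and of its
translation and rotation derivatives. -/
lemma YY_phi_C1 {K r1 t s : ℝ} {v : SmoothAlg} (hK : 1 ≤ K) (ht : 0 < t) (hr : 1 ≤ t + s)
    (hr1 : t + s ≤ r1) (h0 : C1Bd K t v) (h1 : C1Bd K t (d1 v)) (h2 : C1Bd K t (d2 v))
    (h3 : C1Bd K t (Om v)) (y : ℝ) :
    |ev (d1 (YY (phi v))) t s y| ≤ 12 * r1 * K ∧ |ev (d2 (YY (phi v))) t s y| ≤ 12 * r1 * K := by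
  have hr2 : 1 / 2 < t + s := by linarith
  have hr0 : 0 < t + s := by linarith
  have hq : √(t + s) ≤ r1 := by
    have : √(t + s) ≤ t + s := by rw [sqrt_le_left hr0.le]; nlinarith
    linarith
  have hq0 := sqrt_nonneg (t + s)
  have hi : (t + s)⁻¹ ≤ 1 := inv_le_one_of_one_le₀ hr
  have hi0 : 0 < (t + s)⁻¹ := inv_pos.2 hr0
  have hr1' : 1 ≤ r1 := by linarith
  have hrK : 0 ≤ r1 * K := by positivity
  obtain ⟨p, p0, p1⟩ := h0.pol s y
  obtain ⟨a, a0, a1⟩ := h1.pol s y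
  obtain ⟨b, b0, b1⟩ := h2.pol s y
  obtain ⟨c, c0, c1⟩ := h3.pol s y
  constructor
  · have hA1 : |ev (d1 (Pol (d0 v))) t s y| ≤ 2 * K := by
      rw [ev_d1_Pol, Der_comm (0, 1, 0) (1, 0, 0) v, Der_comm (0, 0, 1) (1, 0, 0) v]
      exact (abs_add_le _ _).trans (by linarith [abs_cos_mul_le y a0, abs_sin_mul_le y b0])
    have hB1 : |ev (d1 (d1 (Pol v))) t s y| ≤ 4 * K := by
      have : d1 (d1 (Pol v)) = cC * d1 (Pol (d1 v)) + cS * d1 (Pol (d2 v)) := by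
        rw [d1_Pol v, map_add, Derivation.leibniz, Derivation.leibniz, d1_cC, d1_cS]
        simp
      rw [this, ev_add, ev_mul, ev_mul, ev_cC, ev_cS]
      exact (abs_add_le _ _).trans (by linarith [abs_cos_mul_le y a1, abs_sin_mul_le y b1])
    rw [Der_eq_strip (0, 1, 0) (fun t s y _ h2 => YY_phi v h2 y) t s y ht hr2]
    simp only [map_sub, Derivation.map_smul, Derivation.leibniz, smul_eq_mul, ev_sub, ev_add,
      ev_mul, ev_smul, ev_d1_cq hr2, ev_d1_cRi hr2, ev_cRi hr2.le, ev_cq hr2.le]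
    have key := abs_mul_le_mul hq0 hq (abs_add5_le hA1 hB1
      (abs_mul_le_mul (by positivity) (by linarith : 1 / 2 * (t + s)⁻¹ ≤ 1) p0)
      (abs_mul_le_mul hi0.le hi p1)
      (abs_mul_le_mul (q := 1 / 4 * (t + s)⁻¹ ^ 2) (r := 1) (by positivity) (by nlinarith) p))
    refine (le_of_eq ?_).trans (key.trans ?_)
    · congr 1; ring
    · nlinarith
  · have hA2 : ev (d2 (Pol (d0 v))) t s y = ev (Pol (d0 (Om v))) t s y := by
      rw [d2_Pol, d0_Om]
    have hB2 : d2 (d1 (Pol v)) = d1 (Pol (Om v)) := by rw [Der_comm, d2_Pol]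
    have hcR : ev (d2 cRi) t s y = 0 := by rw [d2_cRi, ev_zero]
    have hcq : ev (d2 cq) t s y = 0 := by rw [d2_cq, ev_zero]
    rw [Der_eq_strip (0, 0, 1) (fun t s y _ h2 => YY_phi v h2 y) t s y ht hr2]
    simp only [map_sub, Derivation.map_smul, Derivation.leibniz, smul_eq_mul, ev_sub, ev_add,
      ev_mul, ev_smul, hcR, hcq, ev_cRi hr2.le, ev_cq hr2.le, hA2, hB2, d2_Pol v]
    have key := abs_mul_le_mul hq0 hq (abs_add5_le c0 c1 (abs_zero.le)
      (abs_mul_le_mul (by positivity) (by linarith : 1 / 2 * (t + s)⁻¹ ≤ 1) c) (abs_zero.le))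
    refine (le_of_eq ?_).trans (key.trans ?_)
    · congr 1; ring
    · nlinarith

/-- Uniform Lipschitz bounds for the profile at a fixed time. -/
theorem lip_Y (z1 z2 : SmoothAlg) {R0 a R T : ℝ} (hR : 0 ≤ R0)
    (hz1 : ∀ t x y, R0 ^ 2 < x ^ 2 + y ^ 2 → ev z1 t x y = 0)
    (hz2 : ∀ t x y, R0 ^ 2 < x ^ 2 + y ^ 2 → ev z2 t x y = 0)
    (hRR : R0 + 1 ≤ R) (ha : a ≤ -1) (hT : 1 - a ≤ T) :
    ∃ L lam1 : ℝ, 0 ≤ L ∧ 0 < lam1 ∧ ∀ lam, 0 < lam → lam ≤ lam1 → ∀ v w,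
      Half lam z1 v w → Half lam z2 w v → ∀ x x' y y', a ≤ x → a ≤ x' →
        |ev (YY (phi v)) T x y - ev (YY (phi v)) T x' y'| ≤ L * (|x - x'| + |y - y'|) := by
  have hT0 : 0 < T := by linarith
  obtain ⟨C, lam1, hC, hl1, H⟩ := crude z1 z2 hR hz1 hz2 hT0.le
  set K := 1 + (√C + 2 * (R0 + T + 1) * √C) with hKd
  have hm : ∀ {f}, C1Bd (√C + 2 * (R0 + T + 1) * √C) T f → C1Bd K T f := fun h x y =>
    ⟨by linarith [(h x y).1], by linarith [(h x y).2.1], by linarith [(h x y).2.2.1],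
      by linarith [(h x y).2.2.2]⟩
  have hK : 1 ≤ K := by
    have : 0 ≤ √C + 2 * (R0 + T + 1) * √C := by positivity
    linarith
  have hTR : 0 ≤ T + R := by linarith
  refine ⟨12 * (T + R) * K, lam1, by positivity, hl1, ?_⟩
  intro lam h0 h1 v w hv hw
  have hcv := hv.coneSupp h0.le hR hz1
  have hs : SuppR R (phi v) := (hv.lin hcv hR hRR).supp
  have HH := fun x y => (H lam h0 h1 v w hv hw T hT0.le le_rfl x y).1
  have e1 : ∀ x y, ev (en v) T x y ≤ C ∧ ev (en (d1 v)) T x y ≤ C ∧ ev (en (d2 v)) T x y ≤ C ∧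
      ev (en (Om v)) T x y ≤ C := fun x y => by
    have h0 := (lad_mono en_nn (by norm_num : 1 ≤ 3) v T x y).trans (HH x y)
    simp only [lad, ev_add] at h0
    have := en_nn v T x y; have := en_nn (d1 v) T x y; have := en_nn (d2 v) T x y
    have := en_nn (Om v) T x y
    refine ⟨?_, ?_, ?_, ?_⟩ <;> linarith
  have b0 := hm (C1Bd_of_en hcv hR hT0.le le_rfl hC.le fun x y => (e1 x y).1)
  have b1 := hm (C1Bd_of_en (hcv.der _) hR hT0.le le_rfl hC.le fun x y => (e1 x y).2.1)
  have b2 := hm (C1Bd_of_en (hcv.der _) hR hT0.le le_rfl hC.le fun x y => (e1 x y).2.2.1)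
  have b3 := hm (C1Bd_of_en hcv.om hR hT0.le le_rfl hC.le fun x y => (e1 x y).2.2.2)
  have key : ∀ x y, a ≤ x → |ev (d1 (YY (phi v))) T x y| ≤ 12 * (T + R) * K ∧
      |ev (d2 (YY (phi v))) T x y| ≤ 12 * (T + R) * K := fun x y hx => by
    by_cases hxR : x ≤ R
    · exact YY_phi_C1 hK hT0 (by linarith) (by linarith) b0 b1 b2 b3 y
    · rw [hs.yy.der _ T x y hT0 (by linarith) (by linarith),
        hs.yy.der _ T x y hT0 (by linarith) (by linarith), abs_zero]
      constructor <;> positivity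
  have hx : ∀ x x' y, a ≤ x → a ≤ x' → |ev (YY (phi v)) T x y - ev (YY (phi v)) T x' y| ≤
      12 * (T + R) * K * |x - x'| := by
    intro x x' y h1 h2
    wlog h : x' ≤ x generalizing x x'
    · rw [abs_sub_comm, abs_sub_comm x]; exact this x' x h2 h1 (le_of_not_ge h)
    rw [abs_of_nonneg (sub_nonneg.2 h)]
    exact abs_sub_le_of_deriv h (fun s _ _ => ev_hasDerivAt_1 _ T s y)
      fun s hs _ => (key s y (h2.trans hs)).1
  have hy : ∀ x y y', a ≤ x → |ev (YY (phi v)) T x y - ev (YY (phi v)) T x y'| ≤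
      12 * (T + R) * K * |y - y'| := by
    intro x y y' h1
    wlog h : y' ≤ y generalizing y y'
    · rw [abs_sub_comm, abs_sub_comm y]; exact this y' y (le_of_not_ge h)
    rw [abs_of_nonneg (sub_nonneg.2 h)]
    exact abs_sub_le_of_deriv h (fun s _ _ => ev_hasDerivAt_2 _ T x s)
      fun s hs _ => (key x s h1).2
  intro x x' y y' h1 h2
  rw [mul_add]
  exact (abs_sub_le _ _ _).trans (add_le_add (hx x x' y h1 h2) (hy x' y y' h2))

/-! ### Parabolic coordinates near the light cone -/

lemma abs_arctan_le_abs (x : ℝ) : |arctan x| ≤ |x| := by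
  have h : ∀ y, HasDerivAt arctan (1 / (1 + y ^ 2)) y := hasDerivAt_arctan
  have key := (convex_univ (𝕜 := ℝ) (E := ℝ)).norm_image_sub_le_of_norm_hasDerivWithin_le
    (C := 1) (fun y _ => (h y).hasDerivWithinAt) (fun y _ => by
      rw [norm_eq_abs, abs_of_nonneg (by positivity), div_le_one (by positivity)]
      nlinarith [sq_nonneg y]) (Set.mem_univ 0) (Set.mem_univ x)
  simpa using key

/-- Parabolic polar coordinates: the point at distance `τ = √s y` from the foot of the
line `x · ω = s`. -/
lemma polar_para {s y : ℝ} (hs : 1 ≤ s) : ∃ r δ, s ≤ r ∧ r ^ 2 = s ^ 2 + s * y ^ 2 ∧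
    r * cos δ = s ∧ r * sin δ = √s * y ∧ |δ| ≤ |y| / √s ∧ |sin δ| ≤ |y| / √s ∧
    0 ≤ 1 - cos δ ∧ 1 - cos δ ≤ y ^ 2 / (2 * s) ∧ r ≤ s + y ^ 2 / 2 ∧
    s + y ^ 2 / 2 - r ≤ y ^ 4 / (8 * s) := by
  have hs0 : 0 < s := by linarith
  have hq := sqrt_pos.2 hs0
  have hqq := sq_sqrt hs0.le
  set r := √(s ^ 2 + s * y ^ 2) with hr
  have hr2 : r ^ 2 = s ^ 2 + s * y ^ 2 := sq_sqrt (by positivity)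
  have hrs : s ≤ r := le_sqrt_of_sq_le (by nlinarith [mul_nonneg hs0.le (sq_nonneg y)])
  have hr0 : 0 < r := by linarith
  have h1 : √(1 + (y / √s) ^ 2) = r / s := by
    rw [sqrt_eq_iff_mul_self_eq (by positivity) (by positivity), div_pow, hqq]
    field_simp
    nlinarith
  have hc : cos (arctan (y / √s)) = s / r := by rw [cos_arctan, h1, one_div_div]
  have hsn : sin (arctan (y / √s)) = √s * y / r := by
    rw [sin_arctan, h1]; field_simp; rw [hqq]
  have hd : |arctan (y / √s)| ≤ |y| / √s :=
    (abs_arctan_le_abs _).trans (by rw [abs_div, abs_of_pos hq])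
  have hup : r ≤ s + y ^ 2 / 2 := by
    refine le_of_sq_le_sq ?_ (by positivity)
    nlinarith [sq_nonneg (y ^ 2)]
  refine ⟨r, arctan (y / √s), hrs, hr2, ?_, ?_, hd, ?_, ?_, ?_, hup, ?_⟩
  · rw [hc]; field_simp
  · rw [hsn]; field_simp
  · exact abs_sin_le_abs.trans hd
  · linarith [cos_le_one (arctan (y / √s))]
  · rw [hc, le_div_iff₀ (by positivity)]
    have : s / r * r = s := by field_simp
    have : (1 - s / r) * r = r - s := by rw [sub_mul, one_mul, this]
    have h2 : 0 ≤ 1 - s / r := by rw [sub_nonneg, div_le_one hr0]; exact hrs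
    nlinarith
  · rw [le_div_iff₀ (by positivity)]
    have e : (s + y ^ 2 / 2 - r) * (s + y ^ 2 / 2 + r) = y ^ 4 / 4 := by
      linear_combination -hr2
    have h2 : 0 ≤ s + y ^ 2 / 2 - r := by linarith
    nlinarith [mul_nonneg h2 (by nlinarith [sq_nonneg y] : 0 ≤ s + y ^ 2 / 2 + r - 2 * s)]

/-- The derivative `∂ₜ - ∂_ω` in polar coordinates. -/
lemma Xm_polar (v : SmoothAlg) {t s θ δ : ℝ} (h : 1 / 2 < t + s) :
    √(t + s) * ev (Pol (Xm (cos θ) (sin θ) v)) t s (θ + δ) =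
      ev (YY (phi v)) t s (θ + δ) + (1 - cos δ) * ev (d1 (phi v)) t s (θ + δ)
        + cos δ * ev (phi v) t s (θ + δ) * (1 / (2 * (t + s)))
        + sin δ * ev (d2 (phi v)) t s (θ + δ) * (1 / (t + s)) := by
  have hr : 0 < t + s := by linarith
  have hp := PP_phi v h (θ + δ)
  simp only [PP, ev_sub, ev_cq h.le] at hp
  have h1 : ev (d1 (phi v)) t s (θ + δ) = √(t + s) * ev (d1 (Pol v)) t s (θ + δ) +
      1 / 2 * ((t + s)⁻¹ * (√(t + s) * ev (Pol v) t s (θ + δ))) := by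
    simp only [phi, Derivation.leibniz, smul_eq_mul, ev_add, ev_mul, ev_d1_cq h, ev_smul,
      ev_cq h.le, ev_cRi h.le]
    ring
  have h2 : ev (d2 (phi v)) t s (θ + δ) = √(t + s) * ev (Pol (Om v)) t s (θ + δ) := by
    simp only [phi, Derivation.leibniz, d2_cq, d2_Pol, mul_zero, add_zero, smul_eq_mul, ev_mul,
      ev_cq h.le]
  have h3 : ev (phi v) t s (θ + δ) = √(t + s) * ev (Pol v) t s (θ + δ) := by
    rw [phi, ev_mul, ev_cq h.le]
  have h4 : ev (Pol (Om v)) t s (θ + δ) = (t + s) * (cos (θ + δ) * ev (Pol (d2 v)) t s (θ + δ)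
      - sin (θ + δ) * ev (Pol (d1 v)) t s (θ + δ)) := by
    simp only [ev_Pol, Om_apply, ev_sub, ev_mul, ev_cX, ev_cY]; ring
  have h5 : ev (Pol (Xm (cos θ) (sin θ) v)) t s (θ + δ) = ev (Pol (d0 v)) t s (θ + δ)
      - (cos θ * ev (Pol (d1 v)) t s (θ + δ) + sin θ * ev (Pol (d2 v)) t s (θ + δ)) := by
    simp only [ev_Pol, Xm, Xo, ev_sub, ev_add, ev_smul]
  have h6 : cos θ = cos δ * cos (θ + δ) + sin δ * sin (θ + δ) := by
    rw [← cos_sub, ← cos_neg]; ring_nf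
  have h7 : sin θ = cos δ * sin (θ + δ) - sin δ * cos (θ + δ) := by
    rw [mul_comm (cos δ), mul_comm (sin δ), ← sin_sub]; ring_nf
  rw [ev_d1_Pol] at h1
  have h8 : ev (YY (phi v)) t s (θ + δ) = √(t + s) * ev (Pol (d0 v)) t s (θ + δ)
    - ev (d1 (phi v)) t s (θ + δ) := by simp only [YY, ev_sub]; linarith
  rw [h8, h5, h2, h3, h1, h4, h6, h7]
  have hi : (t + s) * (1 / (t + s)) = 1 := by field_simp
  have hi2 : 1 / (2 * (t + s)) = 1 / 2 * (t + s)⁻¹ := by rw [one_div, mul_inv]; ring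
  rw [hi2]
  generalize ev (Pol (d0 v)) t s (θ + δ) = A
  generalize ev (Pol (d1 v)) t s (θ + δ) = B
  generalize ev (Pol (d2 v)) t s (θ + δ) = D
  linear_combination (-√(t + s) * sin δ * (cos (θ + δ) * D - sin (θ + δ) * B)) * hi

lemma abs_comb_le {A B c1 c2 c3 b C m e E : ℝ} (hb : |b| ≤ C)
    (h1 : 0 ≤ c1) (h1' : c1 ≤ m) (h2 : |c2| ≤ C * e) (h3 : |c3| ≤ C * e) (hm : m ≤ E * e)
    (hB : B = A + c1 * b + c2 + c3) : |B - A| ≤ C * (E + 2) * e := by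
  have h4 : |c1 * b| ≤ E * e * C := by
    rw [abs_mul, abs_of_nonneg h1]
    exact mul_le_mul (h1'.trans hm) hb (abs_nonneg _) (h1.trans (h1'.trans hm))
  rw [hB, abs_le] at *
  constructor <;> linarith [h4.1, h4.2, h2.1, h2.2, h3.1, h3.2]

/-- Replacing the factor `√r` by `√s`. -/
lemma sqrt_factor_le {s r X A C E e : ℝ} (hs : 0 < s) (hsr : s ≤ r) (hA : |A| ≤ C) (hC : 0 ≤ C)
    (hE : 0 ≤ E) (he : 0 ≤ e) (he1 : e ≤ 1) (hX : |√r * X - A| ≤ C * (E + 2) * e)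
    (hrs : 1 - s / r ≤ E * e) : |√s * X - A| ≤ C * (E + 3) ^ 2 * e := by
  have hr : 0 < r := by linarith
  have hq := sqrt_pos.2 hr
  have h1 : √s * X - A = (√r * X - A) - (1 - √s / √r) * (√r * X) := by field_simp; ring
  have h2 : |√r * X| ≤ C * (E + 3) := by
    have h3 := abs_le.1 hX
    have h4 : C * (E + 2) * e ≤ C * (E + 2) * 1 := by gcongr
    have h5 := abs_le.1 hA
    rw [abs_le]; constructor <;> linarith [h3.1, h3.2, h5.1, h5.2]
  have h6 : √s / √r ≤ 1 := by rw [div_le_one hq]; exact sqrt_le_sqrt hsr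
  have h7 : s / r ≤ √s / √r := by
    have h8 : s / r = (√s / √r) * (√s / √r) := by
      rw [div_mul_div_comm, mul_self_sqrt hs.le, mul_self_sqrt hr.le]
    have h9 : 0 ≤ √s / √r := by positivity
    nlinarith
  have h8 : |(1 - √s / √r) * (√r * X)| ≤ E * e * (C * (E + 3)) := by
    rw [abs_mul, abs_of_nonneg (by linarith : 0 ≤ 1 - √s / √r)]
    exact mul_le_mul (by linarith) h2 (abs_nonneg _) (by positivity)
  rw [h1]
  refine (abs_sub _ _).trans ((add_le_add hX h8).trans ?_)
  have : 0 ≤ C * e := by positivity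
  nlinarith [mul_nonneg this hE]

set_option maxHeartbeats 1000000 in
/-- Near the foot of the line `x · ω = T + σ`, the derivative `(∂ₜ - ∂_ω)v` is described by the
profile along a parabola. -/
lemma pointwise_le {a R C lam L T T1 Y0 θ σ y : ℝ} {v : SmoothAlg}
    (h : SB a R C lam (phi v)) (hs : SuppR R (phi v)) (ha : a ≤ -1) (hC : 0 ≤ C) (hlam : 0 ≤ lam)
    (hL : 0 ≤ L) (hT1 : 1 - a ≤ T1) (hT : T1 ≤ T)
    (hLip : ∀ x x' y y', a ≤ x → a ≤ x' →
        |ev (YY (phi v)) T1 x y - ev (YY (phi v)) T1 x' y'| ≤ L * (|x - x'| + |y - y'|))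
    (hσ : a ≤ σ) (hy : |y| ≤ Y0) :
    |√(T + σ) * ev (Wp (cos θ) (sin θ) (Xm (cos θ) (sin θ) v)) T σ (√(T + σ) * y)
      - ev (YY (phi v)) T1 (σ + y ^ 2 / 2) θ| ≤
    (C * (Y0 ^ 2 + 3) ^ 2 + L * (Y0 ^ 4 + Y0)) / √(T + a) + (2 * C / √(T1 + a)
      + C * lam * (T - T1)) := by
  have hY0 : 0 ≤ Y0 := (abs_nonneg _).trans hy
  have hy2 : y ^ 2 ≤ Y0 ^ 2 := by rw [← sq_abs]; gcongr
  have hy4 : y ^ 4 ≤ Y0 ^ 4 := by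
    have : y ^ 4 = |y| ^ 4 := by rw [pow_abs, abs_of_nonneg (by positivity)]
    rw [this]; gcongr
  obtain ⟨r, δ, hsr, hr2, hc, hsn, hδ, hsδ, hc0, hc1, hup, hlow⟩ :=
    polar_para (s := T + σ) (y := y) (by linarith)
  have hTa : 1 ≤ T + a := by linarith
  have hTT : 1 - a ≤ T := hT1.trans hT
  have hs0 : 0 < T + σ := by linarith
  have hr0 : 0 < r := by linarith
  set e := 1 / √(T + a) with he
  have hq1 : 1 ≤ √(T + a) := one_le_sqrt.2 hTa
  have hq0 : 0 < √(T + a) := by linarith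
  have he0 : 0 ≤ e := by positivity
  have he1 : e ≤ 1 := by rw [he, div_le_one hq0]; exact hq1
  have hqs : √(T + a) ≤ √(T + σ) := sqrt_le_sqrt (by linarith)
  have hsq := sq_sqrt (by linarith : 0 ≤ T + a)
  have hie : ∀ x, T + a ≤ x → 1 / x ≤ e ∧ √(T + a) * (1 / x) ≤ e := fun x hx => by
    have hx0 : 0 < x := by linarith
    constructor
    · rw [he]; apply one_div_le_one_div_of_le hq0; nlinarith
    · rw [he, mul_one_div, div_le_div_iff₀ hx0 hq0]; nlinarith
  have hra : a ≤ r - T := by linarith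
  obtain ⟨b0, b2, b3, b4, b5⟩ := h.ext hs ha hC hlam T hTT (r - T) (θ + δ) hra
  have htr : T + (r - T) = r := by ring
  have hX := Xm_polar v (t := T) (s := r - T) (θ := θ) (δ := δ) (by linarith)
  have hW : ev (Wp (cos θ) (sin θ) (Xm (cos θ) (sin θ) v)) T σ (√(T + σ) * y) =
      ev (Pol (Xm (cos θ) (sin θ) v)) T (r - T) (θ + δ) := by
    rw [ev_Wp, ev_Pol, htr, ← hsn]
    congr 1
    · nth_rw 1 [← hc]; rw [cos_add]; ring
    · nth_rw 1 [← hc]; rw [sin_add]; ring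
  rw [hW]
  rw [htr] at hX
  have hb1 : |ev (d1 (phi v)) T (r - T) (θ + δ)| ≤ C := by
    have e1 : ev (YY (phi v)) T (r - T) (θ + δ) = ev (d0 (phi v)) T (r - T) (θ + δ)
      - ev (d1 (phi v)) T (r - T) (θ + δ) - ev (d1 (phi v)) T (r - T) (θ + δ) := rfl
    have e2 : C / (T + a) ≤ C := div_le_self hC hTa
    rw [e1] at b4
    rw [abs_le] at *
    constructor <;> linarith [b3.1, b3.2, b4.1, b4.2]
  have hm : y ^ 2 / (2 * (T + σ)) ≤ Y0 ^ 2 * e := by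
    have := (hie (T + σ) (by linarith)).1
    calc y ^ 2 / (2 * (T + σ)) = y ^ 2 * (1 / 2 * (1 / (T + σ))) := by field_simp
      _ ≤ Y0 ^ 2 * e := by
        have h0 : 0 ≤ 1 / (T + σ) := by positivity
        gcongr; linarith
  have hk := (hie r (by linarith)).2
  have hk0 : 0 ≤ 1 / r := by positivity
  have s1 : |√r * ev (Pol (Xm (cos θ) (sin θ) v)) T (r - T) (θ + δ)
      - ev (YY (phi v)) T (r - T) (θ + δ)| ≤ C * (Y0 ^ 2 + 2) * e := by
    refine abs_comb_le hb1 hc0 hc1 ?_ ?_ hm hX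
    · rw [abs_mul, abs_mul, abs_of_nonneg (by positivity : 0 ≤ 1 / (2 * r))]
      have e3 : 1 / (2 * r) = 1 / 2 * (1 / r) := by field_simp
      calc _ ≤ 1 * (C * √(T + a)) * (1 / 2 * (1 / r)) := by
            rw [e3]; gcongr; exact abs_cos_le_one _
        _ = 1 / 2 * C * (√(T + a) * (1 / r)) := by ring
        _ ≤ 1 / 2 * C * e := by gcongr
        _ ≤ C * e := by nlinarith [mul_nonneg hC he0]
    · rw [abs_mul, abs_mul, abs_of_nonneg hk0]
      calc _ ≤ 1 * (C * √(T + a)) * (1 / r) := by gcongr; exact abs_sin_le_one _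
        _ = C * (√(T + a) * (1 / r)) := by ring
        _ ≤ C * e := by gcongr
  have s2 := sqrt_factor_le hs0 hsr b4 hC (sq_nonneg Y0) he0 he1 s1 (by
    have : cos δ = (T + σ) / r := by rw [eq_div_iff hr0.ne']; linarith
    rw [← this]; exact hc1.trans hm)
  have s3 := drift_le (f := YY (phi v)) (x := r - T) (y := θ + δ) hC hlam hT1 hT
    fun t ht => (h.ext hs ha hC hlam t ht (r - T) (θ + δ) hra).2.2.2.2
  have s4 := hLip (r - T) (σ + y ^ 2 / 2) (θ + δ) θ hra (by nlinarith [sq_nonneg y])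
  have s5 : |r - T - (σ + y ^ 2 / 2)| ≤ Y0 ^ 4 * e := by
    have := (hie (T + σ) (by linarith)).1
    have e4 : y ^ 4 / (8 * (T + σ)) ≤ Y0 ^ 4 * e := by
      calc y ^ 4 / (8 * (T + σ)) = y ^ 4 * (1 / 8 * (1 / (T + σ))) := by field_simp
        _ ≤ Y0 ^ 4 * e := by
          have h0 : 0 ≤ 1 / (T + σ) := by positivity
          gcongr; linarith
    rw [abs_le]; constructor <;> linarith [mul_nonneg (by positivity : 0 ≤ Y0 ^ 4) he0]
  have s6 : |θ + δ - θ| ≤ Y0 * e := by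
    rw [add_sub_cancel_left, he, mul_one_div]
    exact hδ.trans (by gcongr)
  have s7 : L * (|r - T - (σ + y ^ 2 / 2)| + |θ + δ - θ|) ≤ L * (Y0 ^ 4 * e + Y0 * e) := by gcongr
  have e9 : (C * (Y0 ^ 2 + 3) ^ 2 + L * (Y0 ^ 4 + Y0)) / √(T + a) =
    C * (Y0 ^ 2 + 3) ^ 2 * e + L * (Y0 ^ 4 * e + Y0 * e) := by rw [he]; ring
  rw [e9]
  have t1 := abs_sub_le (√(T + σ) * ev (Pol (Xm (cos θ) (sin θ) v)) T (r - T) (θ + δ))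
    (ev (YY (phi v)) T (r - T) (θ + δ)) (ev (YY (phi v)) T1 (σ + y ^ 2 / 2) θ)
  have t2 := abs_sub_le (ev (YY (phi v)) T (r - T) (θ + δ))
    (ev (YY (phi v)) T1 (r - T) (θ + δ)) (ev (YY (phi v)) T1 (σ + y ^ 2 / 2) θ)
  linarith

/-! ### The profile and the line integrals of the data -/

lemma SI_eq_integral {b t s : ℝ} {f : SmoothAlg}
    (h : ∀ τ, b ≤ |τ| → ev f t s τ = 0) : SI (-b) b f t s = ∫ τ, ev f t s τ := by
  refine intervalIntegral.integral_eq_integral_of_support_subset fun τ hτ => ?_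
  have : |τ| < b := by
    by_contra hc
    exact hτ (h τ (not_lt.1 hc))
  rw [abs_lt] at this
  exact ⟨this.1, this.2.le⟩

lemma exists_div_sqrt_le (A a : ℝ) {η : ℝ} (hη : 0 < η) :
    ∃ X, ∀ T, X ≤ T → A / √(T + a) ≤ η := by
  have h : Tendsto (fun T : ℝ => A / √(T + a)) atTop (𝓝 0) :=
    tendsto_const_nhds.div_atTop (tendsto_sqrt_atTop.comp (tendsto_atTop_add_const_right _ a tendsto_id))
  obtain ⟨X, hX⟩ := eventually_atTop.1 (h.eventually_lt_const hη)
  exact ⟨X, fun T hT => (hX T hT).le⟩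

/-- The integral of a solution over the line `x · ω = T + σ`, in parabolic coordinates. -/
lemma SI_para {R0 R a T σ Y0 ρ w1 w2 : ℝ} {f : SmoothAlg} (hf : ConeSupp R0 f)
    (hw : w1 ^ 2 + w2 ^ 2 = 1) (hR0 : 0 ≤ R0) (hRR : R0 + 1 ≤ R) (ha : a ≤ -1)
    (hT : 1 - a ≤ T) (hσ : a ≤ σ) (hY : R - a + 1 ≤ Y0) (hρ : R0 + T < ρ) :
    ∫ y in -Y0..Y0, √(T + σ) * ev (Wp w1 w2 f) T σ (√(T + σ) * y) =
      SI (-ρ) ρ (Wp w1 w2 f) T σ := by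
  have hs : 1 ≤ T + σ := by linarith
  have hq : 0 < √(T + σ) := sqrt_pos.2 (by linarith)
  have hqq := sq_sqrt (by linarith : 0 ≤ T + σ)
  have hY0 : 0 < Y0 := by linarith
  rw [intervalIntegral.integral_const_mul, intervalIntegral.mul_integral_comp_mul_left
    (f := fun τ => ev (Wp w1 w2 f) T σ τ), mul_neg]
  change SI (-(√(T + σ) * Y0)) (√(T + σ) * Y0) (Wp w1 w2 f) T σ = _
  rw [SI_eq_integral, SI_eq_integral]
  · intro τ hτ
    refine hf.wp hw (by linarith) ?_
    have h1 : ρ ^ 2 ≤ τ ^ 2 := by rw [← sq_abs τ]; exact pow_le_pow_left₀ (by linarith) hτ 2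
    have h2 : (R0 + T) ^ 2 < ρ ^ 2 := pow_lt_pow_left₀ hρ (by linarith) two_ne_zero
    nlinarith [sq_nonneg (T + σ)]
  · intro τ hτ
    refine hf.wp hw (by linarith) ?_
    have h1 : (T + σ) * Y0 ^ 2 ≤ τ ^ 2 := by
      rw [← hqq, ← mul_pow, ← sq_abs τ]; exact pow_le_pow_left₀ (by positivity) hτ 2
    have h2 : (R0 + T) ^ 2 < (T + R) ^ 2 :=
      pow_lt_pow_left₀ (by linarith) (by linarith) two_ne_zero
    have h3 : (R - a + 1) ^ 2 ≤ Y0 ^ 2 := pow_le_pow_left₀ (by linarith) hY 2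
    have h4 : (T + σ) * (R - a + 1) ^ 2 ≤ (T + σ) * Y0 ^ 2 := by gcongr
    have h5 : T + R ≤ (T + σ) + (R - a) := by linarith
    have h6 : (T + R) ^ 2 ≤ ((T + σ) + (R - a)) ^ 2 := pow_le_pow_left₀ (by linarith) h5 2
    have h7 : (R - a) ^ 2 ≤ (T + σ) * (R - a) ^ 2 := by nlinarith [sq_nonneg (R - a)]
    nlinarith

/-- The integral of the profile along a parabola is close to the line integral of the
initial data. -/
lemma profile_line_aux {R0 R a C lam L K T T1 Y0 ρ θ σ : ℝ} {z v w : SmoothAlg}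
    (hv : Half lam z v w) (hc : ConeSupp R0 v)
    (h : SB a R C lam (phi v)) (hs : SuppR R (phi v)) (ha : a ≤ -1) (hC : 0 ≤ C) (hlam : 0 ≤ lam)
    (hL : 0 ≤ L) (hT1 : 1 - a ≤ T1) (hT : T1 ≤ T)
    (hLip : ∀ x x' y y', a ≤ x → a ≤ x' →
        |ev (YY (phi v)) T1 x y - ev (YY (phi v)) T1 x' y'| ≤ L * (|x - x'| + |y - y'|))
    (hK : ∀ t, 0 ≤ t → t ≤ T → C1Bd K t v ∧ C1Bd K t w) (hρ : R0 + T < ρ)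
    (hR0 : 0 ≤ R0) (hRR : R0 + 1 ≤ R) (hY : R - a + 1 ≤ Y0) (hσ : a ≤ σ) :
    |(∫ y in -Y0..Y0, ev (YY (phi v)) T1 (σ + y ^ 2 / 2) θ) -
      SI (-ρ) ρ (Wp (cos θ) (sin θ) (Xm (cos θ) (sin θ) v)) 0 σ| ≤
    ((C * (Y0 ^ 2 + 3) ^ 2 + L * (Y0 ^ 4 + Y0)) / √(T + a) + (2 * C / √(T1 + a)
      + C * lam * (T - T1))) * (2 * Y0) + lam * K ^ 3 * (2 * ρ) * T := by
  have hw : cos θ ^ 2 + sin θ ^ 2 = 1 := cos_sq_add_sin_sq θ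
  have hY0 : 0 < Y0 := by linarith
  have h1 := hv.line_le hc hR0 hlam (by linarith) hw hK hρ σ
  rw [← SI_para (hc.xm _ _) hw hR0 hRR ha (hT1.trans hT) hσ hY hρ] at h1
  have h2 := intervalIntegral.norm_integral_le_of_norm_le_const (a := -Y0) (b := Y0)
    (f := fun y => √(T + σ) * ev (Wp (cos θ) (sin θ) (Xm (cos θ) (sin θ) v)) T σ (√(T + σ) * y)
      - ev (YY (phi v)) T1 (σ + y ^ 2 / 2) θ)
    fun y hy => by
      rw [Set.uIoc_of_le (by linarith)] at hy
      exact pointwise_le (Y0 := Y0) (θ := θ) h hs ha hC hlam hL hT1 hT hLip hσ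
        (abs_le.2 ⟨hy.1.le, hy.2⟩)
  rw [intervalIntegral.integral_sub (Continuous.intervalIntegrable (by fun_prop) _ _)
    (Continuous.intervalIntegrable (by fun_prop) _ _), norm_eq_abs, abs_sub_comm,
    sub_neg_eq_add, abs_of_pos (by linarith : 0 < Y0 + Y0), ← two_mul] at h2
  exact (abs_sub_le _ _ _).trans (add_le_add h2 h1)

lemma Half.data_eq {lam R0 ρ ρ' w1 w2 σ : ℝ} {z v w : SmoothAlg} (hv : Half lam z v w)
    (hc : ConeSupp R0 v) (hw : w1 ^ 2 + w2 ^ 2 = 1) (hR0 : 0 ≤ R0) (hρ : R0 < ρ) (hρ' : R0 < ρ') :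
    SI (-ρ) ρ (Wp w1 w2 (Xm w1 w2 v)) 0 σ = SI (-ρ') ρ' (Wp w1 w2 (Xm w1 w2 z)) 0 σ := by
  have h1 : ∀ ρ, R0 < ρ → SI (-ρ) ρ (Wp w1 w2 (Xm w1 w2 v)) 0 σ =
      ∫ τ, ev (Wp w1 w2 (Xm w1 w2 v)) 0 σ τ := fun ρ hρ =>
    SI_eq_integral fun τ hτ => (hc.xm w1 w2).wp hw le_rfl (by
      have h1 : ρ ^ 2 ≤ τ ^ 2 := by rw [← sq_abs τ]; exact pow_le_pow_left₀ (by linarith) hτ 2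
      have h2 : (R0 + 0) ^ 2 < ρ ^ 2 := pow_lt_pow_left₀ (by linarith) (by linarith) two_ne_zero
      nlinarith [sq_nonneg (0 + σ)])
  rw [h1 ρ hρ, ← h1 ρ' hρ']
  unfold SI
  refine intervalIntegral.integral_congr fun τ _ => ?_
  simp only [ev_Wp, Xm, Xo, ev_sub, ev_add, ev_smul, hv.initd, slice_d1 hv.init, slice_d2 hv.init]

/-- For small coupling, the integral along parabolas of the profile at a late time `T1` is
close to the line integral of the initial data. -/
theorem profile_line (z1 z2 : SmoothAlg) {R0 a R C Y0 η : ℝ} (θ : ℝ) (hR : 0 ≤ R0)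
    (hz1 : ∀ t x y, R0 ^ 2 < x ^ 2 + y ^ 2 → ev z1 t x y = 0)
    (hz2 : ∀ t x y, R0 ^ 2 < x ^ 2 + y ^ 2 → ev z2 t x y = 0)
    (hRR : R0 + 1 ≤ R) (ha : a ≤ -1) (hC : 0 ≤ C) (hY : R - a + 1 ≤ Y0) (hη : 0 < η) :
    ∃ T0, ∀ T1, 1 - a ≤ T1 → T0 ≤ T1 → ∃ lam0, 0 < lam0 ∧ ∀ lam, 0 < lam → lam ≤ lam0 → ∀ v w,
      Half lam z1 v w → Half lam z2 w v → SB a R C lam (phi v) → ∀ σ, a ≤ σ →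
      |(∫ y in -Y0..Y0, ev (YY (phi v)) T1 (σ + y ^ 2 / 2) θ) -
        SI (-(R0 + 1)) (R0 + 1) (Wp (cos θ) (sin θ) (Xm (cos θ) (sin θ) z1)) 0 σ| ≤ η := by
  have hY0 : 0 < Y0 := by linarith
  have hη' : 0 < η / 3 / (2 * Y0) := by positivity
  obtain ⟨T0, hT0⟩ := exists_div_sqrt_le (2 * C) a hη'
  refine ⟨T0, fun T1 hT1 hT1' => ?_⟩
  obtain ⟨L, l1, hL, hl1, HL⟩ := lip_Y z1 z2 hR hz1 hz2 hRR ha hT1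
  obtain ⟨X, hX⟩ := exists_div_sqrt_le (C * (Y0 ^ 2 + 3) ^ 2 + L * (Y0 ^ 4 + Y0)) a hη'
  set T := max X T1 with hTd
  have hT : T1 ≤ T := le_max_right _ _
  have hTp : 0 < T := by linarith
  obtain ⟨K, l2, hK, hl2, HK⟩ := crude_C1 z1 z2 hR hz1 hz2 hTp.le
  set M := C * (T - T1) * (2 * Y0) + K ^ 3 * (2 * (R0 + T + 1)) * T with hM
  have hM0 : 0 ≤ M := by
    have : 0 ≤ T - T1 := by linarith
    positivity
  refine ⟨min (min l1 l2) (η / 3 / (M + 1)), by positivity, fun lam h0 h1 v w hv hw hSB σ hσ => ?_⟩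
  have hlM : lam * (M + 1) ≤ η / 3 := by
    rw [← le_div_iff₀ (by positivity)]; exact h1.trans (min_le_right _ _)
  have hcv := hv.coneSupp h0.le hR hz1
  have key := profile_line_aux (θ := θ) hv hcv hSB (hv.lin hcv hR hRR).supp ha hC h0.le hL hT1 hT
    (HL lam h0 (h1.trans ((min_le_left _ _).trans (min_le_left _ _))) v w hv hw)
    (K := K) (ρ := R0 + T + 1) (fun t ht htT => by
      obtain ⟨c1, -, c2, -⟩ := HK lam h0 (h1.trans ((min_le_left _ _).trans (min_le_right _ _)))
        v w hv hw t ht htT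
      exact ⟨c1, c2⟩) (by linarith) hR hRR hY hσ
  rw [hv.data_eq hcv (cos_sq_add_sin_sq θ) hR (by linarith) (by linarith : R0 < R0 + 1)] at key
  refine key.trans ?_
  have k1 := hX T (le_max_left _ _)
  have k2 := hT0 T1 hT1'
  rw [le_div_iff₀ (by positivity)] at k1 k2
  have e : lam * M = lam * C * (T - T1) * (2 * Y0) + lam * K ^ 3 * (2 * (R0 + T + 1)) * T := by
    rw [hM]; ring
  nlinarith

/-! ### The profile and the radiation field -/

/-- The substitution `s = σ + y² / 2`. -/
lemma integral_Ioi_para (h : ℝ → ℝ) (σ : ℝ) :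
    ∫ s in Set.Ioi σ, h s = ∫ y in Set.Ioi 0, y * h (σ + y ^ 2 / 2) := by
  have him : Set.image (fun y : ℝ => σ + y ^ 2 / 2) (Set.Ioi 0) = Set.Ioi σ := by
    ext s
    simp only [Set.mem_image, Set.mem_Ioi]
    constructor
    · rintro ⟨y, hy, rfl⟩
      have : 0 < y ^ 2 := by positivity
      linarith
    · intro hs
      refine ⟨√(2 * (s - σ)), sqrt_pos.2 (by linarith), ?_⟩
      rw [sq_sqrt (by linarith)]; ring
  have hd : ∀ y ∈ Set.Ioi (0 : ℝ),
      HasDerivWithinAt (fun y : ℝ => σ + y ^ 2 / 2) y (Set.Ioi 0) y := fun y _ => by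
    have : HasDerivAt (fun y : ℝ => σ + y ^ 2 / 2) y y :=
      ((((hasDerivAt_id y).pow 2).div_const 2).const_add σ).congr_deriv (by simp)
    exact this.hasDerivWithinAt
  have hi : Set.InjOn (fun y : ℝ => σ + y ^ 2 / 2) (Set.Ioi 0) := fun x hx y hy hxy => by
    simp only at hxy
    exact (pow_left_inj₀ (le_of_lt hx) (le_of_lt hy) two_ne_zero).1 (by linarith)
  rw [← him, integral_image_eq_integral_abs_deriv_smul measurableSet_Ioi hd hi]
  refine setIntegral_congr_fun measurableSet_Ioi fun y hy => ?_
  simp only [smul_eq_mul]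
  rw [abs_of_pos hy]

lemma integral_Ioi_div_sqrt (h : ℝ → ℝ) (σ : ℝ) :
    ∫ s in Set.Ioi σ, h s / √(s - σ) = √2 * ∫ y in Set.Ioi 0, h (σ + y ^ 2 / 2) := by
  rw [integral_Ioi_para, ← integral_const_mul]
  refine setIntegral_congr_fun measurableSet_Ioi fun y hy => ?_
  have hy' : (0 : ℝ) < y := hy
  have h2 : (0 : ℝ) < √2 := by positivity
  have hs : √2 ^ 2 = 2 := sq_sqrt (by norm_num)
  simp only [add_sub_cancel_left]
  rw [sqrt_div (sq_nonneg y), sqrt_sq hy'.le]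
  field_simp

lemma integral_Ioi_eq_interval {g : ℝ → ℝ} {b : ℝ} (hg : ∀ y, b ≤ |y| → g (y ^ 2) = 0) :
    ∫ y in Set.Ioi 0, g (y ^ 2) = 1 / 2 * ∫ y in -b..b, g (y ^ 2) := by
  have h1 := integral_comp_abs (f := fun y => g (y ^ 2))
  simp only [sq_abs] at h1
  rw [intervalIntegral.integral_eq_integral_of_support_subset, h1]
  · ring
  · intro τ hτ
    have : |τ| < b := by
      by_contra hc
      exact hτ (hg τ (not_lt.1 hc))
    rw [abs_lt] at this
    exact ⟨this.1, this.2.le⟩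

/-- The double integral of a function over a rotated parabola. -/
lemma integral_paraboloid {h : ℝ → ℝ} {σ R Y0 : ℝ} (hσ : σ ≤ R) (hY0 : 0 ≤ Y0)
    (hR : R ≤ σ + Y0 ^ 2 / 2) (hz : ∀ s, R ≤ s → h s = 0)
    (hc : Continuous fun p : ℝ × ℝ => h (σ + p.1 ^ 2 / 2 + p.2 ^ 2 / 2)) :
    ∫ x in -Y0..Y0, ∫ y in -Y0..Y0, h (σ + x ^ 2 / 2 + y ^ 2 / 2) =
      2 * π * ∫ s in σ..R, h s := by
  have hle : -Y0 ≤ Y0 := by linarith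
  have h1 : ∫ x in -Y0..Y0, ∫ y in -Y0..Y0, h (σ + x ^ 2 / 2 + y ^ 2 / 2) =
      ∫ p : ℝ × ℝ, h (σ + p.1 ^ 2 / 2 + p.2 ^ 2 / 2) := by
    rw [← setIntegral_eq_integral_of_forall_compl_eq_zero
      (s := Set.Ioc (-Y0) Y0 ×ˢ Set.Ioc (-Y0) Y0)]
    · rw [Measure.volume_eq_prod, setIntegral_prod]
      · simp only [intervalIntegral.integral_of_le hle]
      · rw [← Measure.volume_eq_prod]
        refine IntegrableOn.mono_set (t := Set.Icc (-Y0) Y0 ×ˢ Set.Icc (-Y0) Y0) ?_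
          (Set.prod_mono Set.Ioc_subset_Icc_self Set.Ioc_subset_Icc_self)
        exact hc.continuousOn.integrableOn_compact (isCompact_Icc.prod isCompact_Icc)
    · intro p hp
      refine hz _ ?_
      have key : ∀ x : ℝ, x ∉ Set.Ioc (-Y0) Y0 → Y0 ^ 2 ≤ x ^ 2 := fun x hx => by
        rw [← sq_abs x]
        refine pow_le_pow_left₀ hY0 ?_ 2
        by_contra hc
        rw [not_le, abs_lt] at hc
        exact hx ⟨hc.1, hc.2.le⟩
      rw [Set.mem_prod, not_and_or] at hp
      rcases hp with hp | hp
      · nlinarith [key _ hp, sq_nonneg p.2]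
      · nlinarith [key _ hp, sq_nonneg p.1]
  rw [h1, ← integral_comp_polarCoord_symm, polarCoord_target, Measure.volume_eq_prod]
  have h2 : ∀ p : ℝ × ℝ, p.1 • h (σ + (polarCoord.symm p).1 ^ 2 / 2 + (polarCoord.symm p).2 ^ 2 / 2)
      = (p.1 * h (σ + p.1 ^ 2 / 2)) * 1 := fun p => by
    simp only [polarCoord_symm_apply, smul_eq_mul, mul_one]
    congr 2
    linear_combination p.1 ^ 2 / 2 * sin_sq_add_cos_sq p.2
  simp only [h2]
  rw [setIntegral_prod_mul (fun r => r * h (σ + r ^ 2 / 2)) (fun _ => (1 : ℝ)),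
    ← integral_Ioi_para]
  have h3 : ∫ s in Set.Ioi σ, h s = ∫ s in σ..R, h s := by
    rw [intervalIntegral.integral_of_le hσ]
    refine setIntegral_eq_of_subset_of_forall_sdiff_eq_zero measurableSet_Ioi
      Set.Ioc_subset_Ioi_self fun s hs => hz s ?_
    by_contra hc
    exact hs.2 ⟨hs.1, (not_le.1 hc).le⟩
  rw [h3]
  simp
  rw [max_eq_left (by positivity)]
  ring

/-- The integral over `y` of the line integrals at time zero over the lines `x · ω = σ + y² / 2`. -/
def AI (Y0 ρ : ℝ) (f : SmoothAlg) (σ : ℝ) : ℝ :=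
  ∫ y in -Y0..Y0, SI (-ρ) ρ f 0 (σ + y ^ 2 / 2)

lemma AI_hasDerivAt (Y0 ρ : ℝ) (f : SmoothAlg) (σ : ℝ) :
    HasDerivAt (AI Y0 ρ f) (AI Y0 ρ (d1 f) σ) σ :=
  hasDerivAt_intervalIntegral (F := fun σ y => SI (-ρ) ρ f 0 (σ + y ^ 2 / 2))
    (F' := fun σ y => SI (-ρ) ρ (d1 f) 0 (σ + y ^ 2 / 2)) _ _ σ
    (fun s => by fun_prop) (by fun_prop) fun s y => by
      have := (SI_hasDerivAt_1 (-ρ) ρ f 0 (s + y ^ 2 / 2)).comp s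
        ((hasDerivAt_id s).add_const (y ^ 2 / 2))
      rw [mul_one] at this
      exact this

lemma AI_sub (Y0 ρ : ℝ) (f g : SmoothAlg) (σ : ℝ) :
    AI Y0 ρ (f - g) σ = AI Y0 ρ f σ - AI Y0 ρ g σ := by
  unfold AI
  rw [← intervalIntegral.integral_sub (Continuous.intervalIntegrable (by fun_prop) _ _)
    (Continuous.intervalIntegrable (by fun_prop) _ _)]
  refine intervalIntegral.integral_congr fun y _ => ?_
  simp only [SI, ev_sub]
  rw [intervalIntegral.integral_sub (Continuous.intervalIntegrable (by fun_prop) _ _)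
    (Continuous.intervalIntegrable (by fun_prop) _ _)]

lemma Rline_eq {φ : ℝ → ℝ → ℝ} (hφ : SmoothCompact2 φ) {R0 w1 w2 : ℝ} (hR0 : 0 ≤ R0)
    (hw : w1 ^ 2 + w2 ^ 2 = 1) (hs : ∀ x y, R0 ^ 2 < x ^ 2 + y ^ 2 → φ x y = 0) (s : ℝ) :
    Rline φ s w1 w2 = SI (-(R0 + 1)) (R0 + 1) (Wp w1 w2 (lift2 φ hφ)) 0 s := by
  rw [SI_eq_integral fun τ hτ => ?_]
  · simp [Rline, ev_Wp]
  · rw [ev_Wp, ev_lift2]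
    apply hs
    rw [Wp_norm hw]
    have h1 : (R0 + 1) ^ 2 ≤ τ ^ 2 := by
      rw [← sq_abs τ]; exact pow_le_pow_left₀ (by linarith) hτ 2
    nlinarith [sq_nonneg (0 + s)]

/-- The fractional integral `R₂` after the substitution `s = σ + y² / 2`, which removes the singularity
of the kernel. -/
lemma R2_eq {φ : ℝ → ℝ → ℝ} (hφ : SmoothCompact2 φ) {R0 R a Y0 w1 w2 σ : ℝ} (hR0 : 0 ≤ R0)
    (hw : w1 ^ 2 + w2 ^ 2 = 1) (hs : ∀ x y, R0 ^ 2 < x ^ 2 + y ^ 2 → φ x y = 0)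
    (hRR : R0 + 1 ≤ R) (hY : R - a + 1 ≤ Y0) (ha : a ≤ -1) (hσ : a ≤ σ) :
    R2 φ σ w1 w2 = 1 / (4 * π) * AI Y0 (R0 + 1) (Wp w1 w2 (lift2 φ hφ)) σ := by
  have hz : ∀ s, R < s → Rline φ s w1 w2 = 0 := fun s hs' => by
    rw [Rline]
    have : ∀ τ : ℝ, φ (s * w1 - τ * w2) (s * w2 + τ * w1) = 0 := fun τ => by
      apply hs
      rw [Wp_norm hw]
      nlinarith [sq_nonneg τ]
    simp [this]
  rw [R2, integral_Ioi_div_sqrt, integral_Ioi_eq_interval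
    (g := fun y => Rline φ (σ + y / 2) w1 w2) (b := Y0)]
  · simp only [Rline_eq hφ hR0 hw hs]
    have h2 : (0 : ℝ) < √2 := by positivity
    rw [AI]
    field_simp
    ring
  · intro y hy
    apply hz
    have h1 : Y0 ^ 2 ≤ y ^ 2 := by
      rw [← sq_abs y]; exact pow_le_pow_left₀ (by linarith) hy 2
    nlinarith

/-- The combination of the data appearing in the radiation field. -/
def Zr (f g : ℝ → ℝ → ℝ) (hf : SmoothCompact2 f) (hg : SmoothCompact2 g) (w1 w2 : ℝ) : SmoothAlg :=
  Wp w1 w2 (lift2 g hg) - d1 (Wp w1 w2 (lift2 f hf))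

/-- The radiation field in the same form, for the combination `g - ∂_ω f` of the data. -/
lemma F0_eq {f g : ℝ → ℝ → ℝ} (hf : SmoothCompact2 f) (hg : SmoothCompact2 g)
    {R0 R a Y0 w1 w2 σ : ℝ} (hR0 : 0 ≤ R0)
    (hw : w1 ^ 2 + w2 ^ 2 = 1) (hsf : ∀ x y, R0 ^ 2 < x ^ 2 + y ^ 2 → f x y = 0)
    (hsg : ∀ x y, R0 ^ 2 < x ^ 2 + y ^ 2 → g x y = 0)
    (hRR : R0 + 1 ≤ R) (hY : R - a + 1 ≤ Y0) (ha : a ≤ -1) (hσ : a < σ) :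
    F0 f g σ w1 w2 = 1 / (4 * π) * AI Y0 (R0 + 1) (Zr f g hf hg w1 w2) σ := by
  have h1 : (fun σ' => R2 f σ' w1 w2) =ᶠ[𝓝 σ]
      fun σ' => 1 / (4 * π) * AI Y0 (R0 + 1) (Wp w1 w2 (lift2 f hf)) σ' := by
    filter_upwards [lt_mem_nhds hσ] with s hs
    exact R2_eq hf hR0 hw hsf hRR hY ha hs.le
  rw [F0, h1.deriv_eq, ((AI_hasDerivAt _ _ _ σ).const_mul _).deriv,
    R2_eq hg hR0 hw hsg hRR hY ha hσ.le, Zr, AI_sub]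
  ring

lemma F0_hasDerivAt {f g : ℝ → ℝ → ℝ} (hf : SmoothCompact2 f) (hg : SmoothCompact2 g)
    {w1 w2 : ℝ} (hw : w1 ^ 2 + w2 ^ 2 = 1) (σ : ℝ) :
    HasDerivAt (fun s => F0 f g s w1 w2) (dF0 f g σ w1 w2) σ := by
  obtain ⟨Rf, hRf, hsf⟩ := hf.exists_radius
  obtain ⟨Rg, hRg, hsg⟩ := hg.exists_radius
  set a := min (-1) (σ - 1)
  have ha1 : a ≤ -1 := min_le_left _ _
  have ha2 : a ≤ σ - 1 := min_le_right _ _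
  have hR0 : 0 ≤ max Rf Rg := hRf.trans (le_max_left _ _)
  have h1 : (fun s => F0 f g s w1 w2) =ᶠ[𝓝 σ] fun s => 1 / (4 * π) *
      AI (max Rf Rg + 1 - a + 1) (max Rf Rg + 1) (Zr f g hf hg w1 w2) s := by
    filter_upwards [lt_mem_nhds (by linarith : a < σ)] with s hs
    refine F0_eq hf hg hR0 hw (fun x y h => hsf x y ((pow_le_pow_left₀ hRf (le_max_left _ _)
      2).trans_lt h)) (fun x y h => hsg x y ((pow_le_pow_left₀ hRg (le_max_right _ _)
      2).trans_lt h)) le_rfl le_rfl ha1 hs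
  have h2 : DifferentiableAt ℝ (fun s => F0 f g s w1 w2) σ :=
    (h1.differentiableAt_iff (𝕜 := ℝ)).2 ((AI_hasDerivAt _ _ _ σ).const_mul _).differentiableAt
  exact h2.hasDerivAt

/-- On the initial slice the line integrals of `∂ₜ v - ∂_ω v` are those of `g - ∂_ω f`. -/
lemma dat_line (f g : ℝ → ℝ → ℝ) (hf : SmoothCompact2 f) (hg : SmoothCompact2 g)
    (w1 w2 ρ σ : ℝ) : SI (-ρ) ρ (Wp w1 w2 (Xm w1 w2 (dat f g hf hg))) 0 σ =
      SI (-ρ) ρ (Zr f g hf hg w1 w2) 0 σ := by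
  unfold SI
  have e : ∀ x y, ev (dat f g hf hg) 0 x y = ev (lift2 f hf) 0 x y := fun x y => by simp [dat]
  refine intervalIntegral.integral_congr fun τ _ => ?_
  simp only [Zr, d1_Wp, ev_sub, ev_Wp, Xm, Xo, ev_add, ev_smul, slice_d1 e, slice_d2 e]
  simp [dat, d0_lift2]

/-- At a late time and for small coupling, the radial integral of the incoming derivative of the
profile is close to twice the Friedlander radiation field. -/
theorem profile_F0 {f g : ℝ → ℝ → ℝ} (hf : SmoothCompact2 f) (hg : SmoothCompact2 g)
    (z2 : SmoothAlg) {R0 a R C η : ℝ} (θ : ℝ) (hR0 : 0 ≤ R0)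
    (hsf : ∀ x y, R0 ^ 2 < x ^ 2 + y ^ 2 → f x y = 0)
    (hsg : ∀ x y, R0 ^ 2 < x ^ 2 + y ^ 2 → g x y = 0)
    (hz2 : ∀ t x y, R0 ^ 2 < x ^ 2 + y ^ 2 → ev z2 t x y = 0)
    (hRR : R0 + 1 ≤ R) (ha : a ≤ -1) (hC : 0 ≤ C) (hη : 0 < η) :
    ∃ T0, ∀ T1, 1 - a ≤ T1 → T0 ≤ T1 → ∃ lam0, 0 < lam0 ∧ ∀ lam, 0 < lam → lam ≤ lam0 → ∀ v w,
      Half lam (dat f g hf hg) v w → Half lam z2 w v → SB a R C lam (phi v) →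
      ∀ σ, a < σ → σ ≤ R →
      |(∫ s in σ..R, ev (YY (phi v)) T1 s θ) - 2 * F0 f g σ (cos θ) (sin θ)| ≤ η := by
  set Y0 := R - a + 1 with hY0
  have hY0p : 1 < Y0 := by linarith
  have hz1 : ∀ t x y, R0 ^ 2 < x ^ 2 + y ^ 2 → ev (dat f g hf hg) t x y = 0 := fun t x y h => by
    simp [dat, hsf x y h, hsg x y h]
  have hw : cos θ ^ 2 + sin θ ^ 2 = 1 := cos_sq_add_sin_sq θ
  obtain ⟨T0, H⟩ := profile_line (dat f g hf hg) z2 (R := R) (C := C) (Y0 := Y0)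
    (η := η / Y0) θ hR0 hz1 hz2 hRR ha hC le_rfl (by positivity)
  refine ⟨T0, fun T1 hT1 hT01 => ?_⟩
  obtain ⟨lam0, h0, H⟩ := H T1 hT1 hT01
  refine ⟨lam0, h0, fun lam hl0 hl v w hv hw2 hSB σ haσ hσR => ?_⟩
  have key := H lam hl0 hl v w hv hw2 hSB
  simp only [dat_line] at key
  have hs : SuppR R (YY (phi v)) :=
    SuppR.yy (hv.lin (hv.coneSupp hl0.le hR0 hz1) hR0 hRR).supp
  have h2 := integral_paraboloid (h := fun s => ev (YY (phi v)) T1 s θ) (Y0 := Y0) hσR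
    (by linarith) (by nlinarith) (fun s hs' => hs T1 s θ (by linarith) (by linarith) (by linarith))
    (by fun_prop)
  have h3 := intervalIntegral.norm_integral_le_of_norm_le_const (a := -Y0) (b := Y0)
    (f := fun x => (∫ y in -Y0..Y0, ev (YY (phi v)) T1 (σ + x ^ 2 / 2 + y ^ 2 / 2) θ)
      - SI (-(R0 + 1)) (R0 + 1) (Zr f g hf hg (cos θ) (sin θ)) 0 (σ + x ^ 2 / 2))
    fun x _ => key (σ + x ^ 2 / 2) (by nlinarith [sq_nonneg x])
  rw [intervalIntegral.integral_sub (Continuous.intervalIntegrable (by fun_prop) _ _)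
    (Continuous.intervalIntegrable (by fun_prop) _ _), h2] at h3
  change |_ - AI Y0 (R0 + 1) (Zr f g hf hg (cos θ) (sin θ)) σ| ≤ _ at h3
  have h4 := F0_eq hf hg hR0 hw hsf hsg hRR le_rfl ha haσ
  rw [← hY0] at h4
  have h5 : AI Y0 (R0 + 1) (Zr f g hf hg (cos θ) (sin θ)) σ =
      2 * π * (2 * F0 f g σ (cos θ) (sin θ)) := by
    rw [h4]; field_simp; ring
  rw [h5, ← mul_sub, abs_mul, abs_of_pos two_pi_pos, sub_neg_eq_add,
    abs_of_pos (by linarith : 0 < Y0 + Y0)] at h3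
  have h6 : η / Y0 * (Y0 + Y0) = 2 * η := by field_simp; ring
  rw [h6] at h3
  have := pi_gt_three
  have h7 := abs_nonneg ((∫ s in σ..R, ev (YY (phi v)) T1 s θ) - 2 * F0 f g σ (cos θ) (sin θ))
  nlinarith

/-! ### Lower bound for the energy -/

lemma ev_intervalIntegrable {f : SmoothAlg} {T θ c d : ℝ} :
    IntervalIntegrable (fun s => ev f T s θ) volume c d :=
  Continuous.intervalIntegrable (by fun_prop) _ _

/-- A difference quotient of `I = 2F + small` bounds the error in `Y = -2 F'`. -/
lemma dF_step {Y D Fa Fb Ia Ib J g h : ℝ} (hh : 0 < h) (hJ : J = Ia - Ib)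
    (h1 : |Ia - 2 * Fa| ≤ g * h / 16) (h2 : |Ib - 2 * Fb| ≤ g * h / 16)
    (h3 : |J - h * Y| ≤ 3 * g / 16 * h) (h4 : |Fb - Fa - h * D| ≤ g / 16 * h) :
    |Y + 2 * D| ≤ g := by
  have hg : 0 ≤ g * h := by linarith [abs_nonneg (Ia - 2 * Fa)]
  rw [abs_le] at *
  constructor
  · refine le_of_mul_le_mul_right ?_ hh
    nlinarith
  · refine le_of_mul_le_mul_right ?_ hh
    nlinarith

/-- At a late time and for small coupling, the incoming derivative of the profile is close to
`-2 ∂_σ F₀`, pointwise. -/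
theorem profile_dF0 {f g : ℝ → ℝ → ℝ} (hf : SmoothCompact2 f) (hg : SmoothCompact2 g)
    (z2 : SmoothAlg) {R0 a R C η σ : ℝ} (θ : ℝ) (hR0 : 0 ≤ R0)
    (hsf : ∀ x y, R0 ^ 2 < x ^ 2 + y ^ 2 → f x y = 0)
    (hsg : ∀ x y, R0 ^ 2 < x ^ 2 + y ^ 2 → g x y = 0)
    (hz2 : ∀ t x y, R0 ^ 2 < x ^ 2 + y ^ 2 → ev z2 t x y = 0)
    (hRR : R0 + 1 ≤ R) (ha : a ≤ -1) (hC : 0 ≤ C) (hη : 0 < η) (haσ : a < σ) (hσR : σ < R) :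
    ∃ T0, ∀ T, 1 - a ≤ T → T0 ≤ T → ∃ lam0, 0 < lam0 ∧ ∀ lam, 0 < lam → lam ≤ lam0 → ∀ v w,
      Half lam (dat f g hf hg) v w → Half lam z2 w v → SB a R C lam (phi v) →
      |ev (YY (phi v)) T σ θ + 2 * dF0 f g σ (cos θ) (sin θ)| ≤ η := by
  have hz1 : ∀ t x y, R0 ^ 2 < x ^ 2 + y ^ 2 → ev (dat f g hf hg) t x y = 0 := fun t x y h => by
    simp [dat, hsf x y h, hsg x y h]
  have hw : cos θ ^ 2 + sin θ ^ 2 = 1 := cos_sq_add_sin_sq θ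
  obtain ⟨T0, hT0⟩ := exists_div_sqrt_le (2 * C) a (by positivity : 0 < η / 16)
  refine ⟨T0, fun T hT hT' => ?_⟩
  obtain ⟨L, l1, hL, hl1, HL⟩ := lip_Y (dat f g hf hg) z2 hR0 hz1 hz2 hRR ha hT
  -- a step `h` resolving the difference quotient of `F₀`
  obtain ⟨h, hh, hhR, hhL, hhF⟩ : ∃ h, 0 < h ∧ σ + h ≤ R ∧ L * h ≤ η / 16 ∧
      |F0 f g (σ + h) (cos θ) (sin θ) - F0 f g σ (cos θ) (sin θ)
        - h * dF0 f g σ (cos θ) (sin θ)| ≤ η / 16 * h := by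
    have hd := hasDerivAt_iff_isLittleO_nhds_zero.1 (F0_hasDerivAt hf hg hw σ)
    have hd2 := (hd.def (by positivity : 0 < η / 16)).filter_mono
      (nhdsWithin_le_nhds (s := Set.Ioi (0 : ℝ)))
    have hc1 : ∀ᶠ h in 𝓝[>] (0 : ℝ), h < R - σ :=
      (gt_mem_nhds (by linarith)).filter_mono nhdsWithin_le_nhds
    have hc2 : ∀ᶠ h in 𝓝[>] (0 : ℝ), h < η / 16 / (L + 1) :=
      (gt_mem_nhds (by positivity)).filter_mono nhdsWithin_le_nhds
    obtain ⟨h, h1, h2, h3, h4⟩ :=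
      (hd2.and (hc1.and (hc2.and self_mem_nhdsWithin))).exists
    have h4' : 0 < h := h4
    refine ⟨h, h4, by linarith, ?_, ?_⟩
    · rw [lt_div_iff₀ (by positivity)] at h3
      nlinarith
    · simpa [abs_of_pos h4'] using h1
  obtain ⟨T1', H⟩ := profile_F0 hf hg z2 (η := η * h / 16) (C := C) θ hR0 hsf hsg hz2 hRR ha hC
    (by positivity)
  set T1 := max T1' T
  have hTT : T ≤ T1 := le_max_right _ _
  obtain ⟨l2, hl2, H⟩ := H T1 (hT.trans hTT) (le_max_left _ _)
  have hM : 0 ≤ C * (T1 - T) := mul_nonneg hC (by linarith)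
  refine ⟨min (min l1 l2) (η / 16 / (C * (T1 - T) + 1)), by positivity,
    fun lam h0 hl v w hv hw2 hSB => ?_⟩
  have hl3 := hl.trans (min_le_right _ _)
  rw [le_div_iff₀ (by positivity)] at hl3
  have hSupp := (hv.lin (hv.coneSupp h0.le hR0 hz1) hR0 hRR).supp
  have key := H lam h0 (hl.trans ((min_le_left _ _).trans (min_le_right _ _))) v w hv hw2 hSB
  have hLip := HL lam h0 (hl.trans ((min_le_left _ _).trans (min_le_left _ _))) v w hv hw2
  have hY : ∀ s ∈ Set.uIoc σ (σ + h), ‖ev (YY (phi v)) T1 s θ - ev (YY (phi v)) T σ θ‖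
      ≤ 3 * η / 16 := fun s hs => by
    rw [Set.uIoc_of_le (by linarith)] at hs
    have has : a ≤ s := haσ.le.trans hs.1.le
    have e1 := drift_le (f := YY (phi v)) (a := a) (x := s) (y := θ) hC h0.le hT hTT
      fun t ht => (hSB.ext hSupp ha hC h0.le t ht s θ has).2.2.2.2
    have e2 := hLip s σ θ θ has haσ.le
    have e3 := hT0 T hT'
    rw [sub_self, abs_zero, add_zero, abs_of_pos (by linarith [hs.1] : 0 < s - σ)] at e2
    have e4 : L * (s - σ) ≤ L * h := mul_le_mul_of_nonneg_left (by linarith [hs.2]) hL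
    have e5 : C * lam * (T1 - T) ≤ η / 16 := by nlinarith
    rw [norm_eq_abs]
    have := abs_sub_le (ev (YY (phi v)) T1 s θ) (ev (YY (phi v)) T s θ) (ev (YY (phi v)) T σ θ)
    linarith
  have h3 := intervalIntegral.norm_integral_le_of_norm_le_const hY
  rw [intervalIntegral.integral_sub ev_intervalIntegrable (by simp), intervalIntegral.integral_const,
    add_sub_cancel_left, abs_of_pos hh, smul_eq_mul, norm_eq_abs] at h3
  refine dF_step hh ?_ (key σ haσ hσR.le) (key (σ + h) (by linarith) hhR) h3 hhF
  rw [intervalIntegral.integral_interval_sub_interval_comm ev_intervalIntegrable ev_intervalIntegrable ev_intervalIntegrable]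
  simp

/-- A gap between `|D₁|` and `|D₂|` survives for the squares of approximations of `-2 D₁`, `-2 D₂`. -/
lemma sq_gap {Y1 Y2 D1 D2 : ℝ} (h1 : |Y1 + 2 * D1| ≤ (|D1| - |D2|) / 4)
    (h2 : |Y2 + 2 * D2| ≤ (|D1| - |D2|) / 4) (h : 0 < |D1| - |D2|) :
    (|D1| - |D2|) ^ 2 ≤ Y1 ^ 2 - Y2 ^ 2 := by
  have e1 : 2 * |D1| ≤ |Y1 + 2 * D1| + |Y1| := by
    have := abs_sub (Y1 + 2 * D1) Y1
    rw [add_sub_cancel_left, abs_mul, abs_two] at this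
    exact this
  have e2 : |Y2| ≤ |Y2 + 2 * D2| + 2 * |D2| := by
    have := abs_sub (Y2 + 2 * D2) (2 * D2)
    rw [add_sub_cancel_right, abs_mul, abs_two] at this
    exact this
  rw [← sq_abs Y1, ← sq_abs Y2]
  have e3 : |Y2| + (|D1| - |D2|) ≤ |Y1| := by linarith
  nlinarith [abs_nonneg Y2]

lemma sq_lip {A B C δ : ℝ} (hA : |A| ≤ C) (hB : |B| ≤ C) (h : |A - B| ≤ δ) :
    |A ^ 2 - B ^ 2| ≤ 2 * C * δ := by
  have : A ^ 2 - B ^ 2 = (A + B) * (A - B) := by ring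
  rw [this, abs_mul]
  have h2 : |A + B| ≤ 2 * C := (abs_add_le A B).trans (by linarith)
  exact mul_le_mul h2 h (abs_nonneg _) ((abs_nonneg _).trans h2)

/-- A lower bound for `Yφ` passes to `Pφ = (∂ₜφ + Yφ) / 2` where `∂ₜφ` is small. -/
lemma PP_lower {v : SmoothAlg} {t x y d : ℝ}
    (h1 : d ^ 2 / 2 ≤ ev (YY (phi v)) t x y ^ 2) (h2 : |ev (d0 (phi v)) t x y| ≤ d / 3) :
    d ^ 2 / 32 ≤ ev (PP (phi v)) t x y ^ 2 := by
  have e : ev (YY (phi v)) t x y = 2 * ev (PP (phi v)) t x y - ev (d0 (phi v)) t x y := by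
    simp only [YY, PP, ev_sub]; ring
  have h3 : ev (d0 (phi v)) t x y ^ 2 ≤ (d / 3) ^ 2 := by
    rw [← sq_abs]; exact pow_le_pow_left₀ (abs_nonneg _) h2 2
  rw [e] at h1
  nlinarith [sq_nonneg (2 * ev (PP (phi v)) t x y + ev (d0 (phi v)) t x y)]

/-- The sign of `Y₁² - Y₂²` at a point persists to a neighbourhood and to all later times. -/
lemma gap_persists {a R C L T d δ σ θ : ℝ} {φ ψ : SmoothAlg} (hT : 1 - a ≤ T)
    (h1 : ∀ t, 1 - a ≤ t → ∀ x y, a ≤ x → x ≤ R → |ev (YY φ) t x y| ≤ C)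
    (h2 : ∀ t, 1 - a ≤ t → ∀ x y, a ≤ x → x ≤ R → |ev (YY ψ) t x y| ≤ C)
    (h3 : ∀ t, 1 - a ≤ t → ∀ x y, a ≤ x → x ≤ R →
      |ev (d0 (YY φ ^ 2 - YY ψ ^ 2)) t x y| ≤ C * (1 / ((t + a) * √(t + a))))
    (hL1 : ∀ x x' y y', a ≤ x → a ≤ x' →
      |ev (YY φ) T x y - ev (YY φ) T x' y'| ≤ L * (|x - x'| + |y - y'|))
    (hL2 : ∀ x x' y y', a ≤ x → a ≤ x' →
      |ev (YY ψ) T x y - ev (YY ψ) T x' y'| ≤ L * (|x - x'| + |y - y'|))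
    (hC : 0 ≤ C) (hL : 0 ≤ L) (haσ : a ≤ σ) (hσR : σ ≤ R)
    (hgap : d ^ 2 ≤ ev (YY φ) T σ θ ^ 2 - ev (YY ψ) T σ θ ^ 2)
    (hTd : 2 * C / √(T + a) ≤ d ^ 2 / 4) (hδ : 8 * C * L * δ ≤ d ^ 2 / 4)
    {t x y : ℝ} (ht : T ≤ t) (hax : a ≤ x) (hxR : x ≤ R) (hx : |x - σ| ≤ δ) (hy : |y - θ| ≤ δ) :
    d ^ 2 / 2 ≤ ev (YY φ) t x y ^ 2 := by
  have hLδ : L * (|x - σ| + |y - θ|) ≤ L * (2 * δ) := mul_le_mul_of_nonneg_left (by linarith) hL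
  have e1 := sq_lip (h1 T hT x y hax hxR) (h1 T hT σ θ haσ hσR)
    ((hL1 x σ y θ hax haσ).trans hLδ)
  have e2 := sq_lip (h2 T hT x y hax hxR) (h2 T hT σ θ haσ hσR)
    ((hL2 x σ y θ hax haσ).trans hLδ)
  have e3 := abs_sub_le_of_deriv_le ht
    (g := fun t => ev (YY φ ^ 2 - YY ψ ^ 2) t x y)
    (fun s _ _ => ev_hasDerivAt_0 (YY φ ^ 2 - YY ψ ^ 2) s x y)
    (fun s hs _ => hasDerivAt_neg_two_div_sqrt (a := a) (C := C) (by linarith))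
    (fun s hs _ => h3 s (hT.trans hs) x y hax hxR)
  simp only [ev_sub, ev_pow] at e3
  have e4 : 0 ≤ 2 * C / √(t + a) := by positivity
  simp only [neg_div] at e3
  have f1 := (abs_le.1 e1).1
  have f2 := (abs_le.1 e2).2
  have f3 := (abs_le.1 e3).1
  nlinarith [sq_nonneg (ev (YY ψ) t x y)]

/-- If `|∂_σ F₁| > |∂_σ F₂|` at some point, the energy of the first component has a positive
limit. -/
theorem half_energy {f1 f2 g1 g2 : ℝ → ℝ → ℝ} (hf1 : SmoothCompact2 f1) (hf2 : SmoothCompact2 f2)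
    (hg1 : SmoothCompact2 g1) (hg2 : SmoothCompact2 g2) {R0 σ w1 w2 : ℝ} (hR0 : 0 ≤ R0)
    (hsf1 : ∀ x y, R0 ^ 2 < x ^ 2 + y ^ 2 → f1 x y = 0)
    (hsf2 : ∀ x y, R0 ^ 2 < x ^ 2 + y ^ 2 → f2 x y = 0)
    (hsg1 : ∀ x y, R0 ^ 2 < x ^ 2 + y ^ 2 → g1 x y = 0)
    (hsg2 : ∀ x y, R0 ^ 2 < x ^ 2 + y ^ 2 → g2 x y = 0)
    (hw : w1 ^ 2 + w2 ^ 2 = 1) (hgt : |dF0 f2 g2 σ w1 w2| < |dF0 f1 g1 σ w1 w2|) :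
    ∃ lam0, 0 < lam0 ∧ ∀ lam, 0 < lam → lam ≤ lam0 → ∀ v w,
      Half lam (dat f1 g1 hf1 hg1) v w → Half lam (dat f2 g2 hf2 hg2) w v →
      ∃ L, 0 < L ∧ Tendsto (fun t => ∫ p : ℝ × ℝ, ev (en v) t p.1 p.2) atTop (𝓝 L) := by
  obtain ⟨θ, hθ1, hθ2, rfl, rfl⟩ : ∃ θ, -π ≤ θ ∧ θ ≤ π ∧ w1 = cos θ ∧ w2 = sin θ := by
    have hn : ‖(⟨w1, w2⟩ : ℂ)‖ = 1 := by
      rw [Complex.norm_def, Complex.normSq_mk, ← sq, ← sq, hw, sqrt_one]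
    refine ⟨Complex.arg ⟨w1, w2⟩, (Complex.neg_pi_lt_arg _).le, Complex.arg_le_pi _, ?_, ?_⟩
    · have := Complex.norm_mul_cos_arg ⟨w1, w2⟩
      rw [hn, one_mul] at this; exact this.symm
    · have := Complex.norm_mul_sin_arg ⟨w1, w2⟩
      rw [hn, one_mul] at this; exact this.symm
  have hz1 : ∀ t x y, R0 ^ 2 < x ^ 2 + y ^ 2 → ev (dat f1 g1 hf1 hg1) t x y = 0 :=
    fun t x y h => by simp [dat, hsf1 x y h, hsg1 x y h]
  have hz2 : ∀ t x y, R0 ^ 2 < x ^ 2 + y ^ 2 → ev (dat f2 g2 hf2 hg2) t x y = 0 :=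
    fun t x y h => by simp [dat, hsf2 x y h, hsg2 x y h]
  set d := |dF0 f1 g1 σ (cos θ) (sin θ)| - |dF0 f2 g2 σ (cos θ) (sin θ)| with hd
  have hd0 : 0 < d := by linarith
  obtain ⟨a, ha, haσ⟩ : ∃ a, a ≤ -1 ∧ a ≤ σ - 1 := ⟨_, min_le_left _ _, min_le_right _ _⟩
  obtain ⟨R, hRR, hσR⟩ : ∃ R, R0 + 1 ≤ R ∧ σ + 1 ≤ R := ⟨_, le_max_left _ _, le_max_right _ _⟩
  obtain ⟨N, l1, hN, hl1, HS⟩ := exists_strip _ _ hR0 hz1 hz2 ha hRR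
  obtain ⟨C, l2, hC, hl2, HSB⟩ := Strip.SB a R N (by linarith) hN
  obtain ⟨T1, HT1⟩ := profile_dF0 hf1 hg1 (dat f2 g2 hf2 hg2) θ hR0 hsf1 hsg1 hz2 hRR ha hC.le
    (by positivity : 0 < d / 4) (by linarith : a < σ) (by linarith)
  obtain ⟨T2, HT2⟩ := profile_dF0 hf2 hg2 (dat f1 g1 hf1 hg1) θ hR0 hsf2 hsg2 hz1 hRR ha hC.le
    (by positivity : 0 < d / 4) (by linarith : a < σ) (by linarith)
  obtain ⟨T3, HT3⟩ := exists_div_sqrt_le (2 * C) a (by positivity : 0 < d ^ 2 / 4)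
  obtain ⟨T, hTa, hT1, hT2, hT3⟩ : ∃ T, 1 - a ≤ T ∧ T1 ≤ T ∧ T2 ≤ T ∧ T3 ≤ T :=
    ⟨max (max (1 - a) T1) (max T2 T3), by simp, by simp, by simp, by simp⟩
  obtain ⟨l3, hl3, HY1⟩ := HT1 T hTa hT1
  obtain ⟨l4, hl4, HY2⟩ := HT2 T hTa hT2
  obtain ⟨L1, l5, hL1, hl5, HL1⟩ := lip_Y _ _ hR0 hz1 hz2 hRR ha hTa
  obtain ⟨L2, l6, hL2, hl6, HL2⟩ := lip_Y _ _ hR0 hz2 hz1 hRR ha hTa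
  set δ := min 1 (d ^ 2 / 4 / (8 * C * (L1 + L2) + 1)) with hδd
  have hδ0 : 0 < δ := by positivity
  have hδ1 : δ ≤ 1 := min_le_left _ _
  have hδ2 : δ ≤ d ^ 2 / 4 / (8 * C * (L1 + L2) + 1) := min_le_right _ _
  rw [le_div_iff₀ (by positivity)] at hδ2
  refine ⟨min (min l1 (min l2 l3)) (min l4 (min l5 l6)), by positivity,
    fun lam h0 hl v w hv hw' => ?_⟩
  simp only [le_min_iff] at hl
  obtain ⟨⟨k1, k2, k3⟩, k4, k5, k6⟩ := hl
  obtain ⟨S1, S2, S3⟩ := HSB lam _ _ (HS lam h0 k1 v w hv hw') k2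
  have G := sq_gap (HY1 lam h0 k3 v w hv hw' S1) (HY2 lam h0 k4 w v hw' hv S2) hd0
  rw [← hd] at G
  have hcv := hv.coneSupp h0.le hR0 hz1
  have hpi := pi_gt_three
  set θ1 := max (θ - δ) (-π) with hθ1d
  set θ2 := min (θ + δ) π with hθ2d
  have hθ12 : θ1 < θ2 := by
    rw [hθ1d, hθ2d, max_lt_iff, lt_min_iff, lt_min_iff]
    refine ⟨⟨?_, ?_⟩, ?_, ?_⟩ <;> linarith
  have p1 : 0 < θ2 - θ1 := by linarith
  have p2 : 0 < (σ + δ) - (σ - δ) := by linarith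
  refine hv.limit hcv hR0 h0.le (c := d ^ 2 / 32 * (((σ + δ) - (σ - δ)) * (θ2 - θ1)))
    (t0 := max T (3 * C / d - a)) (by positivity) fun t ht => ?_
  have ht1 : T ≤ t := (le_max_left _ _).trans ht
  have ht2 : 3 * C / d - a ≤ t := (le_max_right _ _).trans ht
  refine hcv.energy_ge hR0 (by linarith) (by linarith) (by linarith) hθ12.le (le_max_right _ _)
    (min_le_right _ _) fun s y hs1 hs2 hy1 hy2 => ?_
  have hy1' := (le_max_left _ _).trans_lt hy1
  have hy2' := hy2.trans_le (min_le_left _ _)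
  refine PP_lower (gap_persists (L := L1 + L2) (δ := δ) hTa S1.Y S2.Y S3 ?_ ?_ hC.le
    (by positivity) (by linarith) (by linarith) G (HT3 T hT3) ?_ ht1 (by linarith) (by linarith)
    (abs_le.2 ⟨by linarith, by linarith⟩) (abs_le.2 ⟨by linarith, by linarith⟩)) ?_
  · intro x x' y y' hx hx'
    exact (HL1 lam h0 k5 v w hv hw' x x' y y' hx hx').trans
      (mul_le_mul_of_nonneg_right (by linarith) (by positivity))
  · intro x x' y y' hx hx'
    exact (HL2 lam h0 k6 w v hw' hv x x' y y' hx hx').trans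
      (mul_le_mul_of_nonneg_right (by linarith) (by positivity))
  · nlinarith
  · refine (S1.Lam t (by linarith) s y (by linarith) (by linarith)).trans ?_
    have h3 : 3 * C / d ≤ t + a := by linarith
    rw [div_le_iff₀ hd0] at h3
    rw [div_le_iff₀ (by linarith)]
    linarith

lemma exists_common_radius (f1 f2 g1 g2 : ℝ → ℝ → ℝ) (hf1 : SmoothCompact2 f1)
    (hf2 : SmoothCompact2 f2) (hg1 : SmoothCompact2 g1) (hg2 : SmoothCompact2 g2) :
    ∃ R0, 0 ≤ R0 ∧ (∀ x y, R0 ^ 2 < x ^ 2 + y ^ 2 → f1 x y = 0) ∧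
    (∀ x y, R0 ^ 2 < x ^ 2 + y ^ 2 → f2 x y = 0) ∧
    (∀ x y, R0 ^ 2 < x ^ 2 + y ^ 2 → g1 x y = 0) ∧
    (∀ x y, R0 ^ 2 < x ^ 2 + y ^ 2 → g2 x y = 0) := by
  obtain ⟨R1, h1, k1⟩ := hf1.exists_radius
  obtain ⟨R2, h2, k2⟩ := hf2.exists_radius
  obtain ⟨R3, h3, k3⟩ := hg1.exists_radius
  obtain ⟨R4, h4, k4⟩ := hg2.exists_radius
  exact ⟨R1 + R2 + R3 + R4, by positivity,
    fun x y h => k1 x y ((pow_le_pow_left₀ h1 (by linarith) 2).trans_lt h),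
    fun x y h => k2 x y ((pow_le_pow_left₀ h2 (by linarith) 2).trans_lt h),
    fun x y h => k3 x y ((pow_le_pow_left₀ h3 (by linarith) 2).trans_lt h),
    fun x y h => k4 x y ((pow_le_pow_left₀ h4 (by linarith) 2).trans_lt h)⟩

lemma tendsto_energyNorm {ε L : ℝ} {v : SmoothAlg} (hε : 0 < ε) (hL : 0 < L)
    (h : Tendsto (fun t => ∫ p : ℝ × ℝ, ev (en v) t p.1 p.2) atTop (𝓝 L)) :
    ∃ L', 0 < L' ∧ Tendsto (fun t => energyNorm (ev (ε • v)) t) atTop (𝓝 L') := by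
  refine ⟨√(ε ^ 2 / 2 * L), by positivity, ?_⟩
  simp only [energyNorm, energySq_ev]
  exact (h.const_mul _).sqrt

/-- Corollary: under the radiation-field criterion, both energies
have strictly positive limits as `t → +∞`. -/
theorem energy_nondecay (f1 f2 g1 g2 : ℝ → ℝ → ℝ)
    (hf1 : SmoothCompact2 f1) (hf2 : SmoothCompact2 f2)
    (hg1 : SmoothCompact2 g1) (hg2 : SmoothCompact2 g2)
    (σs ωs1 ωs2 : ℝ) (hωs : ωs1 ^ 2 + ωs2 ^ 2 = 1)
    (σt ωt1 ωt2 : ℝ) (hωt : ωt1 ^ 2 + ωt2 ^ 2 = 1)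
    (hgt : |dF0 f1 g1 σs ωs1 ωs2| > |dF0 f2 g2 σs ωs1 ωs2|)
    (hlt : |dF0 f1 g1 σt ωt1 ωt2| < |dF0 f2 g2 σt ωt1 ωt2|) :
    ∃ ε₀ : ℝ, 0 < ε₀ ∧ ∀ ε : ℝ, 0 < ε → ε < ε₀ →
      ∀ u1 u2 : ℝ → ℝ → ℝ → ℝ, IsSolution ε f1 f2 g1 g2 u1 u2 →
        (∃ L1 : ℝ, 0 < L1 ∧ Tendsto (fun t => energyNorm u1 t) atTop (nhds L1)) ∧
        (∃ L2 : ℝ, 0 < L2 ∧ Tendsto (fun t => energyNorm u2 t) atTop (nhds L2)) := by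
  obtain ⟨R0, hR0, hsf1, hsf2, hsg1, hsg2⟩ := exists_common_radius f1 f2 g1 g2 hf1 hf2 hg1 hg2
  obtain ⟨l1, hl1, H1⟩ := half_energy hf1 hf2 hg1 hg2 hR0 hsf1 hsf2 hsg1 hsg2 hωs hgt
  obtain ⟨l2, hl2, H2⟩ := half_energy hf2 hf1 hg2 hg1 hR0 hsf2 hsf1 hsg2 hsg1 hωt hlt
  refine ⟨min 1 (min l1 l2), by positivity, fun ε hε hlt u1 u2 hu => ?_⟩
  obtain ⟨v, w, rfl, rfl, hv, hw⟩ := hu.half hε hf1 hf2 hg1 hg2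
  simp only [lt_min_iff] at hlt
  have hε2 : ε ^ 2 ≤ ε := by nlinarith
  obtain ⟨L1, hL1, h1⟩ := H1 (ε ^ 2) (by positivity) (hε2.trans hlt.2.1.le) v w hv hw
  obtain ⟨L2, hL2, h2⟩ := H2 (ε ^ 2) (by positivity) (hε2.trans hlt.2.2.le) w v hw hv
  exact ⟨tendsto_energyNorm hε hL1 h1, tendsto_energyNorm hε hL2 h2⟩

end
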